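/- arXiv:2303.02628 — 2 statements merged into one kernel-verified Lean document; each statement's English description precedes it below -/
import Mathlib

section
/- Fix p ≥ 1. For each n ∈ ℕ let B_n be an n×p random matrix whose entries are centered and jointly Gaussian; equivalently B_n(i,j) = ⟨v^{(n)}_{i,j}, N^{(n)}⟩ for deterministic vectors v^{(n)}_{i,j} ∈ ℝ^{K_n} and a standard Gaussian vector N^{(n)} ~ γ_{K_n}. Set A_n := B_nᵀ B_n. Assume that A_n converges in probability (entrywise) to a deterministic invertible p×p matrix Σ. Then for every q ≥ 1 there exist N ∈ ℕ and C > 0 such that E[ (det A_n)^{−q} ] ≤ C for all n ≥ N. In particular, A_n^{−1} → Σ^{−1} in L^q for every q ≥ 1. -/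
/-!
For a standard Gaussian vector `x` and a positive semidefinite `S` with eigenvalues `λᵢ`, the
Laplace transform `φ(t) = E exp(-t ⟪x, S x⟫)` equals `∏ᵢ (1 + 2 t λᵢ)^{-1/2}`. Hence `φ⁻²` is a
polynomial with nonnegative coefficients, of degree as large as the dimension of `x`, but tightness
of `⟪x, S x⟫` bounds `φ(1)⁻²` and so controls all these coefficients at once. If moreover
`⟪x, S x⟫` puts little mass near `0`, then for one suitable `T` the value `φ(T)⁻²` is so large that
the terms of degree at least `2 k` contribute at least `1` to it. These grow at least like
`(t / T)^{2 k}`, so `φ(t) ≤ ((1 + T) / (1 + t))^k` for all `t ≥ 0`, with `T` not depending on the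
dimension of `x`.

Applied to `⟪w, A w⟫ = ‖B w‖²`, this bounds `E exp(-⟪w, A w⟫)` by a negative power of `1 + ‖w‖²`.
Averaging over `w = r g` with `g` a standard Gaussian vector and letting `r → ∞` turns the bound
into one for `E det(A)^{-1/2}`. Replacing `B` by `2 q` identical diagonal blocks raises the
determinant to the power `2 q` and keeps the convergence in probability, so it yields
`E det(A)^{-q}`. Together with bounds on the moments of `tr A`, this bounds every moment of the
entries of `A⁻¹ = adj(A) / det(A)`, and convergence in probability upgrades to convergence in `L^q`.
-/

open MeasureTheory ProbabilityTheory MvPolynomial Filter Topology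
open scoped ENNReal NNReal

noncomputable def gaussPi (ι : Type) [Fintype ι] : Measure (ι → ℝ) :=
  Measure.pi fun _ => gaussianReal 0 1

noncomputable def hermiteProd {K : ℕ} (k : Fin K → ℕ) : MvPolynomial (Fin K) ℝ :=
  ∏ i, Polynomial.aeval (MvPolynomial.X i) (Polynomial.hermite (k i))

noncomputable def chaos (K m : ℕ) : Submodule ℝ (MvPolynomial (Fin K) ℝ) :=
  Submodule.span ℝ {P | ∃ k : Fin K → ℕ, ∑ i, k i = m ∧ P = hermiteProd k}

noncomputable def sqField {ι : Type} [Fintype ι] (P : MvPolynomial ι ℝ) (x : ι → ℝ) : ℝ :=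
  ∑ i, (eval x (pderiv i P)) ^ 2

def TendstoInLaw {E : Type} [MeasurableSpace E] [TopologicalSpace E]
    (μs : ℕ → Measure E) (μ : Measure E) : Prop :=
  ∀ f : BoundedContinuousFunction E ℝ,
    Tendsto (fun n => ∫ x, f x ∂μs n) atTop (𝓝 (∫ x, f x ∂μ))

open Matrix

instance isProbabilityMeasure_gaussPi (ι : Type) [Fintype ι] :
    IsProbabilityMeasure (gaussPi ι) := by
  unfold gaussPi
  infer_instance

theorem mgf_sq_gaussianReal {t : ℝ} (ht : 2 * t < 1) :
    mgf (fun y => y ^ 2) (gaussianReal 0 1) t = (√(1 - 2 * t))⁻¹ := by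
  have hpdf : ∀ y : ℝ, gaussianPDFReal 0 1 y • Real.exp (t * y ^ 2) =
      (√(2 * Real.pi))⁻¹ * Real.exp (-(1 / 2 - t) * y ^ 2) := fun y => by
    simp only [gaussianPDFReal, smul_eq_mul, NNReal.coe_one, mul_one, sub_zero, mul_assoc,
      ← Real.exp_add]
    ring_nf
  simp only [mgf, integral_gaussianReal_eq_integral_smul one_ne_zero, hpdf, integral_const_mul,
    integral_gaussian]
  rw [← Real.sqrt_inv, ← Real.sqrt_inv, ← Real.sqrt_mul (by positivity)]
  congr 1
  have : 1 - 2 * t ≠ 0 := by linarith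
  have : 1 / 2 - t ≠ 0 := fun h => this (by linarith)
  field_simp

theorem mgf_sum_mul_sq_gaussPi {κ : Type} [Fintype κ] {l : κ → ℝ} {t : ℝ}
    (ht : ∀ i, 2 * (t * l i) < 1) :
    mgf (fun x => ∑ i, l i * x i ^ 2) (gaussPi κ) t = ∏ i, (√(1 - 2 * (t * l i)))⁻¹ := by
  have hindep : iIndepFun (fun i (x : κ → ℝ) => l i * x i ^ 2) (gaussPi κ) :=
    iIndepFun_pi (X := fun i y => l i * y ^ 2) fun i => by fun_prop
  have hmp (i : κ) : MeasurePreserving (fun x : κ → ℝ => x i) (gaussPi κ) (gaussianReal 0 1) :=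
    measurePreserving_eval _ i
  have hsum : (fun x : κ → ℝ => ∑ i, l i * x i ^ 2) =
      ∑ i, fun x : κ → ℝ => l i * x i ^ 2 := by ext x; simp
  rw [hsum, hindep.mgf_sum fun i => by fun_prop]
  refine Finset.prod_congr rfl fun i _ => ?_
  rw [mgf_const_mul, mul_comm (l i), ← mgf_sq_gaussianReal (ht i), ← (hmp i).map_eq]
  exact (mgf_map (X := fun y => y ^ 2) (hmp i).aemeasurable (by fun_prop)).symm

theorem measurePreserving_sum_smul_orthonormalBasis {κ : Type} [Fintype κ]
    (b : OrthonormalBasis κ ℝ (EuclideanSpace ℝ κ)) :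
    MeasurePreserving (fun x : κ → ℝ => ∑ i, x i • ⇑(b i)) (gaussPi κ) (gaussPi κ) := by
  have hofLp : Measurable (WithLp.ofLp : EuclideanSpace ℝ κ → κ → ℝ) := by fun_prop
  have hstd : (stdGaussian (EuclideanSpace ℝ κ)).map WithLp.ofLp = gaussPi κ := by
    rw [← map_pi_eq_stdGaussian, Measure.map_map hofLp (by fun_prop)]
    exact Measure.map_id
  refine ⟨by fun_prop, ?_⟩
  nth_rw 2 [← hstd]
  rw [stdGaussian_eq_map_pi_orthonormalBasis b, Measure.map_map hofLp (by fun_prop)]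
  congr 1
  ext x i
  simp

theorem div_pow_mul_pow_le {T t : ℝ} (hT : 1 ≤ T) (hTt : T ≤ t) (M k : ℕ) :
    (t / T) ^ M * T ^ k ≤ t ^ k + t ^ M := by
  have hT0 : 0 < T := by linarith
  have ht0 : 0 < t := by linarith
  rw [div_pow, div_mul_eq_mul_div, div_le_iff₀ (by positivity)]
  rcases le_total k M with hkM | hMk
  · nlinarith [pow_le_pow_right₀ hT hkM, pow_pos ht0 M, mul_pos (pow_pos ht0 k) (pow_pos hT0 M)]
  · obtain ⟨d, rfl⟩ := Nat.exists_eq_add_of_le hMk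
    have hd : T ^ d ≤ t ^ d := by gcongr
    have := mul_le_mul_of_nonneg_left hd (mul_pos (pow_pos ht0 M) (pow_pos hT0 M)).le
    rw [pow_add, pow_add]
    nlinarith [mul_pos (pow_pos ht0 M) (pow_pos hT0 M)]

theorem div_pow_mul_prod_one_add_le {ι : Type*} (s : Finset ι) {a : ι → ℝ} (ha : ∀ i ∈ s, 0 ≤ a i)
    {T t : ℝ} (hT : 1 ≤ T) (hTt : T ≤ t) (M : ℕ) :
    (t / T) ^ M * ∏ i ∈ s, (1 + T * a i) ≤
      ∏ i ∈ s, (1 + t * a i) + t ^ M * ∏ i ∈ s, (1 + a i) := by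
  simp only [Finset.prod_one_add, Finset.prod_mul_distrib, Finset.prod_const, Finset.mul_sum,
    ← Finset.sum_add_distrib, ← mul_assoc, ← add_mul]
  refine Finset.sum_le_sum fun u hu => ?_
  have hu0 : 0 ≤ ∏ i ∈ u, a i :=
    Finset.prod_nonneg fun i hi => ha i (Finset.mem_powerset.mp hu hi)
  gcongr
  exact div_pow_mul_pow_le hT hTt M _

theorem one_add_pow_le_mul_exp {s r : ℝ} (hs : 0 < s) (hr : 0 ≤ r) (N : ℕ) :
    (1 + r) ^ N ≤ N.factorial / s ^ N * Real.exp s * Real.exp (s * r) := by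
  have h := Real.pow_div_factorial_le_exp (s * (1 + r)) (by positivity) N
  rw [div_le_iff₀ (by positivity), mul_pow, mul_add, mul_one, Real.exp_add] at h
  rw [div_mul_eq_mul_div, div_mul_eq_mul_div, le_div_iff₀ (by positivity)]
  linarith

theorem tendsto_sq_two_mul_exp_neg_mul_mul_one_add_pow {c : ℝ} (hc : 0 < c) (b : ℝ) (j : ℕ) :
    Tendsto (fun T : ℝ => (2 * Real.exp (-(T * c))) ^ 2 * (1 + T ^ j * b)) atTop (𝓝 0) := by
  have hpow (i : ℕ) : Tendsto (fun T : ℝ => T ^ i * Real.exp (-(2 * c * T))) atTop (𝓝 0) := by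
    simpa [div_eq_mul_inv, Real.exp_neg] using
      (isLittleO_pow_exp_pos_mul_atTop i (mul_pos two_pos hc)).tendsto_div_nhds_zero
  have hsum := ((hpow 0).add ((hpow j).mul_const b)).const_mul 4
  simp only [zero_mul, add_zero, mul_zero] at hsum
  refine hsum.congr fun T => ?_
  rw [mul_pow, ← Real.exp_nat_mul, Nat.cast_two, show 2 * -(T * c) = -(2 * c * T) by ring]
  ring

section Mgf

variable {Ω : Type*} [MeasurableSpace Ω] {P : Measure Ω} {Q : Ω → ℝ}

theorem integrable_exp_neg_mul [IsFiniteMeasure P] (hQ : Measurable Q) (hQ0 : ∀ ω, 0 ≤ Q ω) {t : ℝ}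
    (ht : 0 ≤ t) : Integrable (fun ω => Real.exp (-t * Q ω)) P := by
  refine Integrable.of_bound (by fun_prop) 1 (ae_of_all _ fun ω => ?_)
  rw [Real.norm_eq_abs, Real.abs_exp, Real.exp_le_one_iff]
  nlinarith [mul_nonneg ht (hQ0 ω)]

theorem exp_neg_div_two_le_mgf [IsProbabilityMeasure P] (hQ : Measurable Q) (hQ0 : ∀ ω, 0 ≤ Q ω)
    {C : ℝ} (hC : P {ω | C ≤ Q ω} ≤ 1 / 2) {t : ℝ} (ht : 0 ≤ t) :
    Real.exp (-(t * C)) / 2 ≤ mgf Q P (-t) := by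
  have hle : P.real {ω | C ≤ Q ω} ≤ 1 / 2 := by
    simpa [measureReal_def] using ENNReal.toReal_mono (by simp) hC
  have hcompl : 1 / 2 ≤ P.real {ω | Q ω ≤ C} := calc
    (1 : ℝ) / 2 ≤ P.real {ω | C ≤ Q ω}ᶜ := by
      rw [probReal_compl_eq_one_sub (measurableSet_le measurable_const hQ)]
      linarith
    _ ≤ P.real {ω | Q ω ≤ C} :=
      measureReal_mono fun ω (hω : ¬C ≤ Q ω) => (not_le.mp hω).le
  have hchernoff := hcompl.trans <| measure_le_le_exp_mul_mgf C (by linarith : -t ≤ 0)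
    (integrable_exp_neg_mul hQ hQ0 ht)
  rw [neg_neg] at hchernoff
  rw [Real.exp_neg, div_le_iff₀ two_pos, inv_le_iff_one_le_mul₀' (Real.exp_pos _)]
  linarith

theorem mgf_neg_le_exp_neg_add [IsProbabilityMeasure P] (hQ : Measurable Q) (hQ0 : ∀ ω, 0 ≤ Q ω)
    (c : ℝ) {t : ℝ} (ht : 0 ≤ t) :
    mgf Q P (-t) ≤ Real.exp (-(t * c)) + P.real {ω | Q ω ≤ c} := by
  have hs : MeasurableSet {ω | Q ω ≤ c} := measurableSet_le hQ measurable_const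
  have hind : Integrable ({ω | Q ω ≤ c}.indicator (1 : Ω → ℝ)) P :=
    (integrable_const 1).indicator hs
  have hpoint (ω : Ω) : Real.exp (-t * Q ω) ≤
      Real.exp (-(t * c)) + {ω | Q ω ≤ c}.indicator 1 ω := by
    rcases le_or_gt (Q ω) c with hω | hω
    · rw [Set.indicator_of_mem (s := {ω | Q ω ≤ c}) hω, Pi.one_apply]
      have : Real.exp (-t * Q ω) ≤ 1 :=
        Real.exp_le_one_iff.mpr (by nlinarith [mul_nonneg ht (hQ0 ω)])
      linarith [Real.exp_pos (-(t * c))]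
    · rw [Set.indicator_of_notMem (s := {ω | Q ω ≤ c}) (not_le.mpr hω), add_zero]
      exact Real.exp_le_exp.mpr (by nlinarith)
  calc mgf Q P (-t)
      ≤ ∫ ω, (Real.exp (-(t * c)) + {ω | Q ω ≤ c}.indicator 1 ω) ∂P :=
        integral_mono (integrable_exp_neg_mul hQ hQ0 ht)
          ((integrable_const _).add hind) hpoint
    _ = Real.exp (-(t * c)) + P.real {ω | Q ω ≤ c} := by
        rw [integral_add (integrable_const _) hind, integral_indicator_one hs]
        simp

end Mgf

section Eigenvalues

variable {κ : Type} [Fintype κ] [DecidableEq κ] {S : Matrix κ κ ℝ}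

theorem dotProduct_mulVec_sum_eigenvectorBasis (hS : S.IsHermitian) (x : κ → ℝ) :
    (∑ i, x i • ⇑(hS.eigenvectorBasis i)) ⬝ᵥ S *ᵥ (∑ i, x i • ⇑(hS.eigenvectorBasis i)) =
      ∑ i, hS.eigenvalues i * x i ^ 2 := by
  have horth (i j : κ) : ⇑(hS.eigenvectorBasis i) ⬝ᵥ ⇑(hS.eigenvectorBasis j) =
      if j = i then 1 else 0 := by
    simpa [EuclideanSpace.inner_eq_star_dotProduct] using
      orthonormal_iff_ite.mp hS.eigenvectorBasis.orthonormal j i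
  simp only [mulVec_sum, mulVec_smul, hS.mulVec_eigenvectorBasis, dotProduct_sum, sum_dotProduct,
    smul_dotProduct, dotProduct_smul, horth, smul_eq_mul, mul_ite, mul_one, mul_zero,
    Finset.sum_ite_eq, Finset.mem_univ, if_true]
  exact Finset.sum_congr rfl fun i _ => by ring

theorem mgf_dotProduct_mulVec (hS : S.IsHermitian) {t : ℝ}
    (ht : ∀ i, 2 * (t * hS.eigenvalues i) < 1) :
    mgf (fun x => x ⬝ᵥ S *ᵥ x) (gaussPi κ) t = ∏ i, (√(1 - 2 * (t * hS.eigenvalues i)))⁻¹ := by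
  have hmp := measurePreserving_sum_smul_orthonormalBasis hS.eigenvectorBasis
  rw [← mgf_sum_mul_sq_gaussPi ht, ← hmp.map_eq, mgf_map hmp.aemeasurable]
  · simp only [Function.comp_def, dotProduct_mulVec_sum_eigenvectorBasis, hmp.map_eq]
  · exact (Continuous.aestronglyMeasurable (by fun_prop))

theorem det_one_add_smul_eq_prod (hS : S.IsHermitian) (t : ℝ) :
    (1 + t • S).det = ∏ i, (1 + t * hS.eigenvalues i) := by
  have hdiag : (1 : Matrix κ κ ℝ) + t • diagonal hS.eigenvalues =
      diagonal fun i => 1 + t * hS.eigenvalues i := by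
    rw [← diagonal_one, ← diagonal_smul, diagonal_add]
    rfl
  have hconj : 1 + t • S = Unitary.conjStarAlgAut ℝ _ hS.eigenvectorUnitary
      (1 + t • diagonal hS.eigenvalues) := by
    rw [map_add, map_smul, map_one]
    congr 2
    exact hS.spectral_theorem
  rw [hconj, Unitary.conjStarAlgAut_apply, det_mul_right_comm, Unitary.mul_star_self_of_mem,
   one_mul, hdiag, det_diagonal]
  exact hS.eigenvectorUnitary.2

theorem mgf_neg_dotProduct_mulVec (hS : S.PosSemidef) {t : ℝ} (ht : 0 ≤ t) :
    mgf (fun x => x ⬝ᵥ S *ᵥ x) (gaussPi κ) (-t) =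
      (√(∏ i, (1 + t * (2 * hS.1.eigenvalues i))))⁻¹ := by
  rw [mgf_dotProduct_mulVec hS.1 fun i => by
      nlinarith [mul_nonneg ht (hS.eigenvalues_nonneg i)], Finset.prod_inv_distrib,
    Real.sqrt_prod _ fun i _ => by have := hS.eigenvalues_nonneg i; positivity]
  refine congrArg _ (Finset.prod_congr rfl fun i _ => ?_)
  congr 1
  ring

theorem inv_sq_mgf_neg_dotProduct_mulVec (hS : S.PosSemidef) {t : ℝ} (ht : 0 ≤ t) :
    (mgf (fun x => x ⬝ᵥ S *ᵥ x) (gaussPi κ) (-t) ^ 2)⁻¹ =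
      ∏ i, (1 + t * (2 * hS.1.eigenvalues i)) := by
  rw [mgf_neg_dotProduct_mulVec hS ht, inv_pow, inv_inv, Real.sq_sqrt]
  exact Finset.prod_nonneg fun i _ => by have := hS.eigenvalues_nonneg i; positivity

theorem one_add_mul_eigenvalues_mul_sq_le_one (hS : S.PosSemidef) {a : ℝ} (ha : 0 < a)
    (h_one : a ≤ mgf (fun x => x ⬝ᵥ S *ᵥ x) (gaussPi κ) (-1)) (i : κ) :
    (1 + 2 * hS.1.eigenvalues i) * a ^ 2 ≤ 1 := by
  have hprod := inv_sq_mgf_neg_dotProduct_mulVec hS zero_le_one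
  simp only [one_mul] at hprod
  have heig (j : κ) : 0 ≤ 2 * hS.1.eigenvalues j :=
    mul_nonneg zero_le_two (hS.eigenvalues_nonneg j)
  have hle : 1 + 2 * hS.1.eigenvalues i ≤ (a ^ 2)⁻¹ := calc
    1 + 2 * hS.1.eigenvalues i ≤ ∏ j, (1 + 2 * hS.1.eigenvalues j) := by
      simpa using Finset.prod_le_prod_of_subset_of_one_le
        (f := fun j => 1 + 2 * hS.1.eigenvalues j) (Finset.subset_univ {i})
        (fun j _ => by linarith [heig j]) fun j _ _ => by linarith [heig j]
    _ ≤ (a ^ 2)⁻¹ := by rw [← hprod]; gcongr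
  rwa [← one_div, le_div_iff₀ (by positivity)] at hle

theorem two_mul_sq_mul_eigenvalues_lt_one (hS : S.PosSemidef) {a : ℝ} (ha : 0 < a)
    (h_one : a ≤ mgf (fun x => x ⬝ᵥ S *ᵥ x) (gaussPi κ) (-1)) (i : κ) :
    2 * (a ^ 2 * hS.1.eigenvalues i) < 1 := by
  have : 0 < a ^ 2 := by positivity
  linarith [one_add_mul_eigenvalues_mul_sq_le_one hS ha h_one i]

end Eigenvalues

section MgfBounds

variable {κ : Type} [Fintype κ] {S : Matrix κ κ ℝ}

theorem mgf_neg_dotProduct_mulVec_pos (hS : S.PosSemidef) {t : ℝ} (ht : 0 ≤ t) :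
    0 < mgf (fun x => x ⬝ᵥ S *ᵥ x) (gaussPi κ) (-t) := by
  classical
  rw [mgf_neg_dotProduct_mulVec hS ht, inv_pos, Real.sqrt_pos]
  exact Finset.prod_pos fun i _ => by have := hS.eigenvalues_nonneg i; positivity

theorem div_pow_mul_inv_sq_mgf_neg_le (hS : S.PosSemidef) {T t : ℝ} (hT : 1 ≤ T) (hTt : T ≤ t)
    (M : ℕ) :
    (t / T) ^ M * (mgf (fun x => x ⬝ᵥ S *ᵥ x) (gaussPi κ) (-T) ^ 2)⁻¹ ≤
      (mgf (fun x => x ⬝ᵥ S *ᵥ x) (gaussPi κ) (-t) ^ 2)⁻¹ +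
        t ^ M * (mgf (fun x => x ⬝ᵥ S *ᵥ x) (gaussPi κ) (-1) ^ 2)⁻¹ := by
  classical
  have hT0 : 0 ≤ T := zero_le_one.trans hT
  rw [inv_sq_mgf_neg_dotProduct_mulVec hS hT0,
    inv_sq_mgf_neg_dotProduct_mulVec hS (hT0.trans hTt),
    inv_sq_mgf_neg_dotProduct_mulVec hS zero_le_one]
  simp only [one_mul]
  exact div_pow_mul_prod_one_add_le _
    (fun i _ => mul_nonneg zero_le_two (hS.eigenvalues_nonneg i)) hT hTt M

theorem mgf_neg_le_div_pow (hS : S.PosSemidef) {a b T t : ℝ} {k : ℕ} (hT : 1 ≤ T) (hTt : T ≤ t)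
    (ha : 0 < a) (h_one : a ≤ mgf (fun x => x ⬝ᵥ S *ᵥ x) (gaussPi κ) (-1))
    (hb : mgf (fun x => x ⬝ᵥ S *ᵥ x) (gaussPi κ) (-T) ≤ b)
    (hab : b ^ 2 * (1 + T ^ (2 * k) * (a ^ 2)⁻¹) ≤ 1) :
    mgf (fun x => x ⬝ᵥ S *ᵥ x) (gaussPi κ) (-t) ≤ (T / t) ^ k := by
  set φ : ℝ → ℝ := fun s => mgf (fun x => x ⬝ᵥ S *ᵥ x) (gaussPi κ) (-s)
  have hφ_pos {s : ℝ} (hs : 0 ≤ s) : 0 < φ s := mgf_neg_dotProduct_mulVec_pos hS hs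
  have hT0 : 0 < T := by linarith
  have ht0 : 0 < t := by linarith
  have hb_pos : 0 < b := (hφ_pos hT0.le).trans_le hb
  have hφT : 1 + T ^ (2 * k) * (φ 1 ^ 2)⁻¹ ≤ (φ T ^ 2)⁻¹ := calc
    1 + T ^ (2 * k) * (φ 1 ^ 2)⁻¹ ≤ 1 + T ^ (2 * k) * (a ^ 2)⁻¹ := by gcongr
    _ ≤ (b ^ 2)⁻¹ := by rwa [← one_div (b ^ 2), le_div_iff₀' (by positivity)]
    _ ≤ (φ T ^ 2)⁻¹ := by have := hφ_pos hT0.le; gcongr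
  have hφt : (t / T) ^ (2 * k) ≤ (φ t ^ 2)⁻¹ := by
    have hgrowth := div_pow_mul_inv_sq_mgf_neg_le hS hT hTt (2 * k)
    have hsplit : (t / T) ^ (2 * k) * T ^ (2 * k) = t ^ (2 * k) := by
      rw [← mul_pow, div_mul_cancel₀ _ hT0.ne']
    have := mul_le_mul_of_nonneg_left hφT (by positivity : 0 ≤ (t / T) ^ (2 * k))
    rw [mul_add, mul_one, ← mul_assoc, hsplit] at this
    linarith
  refine le_of_sq_le_sq ?_ (by positivity)
  rw [← pow_mul, mul_comm k, ← inv_div, inv_pow]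
  exact (le_inv_comm₀ (by positivity) (pow_pos (hφ_pos ht0.le) 2)).mp hφt

theorem integrable_exp_sq_mul_dotProduct_mulVec (hS : S.PosSemidef) {a : ℝ} (ha : 0 < a)
    (h_one : a ≤ mgf (fun x => x ⬝ᵥ S *ᵥ x) (gaussPi κ) (-1)) :
    Integrable (fun x => Real.exp (a ^ 2 * (x ⬝ᵥ S *ᵥ x))) (gaussPi κ) := by
  classical
  have hlt := two_mul_sq_mul_eigenvalues_lt_one hS ha h_one
  rw [← mgf_pos_iff, mgf_dotProduct_mulVec hS.1 hlt]
  exact Finset.prod_pos fun i _ => inv_pos.mpr (Real.sqrt_pos.mpr (sub_pos.mpr (hlt i)))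

theorem mgf_sq_dotProduct_mulVec_le_inv (hS : S.PosSemidef) {a : ℝ} (ha : 0 < a)
    (h_one : a ≤ mgf (fun x => x ⬝ᵥ S *ᵥ x) (gaussPi κ) (-1)) :
    mgf (fun x => x ⬝ᵥ S *ᵥ x) (gaussPi κ) (a ^ 2) ≤ a⁻¹ := by
  classical
  have heig := hS.eigenvalues_nonneg
  have hlt := two_mul_sq_mul_eigenvalues_lt_one hS ha h_one
  calc mgf (fun x => x ⬝ᵥ S *ᵥ x) (gaussPi κ) (a ^ 2)
      ≤ ∏ i, √(1 + 2 * hS.1.eigenvalues i) := by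
        rw [mgf_dotProduct_mulVec hS.1 hlt]
        refine Finset.prod_le_prod (fun i _ => by positivity) fun i _ => ?_
        rw [← Real.sqrt_inv]
        refine Real.sqrt_le_sqrt ((inv_le_iff_one_le_mul₀ (sub_pos.mpr (hlt i))).mpr ?_)
        nlinarith [heig i, one_add_mul_eigenvalues_mul_sq_le_one hS ha h_one i]
    _ = (mgf (fun x => x ⬝ᵥ S *ᵥ x) (gaussPi κ) (-1))⁻¹ := by
        rw [mgf_neg_dotProduct_mulVec hS zero_le_one, inv_inv,
          Real.sqrt_prod _ fun i _ => by linarith [heig i]]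
        simp only [one_mul]
    _ ≤ a⁻¹ := by gcongr

end MgfBounds

theorem exists_mgf_neg_le_div_pow {c : ℝ} (hc : 0 < c) (C : ℝ) (k : ℕ) :
    ∃ T > (0 : ℝ), ∃ δ > (0 : ℝ), ∀ {κ : Type} [Fintype κ] {S : Matrix κ κ ℝ}, S.PosSemidef →
      gaussPi κ {x | x ⬝ᵥ S *ᵥ x ≤ c} ≤ ENNReal.ofReal δ →
      gaussPi κ {x | C ≤ x ⬝ᵥ S *ᵥ x} ≤ 1 / 2 →
      ∀ t, 0 ≤ t → mgf (fun x => x ⬝ᵥ S *ᵥ x) (gaussPi κ) (-t) ≤ ((1 + T) / (1 + t)) ^ k := by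
  set a := Real.exp (-C) / 2
  have hlim :=
    tendsto_sq_two_mul_exp_neg_mul_mul_one_add_pow hc (a ^ 2)⁻¹ (2 * k)
  obtain ⟨T, hT, hT1⟩ := ((hlim.eventually_le_const one_pos).and (eventually_ge_atTop 1)).exists
  have hT0 : 0 < T := zero_lt_one.trans_le hT1
  refine ⟨T, hT0, Real.exp (-(T * c)), Real.exp_pos _, fun {κ _ S} hS hsmall hlarge t ht => ?_⟩
  have hQ : Measurable fun x : κ → ℝ => x ⬝ᵥ S *ᵥ x := Continuous.measurable (by fun_prop)
  have hQ0 (x : κ → ℝ) : 0 ≤ x ⬝ᵥ S *ᵥ x := by simpa using hS.dotProduct_mulVec_nonneg x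
  have hmgf_T := mgf_neg_le_exp_neg_add (P := gaussPi κ) hQ hQ0 c hT0.le
  have hmgf_one := exp_neg_div_two_le_mgf hQ hQ0 hlarge zero_le_one
  have hsmall' := ENNReal.toReal_mono ENNReal.ofReal_ne_top hsmall
  rw [ENNReal.toReal_ofReal (Real.exp_pos _).le, ← measureReal_def] at hsmall'
  rw [one_mul] at hmgf_one
  rcases le_total t T with htT | hTt
  · have hmgf_le_one : mgf (fun x => x ⬝ᵥ S *ᵥ x) (gaussPi κ) (-t) ≤ 1 := by
      simpa using mgf_anti_of_nonpos (μ := gaussPi κ) (X := 0) (ae_of_all _ hQ0)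
        (neg_nonpos.mpr ht) (by simp)
    exact hmgf_le_one.trans (one_le_pow₀ ((one_le_div (by linarith)).mpr (by linarith)))
  · calc mgf (fun x => x ⬝ᵥ S *ᵥ x) (gaussPi κ) (-t) ≤ (T / t) ^ k :=
        mgf_neg_le_div_pow hS hT1 hTt (by positivity) hmgf_one (by linarith) hT
      _ ≤ ((1 + T) / (1 + t)) ^ k := by
        refine pow_le_pow_left₀ (by positivity) ?_ k
        rw [div_le_div_iff₀ (hT0.trans_le hTt) (by linarith)]
        linarith

theorem exists_lintegral_one_add_pow_le (C : ℝ) (N : ℕ) :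
    ∃ R : ℝ≥0, ∀ {κ : Type} [Fintype κ] {S : Matrix κ κ ℝ}, S.PosSemidef →
      gaussPi κ {x | C ≤ x ⬝ᵥ S *ᵥ x} ≤ 1 / 2 →
      ∫⁻ x, ENNReal.ofReal ((1 + x ⬝ᵥ S *ᵥ x) ^ N) ∂gaussPi κ ≤ R := by
  set a := Real.exp (-C) / 2
  have ha : 0 < a := by positivity
  set b := N.factorial / (a ^ 2) ^ N * Real.exp (a ^ 2)
  refine ⟨(b * a⁻¹).toNNReal, fun {κ _ S} hS hlarge => ?_⟩
  have hQ0 (x : κ → ℝ) : 0 ≤ x ⬝ᵥ S *ᵥ x := by simpa using hS.dotProduct_mulVec_nonneg x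
  have h_one := exp_neg_div_two_le_mgf (Continuous.measurable (by fun_prop)) hQ0 hlarge zero_le_one
  rw [one_mul] at h_one
  have hint := integrable_exp_sq_mul_dotProduct_mulVec hS ha h_one
  have hmgf := mgf_sq_dotProduct_mulVec_le_inv hS ha h_one
  calc ∫⁻ x, ENNReal.ofReal ((1 + x ⬝ᵥ S *ᵥ x) ^ N) ∂gaussPi κ
      ≤ ∫⁻ x, ENNReal.ofReal (b * Real.exp (a ^ 2 * (x ⬝ᵥ S *ᵥ x))) ∂gaussPi κ :=
        lintegral_mono fun x =>
          ENNReal.ofReal_le_ofReal (one_add_pow_le_mul_exp (by positivity) (hQ0 x) N)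
    _ = ENNReal.ofReal (b * mgf (fun x => x ⬝ᵥ S *ᵥ x) (gaussPi κ) (a ^ 2)) := by
        rw [mgf, ← integral_const_mul, ofReal_integral_eq_lintegral_ofReal (hint.const_mul b)]
        exact ae_of_all _ fun x => by positivity
    _ ≤ (b * a⁻¹).toNNReal := ENNReal.ofReal_le_ofReal (by gcongr)

theorem gaussianReal_zero_one_le_volume : gaussianReal 0 1 ≤ volume := by
  have hpdf (y : ℝ) : gaussianPDF 0 1 y ≤ 1 := by
    refine ENNReal.ofReal_le_one.mpr (mul_le_one₀ (inv_le_one_of_one_le₀ ?_) (by positivity) ?_)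
    · rw [Real.one_le_sqrt, NNReal.coe_one, mul_one]
      linarith [Real.pi_gt_three]
    · rw [Real.exp_le_one_iff, NNReal.coe_one]
      exact div_nonpos_of_nonpos_of_nonneg (neg_nonpos.mpr (sq_nonneg _)) (by norm_num)
  rw [gaussianReal_of_var_ne_zero 0 one_ne_zero]
  exact (withDensity_mono (ae_of_all _ hpdf)).trans_eq withDensity_one

theorem lintegral_inv_one_add_sq_gaussianReal_le {r : ℝ} (hr : 0 < r) :
    ∫⁻ y, ENNReal.ofReal (1 + (r * y) ^ 2)⁻¹ ∂gaussianReal 0 1 ≤ ENNReal.ofReal (Real.pi / r) :=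
  calc ∫⁻ y, ENNReal.ofReal (1 + (r * y) ^ 2)⁻¹ ∂gaussianReal 0 1
      ≤ ∫⁻ y, ENNReal.ofReal (1 + (r * y) ^ 2)⁻¹ :=
        lintegral_mono' gaussianReal_zero_one_le_volume le_rfl
    _ = ENNReal.ofReal (∫ y, (1 + (r * y) ^ 2)⁻¹) :=
        (ofReal_integral_eq_lintegral_ofReal (integrable_inv_one_add_sq.comp_mul_left' hr.ne')
          (ae_of_all _ fun y => by positivity)).symm
    _ = ENNReal.ofReal (Real.pi / r) := by
        rw [Measure.integral_comp_mul_left (fun y => (1 + y ^ 2)⁻¹), integral_univ_inv_one_add_sq,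
          abs_of_pos (inv_pos.mpr hr), smul_eq_mul, inv_mul_eq_div]

theorem lintegral_prod_gaussPi {m : Type} [Fintype m] {f : ℝ → ℝ≥0∞} (hf : Measurable f) :
    ∫⁻ g, ∏ i, f (g i) ∂gaussPi m = (∫⁻ y, f y ∂gaussianReal 0 1) ^ Fintype.card m := by
  have hindep : iIndepFun (fun i (g : m → ℝ) => f (g i)) (gaussPi m) :=
    iIndepFun_pi (X := fun _ => f) fun _ => hf.aemeasurable
  have hmp (i : m) : MeasurePreserving (fun g : m → ℝ => g i) (gaussPi m) (gaussianReal 0 1) :=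
    measurePreserving_eval _ i
  rw [lintegral_prod_eq_prod_lintegral_of_indepFun _ _ hindep fun i => by fun_prop,
    Finset.prod_congr rfl fun i _ => (hmp i).lintegral_comp hf, Finset.prod_const,
    Finset.card_univ]

theorem mul_self_le_dotProduct_self {m : Type*} [Fintype m] (g : m → ℝ) (i : m) :
    g i * g i ≤ g ⬝ᵥ g :=
  Finset.single_le_sum (f := fun j => g j * g j) (fun _ _ => mul_self_nonneg _) (Finset.mem_univ i)

theorem lintegral_inv_one_add_mul_dotProduct_self_pow_le {m : Type} [Fintype m] {r : ℝ}
    (hr : 0 < r) :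
    ∫⁻ g, ENNReal.ofReal ((1 + r ^ 2 * (g ⬝ᵥ g))⁻¹ ^ Fintype.card m) ∂gaussPi m ≤
      ENNReal.ofReal (Real.pi / r) ^ Fintype.card m := by
  have hpoint (g : m → ℝ) : (1 + r ^ 2 * (g ⬝ᵥ g))⁻¹ ^ Fintype.card m ≤
      ∏ i, (1 + (r * g i) ^ 2)⁻¹ := by
    rw [← Finset.card_univ, ← Finset.prod_const]
    refine Finset.prod_le_prod (fun i _ => ?_) fun i _ => ?_
    · have := dotProduct_star_self_nonneg g
      simp only [star_trivial] at this
      positivity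
    · have := mul_self_le_dotProduct_self g i
      rw [mul_pow, sq (g i)]
      have hpos : 0 < 1 + r ^ 2 * (g i * g i) := by
        have := mul_self_nonneg (g i)
        positivity
      gcongr
  calc ∫⁻ g, ENNReal.ofReal ((1 + r ^ 2 * (g ⬝ᵥ g))⁻¹ ^ Fintype.card m) ∂gaussPi m
      ≤ ∫⁻ g, ∏ i, ENNReal.ofReal (1 + (r * g i) ^ 2)⁻¹ ∂gaussPi m :=
        lintegral_mono fun g => (ENNReal.ofReal_le_ofReal (hpoint g)).trans_eq
          (ENNReal.ofReal_prod_of_nonneg fun i _ => by positivity)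
    _ = (∫⁻ y, ENNReal.ofReal (1 + (r * y) ^ 2)⁻¹ ∂gaussianReal 0 1) ^ Fintype.card m :=
        lintegral_prod_gaussPi (f := fun y => ENNReal.ofReal (1 + (r * y) ^ 2)⁻¹) (by fun_prop)
    _ ≤ ENNReal.ofReal (Real.pi / r) ^ Fintype.card m := by
        gcongr
        exact lintegral_inv_one_add_sq_gaussianReal_le hr

section InvSqrtDet

variable {m : Type} [Fintype m] [DecidableEq m]

theorem inv_ofReal_sqrt_det_one_add_smul {M : Matrix m m ℝ} (hM : M.PosSemidef) {t : ℝ}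
    (ht : 0 ≤ t) :
    (ENNReal.ofReal √(1 + (2 * t) • M).det)⁻¹ =
      ∫⁻ g, ENNReal.ofReal (Real.exp (-t * (g ⬝ᵥ M *ᵥ g))) ∂gaussPi m := by
  have hQ0 (g : m → ℝ) : 0 ≤ g ⬝ᵥ M *ᵥ g := by simpa using hM.dotProduct_mulVec_nonneg g
  have hdet : (1 + (2 * t) • M).det = ∏ i, (1 + t * (2 * hM.1.eigenvalues i)) :=
    (det_one_add_smul_eq_prod hM.1 _).trans (Finset.prod_congr rfl fun i _ => by ring)
  have hdet_pos : 0 < ∏ i, (1 + t * (2 * hM.1.eigenvalues i)) :=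
    Finset.prod_pos fun i _ => by have := hM.eigenvalues_nonneg i; positivity
  rw [← ofReal_integral_eq_lintegral_ofReal
      (integrable_exp_neg_mul (Continuous.measurable (by fun_prop)) hQ0 ht)
      (ae_of_all _ fun g => (Real.exp_pos _).le), hdet,
    ← ENNReal.ofReal_inv_of_pos (Real.sqrt_pos.mpr hdet_pos)]
  exact congrArg ENNReal.ofReal (mgf_neg_dotProduct_mulVec hM ht).symm

theorem inv_ofReal_sqrt_det_smul_one_add (M : Matrix m m ℝ) {r : ℝ} (hr : 0 < r) :
    (ENNReal.ofReal √((2 * r ^ 2)⁻¹ • 1 + M).det)⁻¹ =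
      ENNReal.ofReal ((√2 * r) ^ Fintype.card m) *
        (ENNReal.ofReal √(1 + (2 * r ^ 2) • M).det)⁻¹ := by
  have hscale : (2 * r ^ 2) • ((2 * r ^ 2)⁻¹ • 1 + M) = 1 + (2 * r ^ 2) • M := by
    rw [smul_add, smul_inv_smul₀ (by positivity)]
  have hsq : (2 * r ^ 2) ^ Fintype.card m = ((√2 * r) ^ Fintype.card m) ^ 2 := by
    rw [← pow_mul, mul_comm _ 2, pow_mul, mul_pow √2, Real.sq_sqrt zero_le_two]
  have hpos : 0 < (√2 * r) ^ Fintype.card m := by positivity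
  rw [← hscale, det_smul, Real.sqrt_mul (by positivity), hsq, Real.sqrt_sq hpos.le,
    ENNReal.ofReal_mul hpos.le, ENNReal.mul_inv (Or.inr ENNReal.ofReal_ne_top)
      (Or.inl ENNReal.ofReal_ne_top), ← mul_assoc,
    ENNReal.mul_inv_cancel (ENNReal.ofReal_pos.mpr hpos).ne' ENNReal.ofReal_ne_top, one_mul]

variable {Ω : Type*} [MeasurableSpace Ω] {P : Measure Ω} {A : Ω → Matrix m m ℝ}

theorem measurable_det (hA : ∀ i j, Measurable fun ω => A ω i j) :
    Measurable fun ω => (A ω).det := by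
  simp only [det_apply]
  fun_prop

theorem lintegral_inv_sqrt_det_smul_one_add_eq [SFinite P]
    (hA : ∀ i j, Measurable fun ω => A ω i j) (hpos : ∀ ω, (A ω).PosSemidef) {r : ℝ} (hr : 0 < r) :
    ∫⁻ ω, (ENNReal.ofReal √((2 * r ^ 2)⁻¹ • 1 + A ω).det)⁻¹ ∂P =
      ENNReal.ofReal ((√2 * r) ^ Fintype.card m) * ∫⁻ g, ∫⁻ ω,
        ENNReal.ofReal (Real.exp (-((r • g) ⬝ᵥ A ω *ᵥ (r • g)))) ∂P ∂gaussPi m := by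
  have hmeas : Measurable fun z : Ω × (m → ℝ) =>
      ENNReal.ofReal (Real.exp (-r ^ 2 * (z.2 ⬝ᵥ A z.1 *ᵥ z.2))) := by
    simp only [dotProduct, mulVec]
    fun_prop
  have hscale (ω : Ω) (g : m → ℝ) :
      -r ^ 2 * (g ⬝ᵥ A ω *ᵥ g) = -((r • g) ⬝ᵥ A ω *ᵥ (r • g)) := by
    simp only [mulVec_smul, dotProduct_smul, smul_dotProduct, smul_eq_mul]
    ring
  calc ∫⁻ ω, (ENNReal.ofReal √((2 * r ^ 2)⁻¹ • 1 + A ω).det)⁻¹ ∂P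
      = ENNReal.ofReal ((√2 * r) ^ Fintype.card m) * ∫⁻ ω, ∫⁻ g,
          ENNReal.ofReal (Real.exp (-r ^ 2 * (g ⬝ᵥ A ω *ᵥ g))) ∂gaussPi m ∂P := by
        rw [← lintegral_const_mul _ hmeas.lintegral_prod_right']
        refine lintegral_congr fun ω => ?_
        rw [inv_ofReal_sqrt_det_smul_one_add _ hr,
          inv_ofReal_sqrt_det_one_add_smul (hpos ω) (sq_nonneg r)]
    _ = ENNReal.ofReal ((√2 * r) ^ Fintype.card m) * ∫⁻ g, ∫⁻ ω,
          ENNReal.ofReal (Real.exp (-((r • g) ⬝ᵥ A ω *ᵥ (r • g)))) ∂P ∂gaussPi m := by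
        rw [lintegral_lintegral_swap hmeas.aemeasurable]
        simp only [hscale]

theorem lintegral_inv_sqrt_det_smul_one_add_le [SFinite P]
    (hA : ∀ i j, Measurable fun ω => A ω i j) (hpos : ∀ ω, (A ω).PosSemidef) {D : ℝ} (hD : 0 ≤ D)
    (hlaplace : ∀ w : m → ℝ, ∫⁻ ω, ENNReal.ofReal (Real.exp (-(w ⬝ᵥ A ω *ᵥ w))) ∂P ≤
      ENNReal.ofReal ((D / (1 + w ⬝ᵥ w)) ^ Fintype.card m)) {r : ℝ} (hr : 0 < r) :
    ∫⁻ ω, (ENNReal.ofReal √((2 * r ^ 2)⁻¹ • 1 + A ω).det)⁻¹ ∂P ≤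
      ENNReal.ofReal ((√2 * D * Real.pi) ^ Fintype.card m) := by
  have hnorm (g : m → ℝ) : (D / (1 + (r • g) ⬝ᵥ (r • g))) ^ Fintype.card m =
      D ^ Fintype.card m * (1 + r ^ 2 * (g ⬝ᵥ g))⁻¹ ^ Fintype.card m := by
    simp only [dotProduct_smul, smul_dotProduct, smul_eq_mul]
    rw [← mul_assoc, ← sq, div_eq_mul_inv, mul_pow]
  rw [lintegral_inv_sqrt_det_smul_one_add_eq hA hpos hr]
  calc ENNReal.ofReal ((√2 * r) ^ Fintype.card m) * ∫⁻ g, ∫⁻ ω,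
        ENNReal.ofReal (Real.exp (-((r • g) ⬝ᵥ A ω *ᵥ (r • g)))) ∂P ∂gaussPi m
      ≤ ENNReal.ofReal ((√2 * r) ^ Fintype.card m) * ∫⁻ g, ENNReal.ofReal (D ^ Fintype.card m *
          (1 + r ^ 2 * (g ⬝ᵥ g))⁻¹ ^ Fintype.card m) ∂gaussPi m := by
        gcongr with g
        exact (hlaplace (r • g)).trans_eq (by rw [hnorm])
    _ ≤ ENNReal.ofReal ((√2 * r) ^ Fintype.card m) * (ENNReal.ofReal (D ^ Fintype.card m) *
          ENNReal.ofReal (Real.pi / r) ^ Fintype.card m) := by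
        gcongr
        simp only [ENNReal.ofReal_mul (pow_nonneg hD (Fintype.card m))]
        rw [lintegral_const_mul' _ _ ENNReal.ofReal_ne_top]
        gcongr
        exact lintegral_inv_one_add_mul_dotProduct_self_pow_le hr
    _ = ENNReal.ofReal ((√2 * D * Real.pi) ^ Fintype.card m) := by
        rw [← ENNReal.ofReal_pow (by positivity), ← ENNReal.ofReal_mul (by positivity),
          ← ENNReal.ofReal_mul (by positivity), ← mul_pow, ← mul_pow]
        congr 2
        field_simp

theorem lintegral_inv_sqrt_det_le [SFinite P]
    (hA : ∀ i j, Measurable fun ω => A ω i j) (hpos : ∀ ω, (A ω).PosSemidef) {D : ℝ} (hD : 0 ≤ D)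
    (hlaplace : ∀ w : m → ℝ, ∫⁻ ω, ENNReal.ofReal (Real.exp (-(w ⬝ᵥ A ω *ᵥ w))) ∂P ≤
      ENNReal.ofReal ((D / (1 + w ⬝ᵥ w)) ^ Fintype.card m)) :
    ∫⁻ ω, (ENNReal.ofReal √(A ω).det)⁻¹ ∂P ≤
      ENNReal.ofReal ((√2 * D * Real.pi) ^ Fintype.card m) := by
  set f : ℝ → Ω → ℝ≥0∞ := fun ε ω => (ENNReal.ofReal √(ε • 1 + A ω).det)⁻¹
  set ε : ℕ → ℝ := fun n => (2 * ((n : ℝ) + 1) ^ 2)⁻¹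
  have hε : Tendsto ε atTop (𝓝 0) := by
    have hshift : Tendsto (fun n : ℕ => (n : ℝ) + 1) atTop atTop :=
      tendsto_atTop_add_const_right _ _ tendsto_natCast_atTop_atTop
    exact (((tendsto_pow_atTop two_ne_zero).comp hshift).const_mul_atTop
      two_pos).inv_tendsto_atTop
  have hlim (ω : Ω) : Tendsto (fun n => f (ε n) ω) atTop (𝓝 (f 0 ω)) := by
    have hcont : Continuous fun ε => f ε ω :=
      continuous_inv.comp <| ENNReal.continuous_ofReal.comp (by fun_prop)
    exact (hcont.tendsto 0).comp hε
  have hmeas (n : ℕ) : Measurable (f (ε n)) := by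
    have := measurable_det (A := fun ω => ε n • 1 + A ω) fun i j => (hA i j).const_add _
    fun_prop
  calc ∫⁻ ω, (ENNReal.ofReal √(A ω).det)⁻¹ ∂P
      = ∫⁻ ω, liminf (fun n => f (ε n) ω) atTop ∂P :=
        lintegral_congr fun ω => by simp only [(hlim ω).liminf_eq, f, zero_smul, zero_add]
    _ ≤ liminf (fun n => ∫⁻ ω, f (ε n) ω ∂P) atTop := lintegral_liminf_le hmeas
    _ ≤ ENNReal.ofReal ((√2 * D * Real.pi) ^ Fintype.card m) :=
        liminf_le_of_frequently_le' <| Frequently.of_forall fun n =>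
          lintegral_inv_sqrt_det_smul_one_add_le hA hpos hD hlaplace n.cast_add_one_pos

end InvSqrtDet

section TendstoInProb

variable {α E F : Type*} {Ω : α → Type*} [∀ n, MeasurableSpace (Ω n)] [TopologicalSpace E]
  [TopologicalSpace F] {P : ∀ n, Measure (Ω n)} {X : ∀ n, Ω n → E} {l : Filter α} {c : E}

/-- Convergence in probability, along `l`, of the random elements `X n` to the constant `c`. Unlike
for `TendstoInMeasure`, each `X n` has its own probability space. -/
def TendstoInProb (P : ∀ n, Measure (Ω n)) (X : ∀ n, Ω n → E) (l : Filter α) (c : E) : Prop :=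
  ∀ U ∈ 𝓝 c, Tendsto (fun n => P n {ω | X n ω ∉ U}) l (𝓝 0)

theorem TendstoInProb.comp {g : E → F} (hX : TendstoInProb P X l c) (hg : ContinuousAt g c) :
    TendstoInProb P (fun n ω => g (X n ω)) l (g c) :=
  fun _ hU => hX _ (hg hU)

theorem TendstoInProb.eventually_measure_le (hX : TendstoInProb P X l c) {U : Set E}
    (hU : U ∈ 𝓝 c) {δ : ℝ≥0∞} (hδ : 0 < δ) : ∀ᶠ n in l, P n {ω | X n ω ∉ U} ≤ δ :=
  (hX U hU).eventually_le_const hδ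

theorem TendstoInProb.mem_of_isClosed [l.NeBot] [∀ n, IsProbabilityMeasure (P n)]
    (hX : TendstoInProb P X l c) {s : Set E} (hs : IsClosed s) (hXs : ∀ n ω, X n ω ∈ s) :
    c ∈ s := by
  by_contra hc
  have h := hX _ (hs.isOpen_compl.mem_nhds hc)
  simp only [Set.mem_compl_iff, not_not, hXs, Set.ofPred_true, measure_univ] at h
  exact one_ne_zero (tendsto_nhds_unique tendsto_const_nhds h)

theorem tendstoInProb_pi {ι : Type*} [Finite ι] {E : ι → Type*} [∀ i, TopologicalSpace (E i)]
    {X : ∀ n, Ω n → ∀ i, E i} {c : ∀ i, E i}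
    (hX : ∀ i, TendstoInProb P (fun n ω => X n ω i) l (c i)) : TendstoInProb P X l c := by
  have := Fintype.ofFinite ι
  intro U hU
  rw [nhds_pi, Filter.mem_pi'] at hU
  obtain ⟨I, V, hV, hVU⟩ := hU
  have hsum : Tendsto (fun n => ∑ i ∈ I, P n {ω | X n ω i ∉ V i}) l (𝓝 0) := by
    simpa using tendsto_finsetSum I fun i _ => hX i (V i) (hV i)
  refine tendsto_of_tendsto_of_tendsto_of_le_of_le tendsto_const_nhds hsum
    (fun _ => zero_le) fun n => ?_
  refine (measure_mono fun ω hω => ?_).trans (measure_biUnion_finset_le I _)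
  simpa [Set.mem_pi] using fun h => hω (hVU h)

theorem tendstoInProb_of_forall_le_dist {E : Type*} [PseudoMetricSpace E] {X : ∀ n, Ω n → E}
    {c : E} (hX : ∀ ε > 0, Tendsto (fun n => P n {ω | ε ≤ dist (X n ω) c}) l (𝓝 0)) :
    TendstoInProb P X l c := by
  intro U hU
  obtain ⟨ε, hε, hεU⟩ := Metric.mem_nhds_iff.mp hU
  exact tendsto_of_tendsto_of_tendsto_of_le_of_le tendsto_const_nhds (hX ε hε)
    (fun _ => zero_le) fun n =>
      measure_mono fun ω hω => not_lt.mp fun h : dist (X n ω) c < ε => hω (hεU h)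

theorem le_indicator_add_mul_sq (x : ℝ≥0∞) {ε : ℝ≥0} (hε : ε ≠ 0) :
    x ≤ ε + ((Set.Iio (ε : ℝ≥0∞))ᶜ.indicator (fun _ => (ε : ℝ≥0∞)⁻¹) x + ε * x ^ 2) := by
  rcases lt_or_ge x ε with hx | hx
  · exact hx.le.trans le_self_add
  rw [Set.indicator_of_mem (s := (Set.Iio (ε : ℝ≥0∞))ᶜ) (not_lt.mpr hx)]
  rcases le_total x (ε : ℝ≥0∞)⁻¹ with hx' | hx'
  · exact hx'.trans (le_self_add.trans le_add_self)
  · calc x = 1 * x := (one_mul x).symm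
      _ ≤ (ε * x) * x := by
        gcongr
        exact (ENNReal.inv_le_iff_le_mul (by simp [hε]) (by simp)).mp hx'
      _ = ε * x ^ 2 := by rw [sq, mul_assoc]
      _ ≤ ε + ((ε : ℝ≥0∞)⁻¹ + ε * x ^ 2) := le_add_self.trans le_add_self

theorem TendstoInProb.tendsto_lintegral [∀ n, IsProbabilityMeasure (P n)] {X : ∀ n, Ω n → ℝ≥0∞}
    (hX : TendstoInProb P X l 0) (hmeas : ∀ n, Measurable (X n)) {R : ℝ≥0}
    (hR : ∀ᶠ n in l, ∫⁻ ω, X n ω ^ 2 ∂P n ≤ R) : Tendsto (fun n => ∫⁻ ω, X n ω ∂P n) l (𝓝 0) := by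
  have hbound {ε : ℝ≥0} (hε : ε ≠ 0) (n : α) : ∫⁻ ω, X n ω ∂P n ≤
      ε + ((ε : ℝ≥0∞)⁻¹ * P n {ω | X n ω ∉ Set.Iio (ε : ℝ≥0∞)} + ε * ∫⁻ ω, X n ω ^ 2 ∂P n) := by
    have hs : MeasurableSet {ω | X n ω ∉ Set.Iio (ε : ℝ≥0∞)} :=
      (hmeas n measurableSet_Iio).compl
    refine (lintegral_mono fun ω => le_indicator_add_mul_sq (X n ω) hε).trans_eq ?_
    rw [lintegral_add_left measurable_const, lintegral_add_right _ (by fun_prop),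
      lintegral_const_mul _ (by fun_prop), lintegral_const, measure_univ, mul_one]
    exact congrArg (fun y => _ + (y + _)) (lintegral_indicator_const hs _)
  refine tendsto_order.mpr ⟨fun _ h => absurd h not_lt_zero, fun η hη => ?_⟩
  have hsmall : Tendsto (fun ε : ℝ≥0 => (ε : ℝ≥0∞) + ε * R) (𝓝[>] 0) (𝓝 0) := by
    have : Continuous fun ε : ℝ≥0 => ((ε + ε * R : ℝ≥0) : ℝ≥0∞) := by fun_prop
    simpa using (this.tendsto 0).mono_left nhdsWithin_le_nhds
  obtain ⟨ε, hεη, hε⟩ := ((hsmall.eventually_lt_const hη).and self_mem_nhdsWithin).exists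
  have hε_pos : 0 < ε := hε
  have hlim : Tendsto (fun n => (ε : ℝ≥0∞) + ((ε : ℝ≥0∞)⁻¹ *
      P n {ω | X n ω ∉ Set.Iio (ε : ℝ≥0∞)} + ε * R)) l (𝓝 (ε + ε * R)) := by
    have hU : Set.Iio (ε : ℝ≥0∞) ∈ 𝓝 0 := Iio_mem_nhds (by simpa using hε_pos)
    simpa using tendsto_const_nhds.add
      ((ENNReal.Tendsto.const_mul (hX _ hU) (Or.inr (by simpa using hε_pos.ne'))).add_const _)
  filter_upwards [hlim.eventually_lt_const hεη, hR] with n hn hRn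
  exact (hbound hε_pos.ne' n).trans_lt (lt_of_le_of_lt (by gcongr) hn)

end TendstoInProb

section Wishart

variable {κ : Type} {ι m : Type*}

/-- The Wishart-type matrix of the Gaussian matrix `B`, where a matrix with jointly Gaussian
centered entries is encoded as a matrix-valued linear map, evaluated at a standard Gaussian
vector. -/
def wishart [Fintype ι] (B : (κ → ℝ) →ₗ[ℝ] Matrix ι m ℝ) (x : κ → ℝ) : Matrix m m ℝ :=
  (B x)ᵀ * B x

theorem posSemidef_wishart [Fintype ι] [Finite m] (B : (κ → ℝ) →ₗ[ℝ] Matrix ι m ℝ) (x : κ → ℝ) :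
    (wishart B x).PosSemidef := by
  simpa using! posSemidef_conjTranspose_mul_self (B x)

theorem continuous_wishart [Finite κ] [Fintype ι] (B : (κ → ℝ) →ₗ[ℝ] Matrix ι m ℝ) :
    Continuous (wishart B) := by
  have hB : Continuous B := B.continuous_of_finiteDimensional
  exact hB.matrix_transpose.matrix_mul hB

theorem measurable_wishart [Finite κ] [Fintype ι] (B : (κ → ℝ) →ₗ[ℝ] Matrix ι m ℝ) (i j : m) :
    Measurable fun x => wishart B x i j :=
  ((continuous_wishart B).matrix_elem i j).measurable

variable [Fintype κ] [Fintype ι]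

theorem exists_posSemidef_dotProduct_self_eq (L : (κ → ℝ) →ₗ[ℝ] (ι → ℝ)) :
    ∃ S : Matrix κ κ ℝ, S.PosSemidef ∧ ∀ x, L x ⬝ᵥ L x = x ⬝ᵥ S *ᵥ x := by
  classical
  refine ⟨(LinearMap.toMatrix' L)ᵀ * LinearMap.toMatrix' L, ?_, fun x => ?_⟩
  · simpa using! posSemidef_conjTranspose_mul_self (LinearMap.toMatrix' L)
  · rw [← mulVec_mulVec, dotProduct_mulVec, vecMul_transpose, LinearMap.toMatrix'_mulVec]

theorem exists_posSemidef_dotProduct_wishart_mulVec_eq [Fintype m]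
    (B : (κ → ℝ) →ₗ[ℝ] Matrix ι m ℝ) (u : m → ℝ) :
    ∃ S : Matrix κ κ ℝ, S.PosSemidef ∧ ∀ x, u ⬝ᵥ wishart B x *ᵥ u = x ⬝ᵥ S *ᵥ x := by
  obtain ⟨S, hS, hBS⟩ := exists_posSemidef_dotProduct_self_eq
    ((LinearMap.applyₗ u).comp (mulVecBilin ℝ ℝ |>.comp B))
  refine ⟨S, hS, fun x => ?_⟩
  rw [← hBS, wishart, ← mulVec_mulVec, dotProduct_mulVec, vecMul_transpose]
  rfl

theorem exists_posSemidef_trace_wishart_eq [Fintype m] (B : (κ → ℝ) →ₗ[ℝ] Matrix ι m ℝ) :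
    ∃ S : Matrix κ κ ℝ, S.PosSemidef ∧ ∀ x, (wishart B x).trace = x ⬝ᵥ S *ᵥ x := by
  let vecB : (κ → ℝ) →ₗ[ℝ] (m × ι → ℝ) :=
    { toFun := fun x => vec (B x)
      map_add' := fun x y => by rw [map_add, vec_add]
      map_smul' := fun a x => by rw [map_smul, vec_smul]; rfl }
  obtain ⟨S, hS, hBS⟩ := exists_posSemidef_dotProduct_self_eq vecB
  exact ⟨S, hS, fun x => (vec_dotProduct_vec _ _).symm.trans (hBS x)⟩

end Wishart

theorem isCompact_setOf_dotProduct_self_eq_one (m : Type*) [Fintype m] :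
    IsCompact {u : m → ℝ | u ⬝ᵥ u = 1} := by
  refine Metric.isCompact_of_isClosed_isBounded (isClosed_eq (by fun_prop) continuous_const) ?_
  refine (Metric.isBounded_closedBall (x := 0) (r := 1)).subset fun u hu => ?_
  rw [mem_closedBall_zero_iff, pi_norm_le_iff_of_nonneg zero_le_one]
  intro i
  rw [Real.norm_eq_abs, abs_le_one_iff_mul_self_le_one]
  exact (mul_self_le_dotProduct_self u i).trans_eq hu

theorem isClosed_setOf_posSemidef (m : Type*) [Finite m] :
    IsClosed {M : Matrix m m ℝ | M.PosSemidef} := by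
  have := Fintype.ofFinite m
  simp only [posSemidef_iff_dotProduct_mulVec, Set.ofPred_and, Set.ofPred_forall]
  refine IsClosed.inter (isClosed_eq (by fun_prop) (by fun_prop)) ?_
  exact isClosed_iInter fun u => isClosed_le continuous_const (by fun_prop)

theorem exists_eventually_forall_lt_dotProduct_mulVec_lt {m : Type*} [Fintype m]
    {Sig : Matrix m m ℝ} (hSig : Sig.PosDef) :
    ∃ c > (0 : ℝ), ∃ C : ℝ, ∀ᶠ M in 𝓝 Sig, ∀ u, u ⬝ᵥ u = 1 →
      c < u ⬝ᵥ M *ᵥ u ∧ u ⬝ᵥ M *ᵥ u < C := by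
  have hK := isCompact_setOf_dotProduct_self_eq_one m
  have hcont : Continuous fun u : m → ℝ => u ⬝ᵥ Sig *ᵥ u := by fun_prop
  obtain ⟨c, hc, hcK⟩ := hK.exists_forall_le' hcont.continuousOn (a := 0) fun u hu => by
    refine hSig.dotProduct_mulVec_pos (x := u) ?_
    rintro rfl
    simp at hu
  obtain ⟨C, hCK⟩ := hK.exists_bound_of_continuousOn hcont.continuousOn
  refine ⟨c / 2, half_pos hc, C + 1, ?_⟩
  refine hK.eventually_forall_of_forall_eventually fun u hu => ?_
  have hcont₂ : Continuous fun z : Matrix m m ℝ × (m → ℝ) => z.2 ⬝ᵥ z.1 *ᵥ z.2 := by fun_prop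
  refine ((hcont₂.tendsto (Sig, u)).eventually_const_lt ?_).and
    ((hcont₂.tendsto (Sig, u)).eventually_lt_const ?_)
  · linarith [hcK u hu]
  · linarith [le_abs_self (u ⬝ᵥ Sig *ᵥ u), hCK u hu, Real.norm_eq_abs (u ⬝ᵥ Sig *ᵥ u)]

theorem exists_sqrt_smul_eq {m : Type*} [Fintype m] {w : m → ℝ} (hw : w ≠ 0) :
    ∃ u : m → ℝ, u ⬝ᵥ u = 1 ∧ w = √(w ⬝ᵥ w) • u := by
  have hpos : 0 < w ⬝ᵥ w := by simpa using dotProduct_star_self_pos_iff.mpr hw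
  refine ⟨(√(w ⬝ᵥ w))⁻¹ • w, ?_, (smul_inv_smul₀ (Real.sqrt_pos.mpr hpos).ne' w).symm⟩
  rw [smul_dotProduct, dotProduct_smul, smul_smul, smul_eq_mul, ← mul_inv,
    Real.mul_self_sqrt hpos.le, inv_mul_cancel₀ hpos.ne']

theorem lintegral_exp_neg_dotProduct_wishart_mulVec_le {κ : Type} {ι m : Type*} [Fintype κ]
    [Fintype ι] [Fintype m] (B : (κ → ℝ) →ₗ[ℝ] Matrix ι m ℝ) {D : ℝ} (hD : 1 ≤ D) {k : ℕ}
    (hmgf : ∀ u : m → ℝ, u ⬝ᵥ u = 1 → ∀ t, 0 ≤ t →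
      mgf (fun x => u ⬝ᵥ wishart B x *ᵥ u) (gaussPi κ) (-t) ≤ (D / (1 + t)) ^ k) (w : m → ℝ) :
    ∫⁻ x, ENNReal.ofReal (Real.exp (-(w ⬝ᵥ wishart B x *ᵥ w))) ∂gaussPi κ ≤
      ENNReal.ofReal ((D / (1 + w ⬝ᵥ w)) ^ k) := by
  rcases eq_or_ne w 0 with rfl | hw
  · simpa using one_le_pow₀ hD
  obtain ⟨u, hu, hwu⟩ := exists_sqrt_smul_eq hw
  have ht : 0 ≤ w ⬝ᵥ w := by simpa using dotProduct_star_self_nonneg w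
  have hquad (x : κ → ℝ) :
      -(w ⬝ᵥ wishart B x *ᵥ w) = -(w ⬝ᵥ w) * (u ⬝ᵥ wishart B x *ᵥ u) := by
    nth_rw 1 2 [hwu]
    rw [mulVec_smul, dotProduct_smul, smul_dotProduct, smul_smul, Real.mul_self_sqrt ht,
      smul_eq_mul, neg_mul]
  have hQ : Measurable fun x => u ⬝ᵥ wishart B x *ᵥ u := by
    have := continuous_wishart B
    exact Continuous.measurable (by fun_prop)
  have hQ0 (x : κ → ℝ) : 0 ≤ u ⬝ᵥ wishart B x *ᵥ u := by
    simpa using (posSemidef_wishart B x).dotProduct_mulVec_nonneg u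
  simp only [hquad]
  rw [← ofReal_integral_eq_lintegral_ofReal (integrable_exp_neg_mul hQ hQ0 ht)
    (ae_of_all _ fun x => (Real.exp_pos _).le)]
  exact ENNReal.ofReal_le_ofReal (hmgf u hu _ ht)

theorem exists_lintegral_inv_sqrt_det_wishart_le {m : Type} [Fintype m] [DecidableEq m]
    {c : ℝ} (hc : 0 < c) (C : ℝ) :
    ∃ δ > (0 : ℝ≥0∞), ∃ R : ℝ≥0, ∀ {κ : Type} {ι : Type*} [Fintype κ] [Fintype ι]
      (B : (κ → ℝ) →ₗ[ℝ] Matrix ι m ℝ),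
      (∀ u, u ⬝ᵥ u = 1 → gaussPi κ {x | u ⬝ᵥ wishart B x *ᵥ u ≤ c} ≤ δ) →
      (∀ u, u ⬝ᵥ u = 1 → gaussPi κ {x | C ≤ u ⬝ᵥ wishart B x *ᵥ u} ≤ 1 / 2) →
      ∫⁻ x, (ENNReal.ofReal √(wishart B x).det)⁻¹ ∂gaussPi κ ≤ R := by
  obtain ⟨T, hT, δ, hδ, hmgf⟩ := exists_mgf_neg_le_div_pow hc C (Fintype.card m)
  refine ⟨ENNReal.ofReal δ, ENNReal.ofReal_pos.mpr hδ,
    ((√2 * (1 + T) * Real.pi) ^ Fintype.card m).toNNReal, fun {κ ι _ _} B hsmall hlarge => ?_⟩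
  refine lintegral_inv_sqrt_det_le (measurable_wishart B) (posSemidef_wishart B) (by positivity)
    (lintegral_exp_neg_dotProduct_wishart_mulVec_le B (by linarith) fun u hu => ?_)
  obtain ⟨S, hS, hBS⟩ := exists_posSemidef_dotProduct_wishart_mulVec_eq B u
  have hsmall_u := hsmall u hu
  have hlarge_u := hlarge u hu
  simp only [hBS] at hsmall_u hlarge_u ⊢
  exact hmgf hS hsmall_u hlarge_u

theorem TendstoInProb.posSemidef_of_wishart {α : Type*} {κ : α → Type} {ι : α → Type*} {m : Type*}
    [∀ n, Fintype (κ n)] [∀ n, Fintype (ι n)] [Finite m] {l : Filter α} [l.NeBot]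
    {B : ∀ n, (κ n → ℝ) →ₗ[ℝ] Matrix (ι n) m ℝ} {Sig : Matrix m m ℝ}
    (hB : TendstoInProb (fun n => gaussPi (κ n)) (fun n => wishart (B n)) l Sig) :
    Sig.PosSemidef :=
  hB.mem_of_isClosed (isClosed_setOf_posSemidef m) fun n => posSemidef_wishart (B n)

section InvSqrtDetWishart

variable {α : Type*} {κ : α → Type} {ι : α → Type*} {m : Type} [∀ n, Fintype (κ n)]
  [∀ n, Fintype (ι n)] [Fintype m] [DecidableEq m] {l : Filter α} [l.NeBot]
  {B : ∀ n, (κ n → ℝ) →ₗ[ℝ] Matrix (ι n) m ℝ} {Sig : Matrix m m ℝ}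

theorem TendstoInProb.exists_eventually_lintegral_inv_sqrt_det_wishart_le
    (hB : TendstoInProb (fun n => gaussPi (κ n)) (fun n => wishart (B n)) l Sig)
    (hSig : IsUnit Sig.det) : ∃ R : ℝ≥0, ∀ᶠ n in l,
      ∫⁻ x, (ENNReal.ofReal √(wishart (B n) x).det)⁻¹ ∂gaussPi (κ n) ≤ R := by
  have hpos : Sig.PosDef :=
    hB.posSemidef_of_wishart.posDef_iff_isUnit.mpr ((isUnit_iff_isUnit_det Sig).mpr hSig)
  obtain ⟨c, hc, C, hU⟩ := exists_eventually_forall_lt_dotProduct_mulVec_lt hpos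
  obtain ⟨δ, hδ, R, hR⟩ := exists_lintegral_inv_sqrt_det_wishart_le (m := m) hc C
  refine ⟨R, ?_⟩
  filter_upwards [hB.eventually_measure_le hU hδ,
    hB.eventually_measure_le hU (δ := 1 / 2) (by simp)] with n hsmall hlarge
  refine hR (B n) (fun u hu => (measure_mono fun x hx hxU => ?_).trans hsmall)
    fun u hu => (measure_mono fun x hx hxU => ?_).trans hlarge
  · exact (hxU u hu).1.not_ge hx
  · exact (hxU u hu).2.not_ge hx

end InvSqrtDetWishart

section RepeatBlock

variable {κ : Type} {ι m : Type*} (B : (κ → ℝ) →ₗ[ℝ] Matrix ι m ℝ) (k : ℕ)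

/-- The Gaussian matrix consisting of `k` identical diagonal blocks `B`. The `2 * q`-fold
repetition turns the half moment of its Wishart determinant into the `q`-th moment of that of
`B`. -/
def repeatBlock : (κ → ℝ) →ₗ[ℝ] Matrix (ι × Fin k) (m × Fin k) ℝ where
  toFun x := blockDiagonal fun _ => B x
  map_add' x y := by
    rw [map_add]
    exact blockDiagonal_add _ _
  map_smul' a x := by
    rw [map_smul]
    exact blockDiagonal_smul a _

variable [Fintype ι]

theorem wishart_repeatBlock (x : κ → ℝ) :
    wishart (repeatBlock B k) x = blockDiagonal fun _ => wishart B x := by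
  simp only [wishart, repeatBlock, LinearMap.coe_mk, AddHom.coe_mk, ← blockDiagonal_transpose,
    blockDiagonal_mul]

theorem sqrt_det_wishart_repeatBlock [Fintype m] [DecidableEq m] (q : ℕ) (x : κ → ℝ) :
    √(wishart (repeatBlock B (2 * q)) x).det = (wishart B x).det ^ q := by
  rw [wishart_repeatBlock, det_blockDiagonal, Finset.prod_const, Finset.card_univ,
    Fintype.card_fin, mul_comm, pow_mul,
    Real.sqrt_sq (pow_nonneg (posSemidef_wishart B x).det_nonneg q)]

end RepeatBlock

section WishartMoments

variable {α : Type*} {κ : α → Type} {ι : α → Type*} {m : Type} [∀ n, Fintype (κ n)]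
  [∀ n, Fintype (ι n)] [Fintype m] {l : Filter α}
  {B : ∀ n, (κ n → ℝ) →ₗ[ℝ] Matrix (ι n) m ℝ} {Sig : Matrix m m ℝ}

theorem TendstoInProb.exists_eventually_lintegral_one_add_trace_wishart_pow_le
    (hB : TendstoInProb (fun n => gaussPi (κ n)) (fun n => wishart (B n)) l Sig) (N : ℕ) :
    ∃ R : ℝ≥0, ∀ᶠ n in l,
      ∫⁻ x, ENNReal.ofReal ((1 + (wishart (B n) x).trace) ^ N) ∂gaussPi (κ n) ≤ R := by
  obtain ⟨R, hR⟩ := exists_lintegral_one_add_pow_le (Sig.trace + 1) N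
  have htrace : TendstoInProb (fun n => gaussPi (κ n)) (fun n x => (wishart (B n) x).trace) l
      Sig.trace := hB.comp (Continuous.continuousAt (by fun_prop))
  refine ⟨R, ?_⟩
  filter_upwards [htrace.eventually_measure_le (Iio_mem_nhds (lt_add_one _)) (δ := 1 / 2)
    (by simp)] with n hn
  obtain ⟨S, hS, hBS⟩ := exists_posSemidef_trace_wishart_eq (B n)
  simp only [hBS, Set.mem_Iio, not_lt] at hn ⊢
  exact hR hS hn

variable [DecidableEq m] [l.NeBot]

theorem TendstoInProb.exists_eventually_lintegral_inv_det_wishart_pow_le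
    (hB : TendstoInProb (fun n => gaussPi (κ n)) (fun n => wishart (B n)) l Sig)
    (hSig : IsUnit Sig.det) (q : ℕ) : ∃ R : ℝ≥0, ∀ᶠ n in l,
      ∫⁻ x, (ENNReal.ofReal (wishart (B n) x).det ^ q)⁻¹ ∂gaussPi (κ n) ≤ R := by
  have hcont : Continuous fun M : Matrix m m ℝ => blockDiagonal fun _ : Fin (2 * q) => M :=
    Continuous.matrix_blockDiagonal (by fun_prop)
  have hblock : TendstoInProb (fun n => gaussPi (κ n))
      (fun n => wishart (repeatBlock (B n) (2 * q))) l (blockDiagonal fun _ => Sig) := by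
    simpa only [← wishart_repeatBlock] using! hB.comp hcont.continuousAt
  have hunit : IsUnit (blockDiagonal fun _ : Fin (2 * q) => Sig).det := by
    rw [det_blockDiagonal, Finset.prod_const]
    exact hSig.pow _
  obtain ⟨R, hR⟩ := hblock.exists_eventually_lintegral_inv_sqrt_det_wishart_le hunit
  refine ⟨R, hR.mono fun n hn => ?_⟩
  simpa only [sqrt_det_wishart_repeatBlock,
    ENNReal.ofReal_pow (posSemidef_wishart (B n) _).det_nonneg] using hn

end WishartMoments

section PosSemidef

variable {m : Type*} [Fintype m] {M : Matrix m m ℝ}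

theorem abs_apply_le_trace_of_posSemidef (hM : M.PosSemidef) (i j : m) : |M i j| ≤ M.trace := by
  classical
  have hdiag (a : m) : M a a ≤ M.trace :=
    Finset.single_le_sum (f := fun b => M b b) (fun b _ => hM.diag_nonneg) (Finset.mem_univ a)
  have hsymm : M j i = M i j := by simpa using hM.1.apply i j
  have hadd := hM.dotProduct_mulVec_nonneg (Pi.single i 1 + Pi.single j 1)
  have hsub := hM.dotProduct_mulVec_nonneg (Pi.single i 1 - Pi.single j 1)
  simp only [star_trivial, mulVec_add, mulVec_sub, mulVec_single_one, add_dotProduct,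
    sub_dotProduct, single_one_dotProduct, Pi.add_apply, Pi.sub_apply, col_apply, hsymm]
    at hadd hsub
  rw [abs_le]
  constructor <;> linarith [hdiag i, hdiag j]

variable [DecidableEq m]

theorem abs_adjugate_apply_le_of_posSemidef (hM : M.PosSemidef) (i j : m) :
    |M.adjugate i j| ≤ (Fintype.card m).factorial * (1 + M.trace) ^ Fintype.card m := by
  have htrace : 0 ≤ M.trace := hM.trace_nonneg
  rw [adjugate_apply, ← nsmul_eq_mul]
  refine det_le (abv := AbsoluteValue.abs) fun a b => ?_
  rw [AbsoluteValue.abs_apply, updateRow_apply]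
  split_ifs
  · rw [Pi.single_apply]
    split_ifs
    · rw [abs_one]
      linarith
    · rw [abs_zero]
      linarith
  · linarith [abs_apply_le_trace_of_posSemidef hM a b]

theorem abs_inv_apply_le_of_posSemidef (hM : M.PosSemidef) (i j : m) :
    |M⁻¹ i j| ≤
      (Fintype.card m).factorial * ((1 + M.trace) ^ Fintype.card m * M.det⁻¹) := by
  rw [inv_def, Ring.inverse_eq_inv', Matrix.smul_apply, smul_eq_mul, abs_mul,
    abs_of_nonneg (inv_nonneg.mpr hM.det_nonneg), mul_comm, ← mul_assoc]
  gcongr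
  · exact inv_nonneg.mpr hM.det_nonneg
  · exact abs_adjugate_apply_le_of_posSemidef hM i j

theorem abs_inv_apply_pow_le_of_posSemidef (hM : M.PosSemidef) (i j : m) (r : ℕ) :
    |M⁻¹ i j| ^ r ≤ (Fintype.card m).factorial ^ r *
      ((1 + M.trace) ^ (2 * (Fintype.card m * r)) + M.det⁻¹ ^ (2 * r)) := by
  have htrace : 0 ≤ M.trace := hM.trace_nonneg
  have hdet : 0 ≤ M.det⁻¹ := inv_nonneg.mpr hM.det_nonneg
  have hx : 0 ≤ (1 + M.trace) ^ (Fintype.card m * r) := by positivity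
  have hy : 0 ≤ M.det⁻¹ ^ r := by positivity
  calc |M⁻¹ i j| ^ r
      ≤ ((Fintype.card m).factorial * ((1 + M.trace) ^ Fintype.card m * M.det⁻¹)) ^ r := by
        gcongr
        exact abs_inv_apply_le_of_posSemidef hM i j
    _ = (Fintype.card m).factorial ^ r *
          ((1 + M.trace) ^ (Fintype.card m * r) * M.det⁻¹ ^ r) := by
        rw [mul_pow, mul_pow, pow_mul]
    _ ≤ (Fintype.card m).factorial ^ r *
          ((1 + M.trace) ^ (2 * (Fintype.card m * r)) + M.det⁻¹ ^ (2 * r)) := by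
        rw [mul_comm 2, mul_comm 2, pow_mul _ _ 2, pow_mul _ _ 2]
        gcongr
        nlinarith [two_mul_le_add_sq ((1 + M.trace) ^ (Fintype.card m * r)) (M.det⁻¹ ^ r),
          mul_nonneg hx hy]

theorem ofReal_abs_inv_apply_pow_le_of_posSemidef (hM : M.PosSemidef) (i j : m) (r : ℕ) :
    ENNReal.ofReal (|M⁻¹ i j| ^ r) ≤ ENNReal.ofReal ((Fintype.card m).factorial ^ r) *
      (ENNReal.ofReal ((1 + M.trace) ^ (2 * (Fintype.card m * r))) +
        (ENNReal.ofReal M.det ^ (2 * r))⁻¹) := by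
  have htrace : 0 ≤ M.trace := hM.trace_nonneg
  have hdet : 0 ≤ M.det⁻¹ := inv_nonneg.mpr hM.det_nonneg
  refine (ENNReal.ofReal_le_ofReal (abs_inv_apply_pow_le_of_posSemidef hM i j r)).trans ?_
  rw [ENNReal.ofReal_mul (by positivity), ENNReal.ofReal_add (by positivity) (by positivity),
    ENNReal.ofReal_pow hdet, ENNReal.inv_pow]
  gcongr
  exact ENNReal.ofReal_inv_le

end PosSemidef

theorem lintegral_abs_sub_pow_le {Ω : Type*} [MeasurableSpace Ω] {P : Measure Ω}
    [IsProbabilityMeasure P] (f : Ω → ℝ) (a : ℝ) (r : ℕ) :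
    ∫⁻ ω, ENNReal.ofReal (|f ω - a| ^ r) ∂P ≤
      2 ^ (r - 1) * (∫⁻ ω, ENNReal.ofReal (|f ω| ^ r) ∂P + ENNReal.ofReal (|a| ^ r)) := by
  have hpoint (ω : Ω) : ENNReal.ofReal (|f ω - a| ^ r) ≤
      2 ^ (r - 1) * (ENNReal.ofReal (|f ω| ^ r) + ENNReal.ofReal (|a| ^ r)) := by
    rw [← ENNReal.ofReal_add (by positivity) (by positivity), ← ENNReal.ofReal_ofNat,
      ← ENNReal.ofReal_pow zero_le_two, ← ENNReal.ofReal_mul (by positivity)]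
    exact ENNReal.ofReal_le_ofReal <| (pow_le_pow_left₀ (abs_nonneg _) (abs_sub _ _) _).trans
      (add_pow_le (abs_nonneg _) (abs_nonneg _) _)
  refine (lintegral_mono hpoint).trans_eq ?_
  rw [lintegral_const_mul' _ _ (by simp), lintegral_add_right _ measurable_const,
    lintegral_const, measure_univ, mul_one]

theorem measurable_inv_wishart {κ : Type} {ι m : Type*} [Finite κ] [Fintype ι]
    [Fintype m] [DecidableEq m] (B : (κ → ℝ) →ₗ[ℝ] Matrix ι m ℝ) (i j : m) :
    Measurable fun x => (wishart B x)⁻¹ i j := by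
  have hB := continuous_wishart B
  have hdet :
    Measurable fun x => (wishart B x).det := hB.matrix_det.measurable
  have hadj :
    Measurable fun x => (wishart B x).adjugate i j :=
    (hB.matrix_adjugate.matrix_elem i j).measurable
  simp only [inv_def, Ring.inverse_eq_inv', Matrix.smul_apply, smul_eq_mul]
  exact hdet.inv.mul hadj

theorem measurable_abs_inv_wishart_sub_pow {κ : Type} {ι m : Type*} [Finite κ]
    [Fintype ι] [Fintype m] [DecidableEq m] (B : (κ → ℝ) →ₗ[ℝ] Matrix ι m ℝ) (i j : m) (a : ℝ)
    (q : ℕ) :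
    Measurable fun x => |(wishart B x)⁻¹ i j - a| ^ q :=
  ((measurable_inv_wishart B i j).sub_const a).abs.pow_const q

section Inverse

variable {α : Type*} {κ : α → Type} {ι : α → Type*} {m : Type} [∀ n, Fintype (κ n)]
  [∀ n, Fintype (ι n)] [Fintype m] [DecidableEq m] {l : Filter α} [l.NeBot]
  {B : ∀ n, (κ n → ℝ) →ₗ[ℝ] Matrix (ι n) m ℝ} {Sig : Matrix m m ℝ}

theorem TendstoInProb.exists_eventually_lintegral_abs_inv_wishart_pow_le
    (hB : TendstoInProb (fun n => gaussPi (κ n)) (fun n => wishart (B n)) l Sig)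
    (hSig : IsUnit Sig.det) (r : ℕ) : ∃ R : ℝ≥0, ∀ i j : m, ∀ᶠ n in l,
      ∫⁻ x, ENNReal.ofReal (|(wishart (B n) x)⁻¹ i j| ^ r) ∂gaussPi (κ n) ≤ R := by
  obtain ⟨R₁, hR₁⟩ := hB.exists_eventually_lintegral_one_add_trace_wishart_pow_le
    (2 * (Fintype.card m * r))
  obtain ⟨R₂, hR₂⟩ := hB.exists_eventually_lintegral_inv_det_wishart_pow_le hSig (2 * r)
  refine ⟨((Fintype.card m).factorial ^ r : ℝ).toNNReal * (R₁ + R₂), fun i j => ?_⟩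
  filter_upwards [hR₁, hR₂] with n hn₁ hn₂
  have htrace := ((continuous_wishart (B n)).matrix_trace).measurable
  calc ∫⁻ x, ENNReal.ofReal (|(wishart (B n) x)⁻¹ i j| ^ r) ∂gaussPi (κ n)
      ≤ ∫⁻ x, ENNReal.ofReal ((Fintype.card m).factorial ^ r) *
          (ENNReal.ofReal ((1 + (wishart (B n) x).trace) ^ (2 * (Fintype.card m * r))) +
            (ENNReal.ofReal (wishart (B n) x).det ^ (2 * r))⁻¹) ∂gaussPi (κ n) :=
        lintegral_mono fun x =>
          ofReal_abs_inv_apply_pow_le_of_posSemidef (posSemidef_wishart (B n) x) i j r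
    _ = ENNReal.ofReal ((Fintype.card m).factorial ^ r) *
          (∫⁻ x, ENNReal.ofReal ((1 + (wishart (B n) x).trace) ^ (2 * (Fintype.card m * r)))
            ∂gaussPi (κ n) +
          ∫⁻ x, (ENNReal.ofReal (wishart (B n) x).det ^ (2 * r))⁻¹ ∂gaussPi (κ n)) := by
        rw [lintegral_const_mul' _ _ ENNReal.ofReal_ne_top, lintegral_add_left (by fun_prop)]
    _ ≤ ENNReal.ofReal ((Fintype.card m).factorial ^ r) * (R₁ + R₂) := by gcongr

theorem TendstoInProb.tendsto_lintegral_abs_inv_wishart_sub_pow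
    (hB : TendstoInProb (fun n => gaussPi (κ n)) (fun n => wishart (B n)) l Sig)
    (hSig : IsUnit Sig.det) {q : ℕ} (hq : q ≠ 0) (i j : m) :
    Tendsto (fun n => ∫⁻ x, ENNReal.ofReal (|(wishart (B n) x)⁻¹ i j - Sig⁻¹ i j| ^ q)
      ∂gaussPi (κ n)) l (𝓝 0) := by
  have hinv : ContinuousAt (fun M : Matrix m m ℝ => M⁻¹) Sig :=
    continuousAt_matrix_inv Sig (NormedRing.inverse_continuousAt hSig.unit)
  have hcont : ContinuousAt
      (fun M : Matrix m m ℝ => ENNReal.ofReal (|M⁻¹ i j - Sig⁻¹ i j| ^ q)) Sig := by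
    have helem := ((continuous_id.matrix_elem i j).continuousAt (x := Sig⁻¹)).comp hinv
    exact ENNReal.continuous_ofReal.continuousAt.comp ((helem.sub_const _).abs.pow q)
  have hlim := hB.comp hcont
  rw [sub_self, abs_zero, zero_pow hq, ENNReal.ofReal_zero] at hlim
  obtain ⟨R, hR⟩ := hB.exists_eventually_lintegral_abs_inv_wishart_pow_le hSig (q * 2)
  refine hlim.tendsto_lintegral (R := 2 ^ (q * 2 - 1) * (R + (|Sig⁻¹ i j| ^ (q * 2)).toNNReal))
    (fun n => (measurable_abs_inv_wishart_sub_pow (B n) i j _ q).ennreal_ofReal)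
    ((hR i j).mono fun n hn => ?_)
  simp only [← ENNReal.ofReal_pow (pow_nonneg (abs_nonneg _) q), ← pow_mul]
  refine (lintegral_abs_sub_pow_le _ _ _).trans ?_
  push_cast
  gcongr
  exact le_rfl

theorem TendstoInProb.tendsto_integral_abs_inv_wishart_sub_pow
    (hB : TendstoInProb (fun n => gaussPi (κ n)) (fun n => wishart (B n)) l Sig)
    (hSig : IsUnit Sig.det) {q : ℕ} (hq : q ≠ 0) (i j : m) :
    Tendsto (fun n => ∫ x, |(wishart (B n) x)⁻¹ i j - Sig⁻¹ i j| ^ q ∂gaussPi (κ n)) l (𝓝 0) := by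
  have hlim := (ENNReal.tendsto_toReal ENNReal.zero_ne_top).comp
    (hB.tendsto_lintegral_abs_inv_wishart_sub_pow hSig hq i j)
  refine hlim.congr fun n => (integral_eq_lintegral_of_nonneg_ae ?_ ?_).symm
  · exact ae_of_all _ fun x => by positivity
  · exact (measurable_abs_inv_wishart_sub_pow (B n) i j _ q).aestronglyMeasurable

end Inverse

/-- The matrix with entries `⟪v i j, x⟫`. At a standard Gaussian vector `x` its entries are centered
and jointly Gaussian. -/
def linearFormMatrix {κ : Type} {ι m : Type*} [Fintype κ] (v : ι → m → κ → ℝ) :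
    (κ → ℝ) →ₗ[ℝ] Matrix ι m ℝ where
  toFun x := Matrix.of fun i j => v i j ⬝ᵥ x
  map_add' x y := by
    ext i j
    exact dotProduct_add _ x y
  map_smul' a x := by
    ext i j
    exact dotProduct_smul a _ x

theorem wishart_inverse_control_general {α : Type*} {l : Filter α} [l.NeBot] {κ : α → Type}
    {ι : α → Type*} {m : Type} [∀ n, Fintype (κ n)] [∀ n, Fintype (ι n)] [Fintype m]
    [DecidableEq m] {B : ∀ n, (κ n → ℝ) →ₗ[ℝ] Matrix (ι n) m ℝ} {Sig : Matrix m m ℝ}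
    (hB : TendstoInProb (fun n => gaussPi (κ n)) (fun n => wishart (B n)) l Sig)
    (hSig : IsUnit Sig.det) :
    (∀ q : ℕ, ∃ C : ℝ, 0 < C ∧ ∀ᶠ n in l,
      ∫⁻ x, (ENNReal.ofReal (wishart (B n) x).det ^ q)⁻¹ ∂gaussPi (κ n) ≤ ENNReal.ofReal C) ∧
    ∀ q : ℕ, q ≠ 0 → ∀ i j : m,
      Tendsto (fun n => ∫ x, |(wishart (B n) x)⁻¹ i j - Sig⁻¹ i j| ^ q ∂gaussPi (κ n)) l
        (𝓝 0) := by
  refine ⟨fun q => ?_, fun q hq => hB.tendsto_integral_abs_inv_wishart_sub_pow hSig hq⟩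
  obtain ⟨R, hR⟩ := hB.exists_eventually_lintegral_inv_det_wishart_pow_le hSig q
  refine ⟨R + 1, by positivity, hR.mono fun n hn => hn.trans ?_⟩
  rw [← ENNReal.ofReal_coe_nnreal]
  exact ENNReal.ofReal_le_ofReal (le_add_of_nonneg_right zero_le_one)

/-- Control of the inverse of strongly correlated Wishart-type matrices:
if `A_n = B_nᵀ B_n` with jointly Gaussian entries `B_n(i,j) = ⟨v_{i,j}, N⟩` and `A_n → Σ` in
probability with `Σ` invertible, then the negative moments of `det A_n` are eventually bounded,
and `A_n⁻¹ → Σ⁻¹` in every `L^q`. -/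
theorem wishart_inverse_control (p : ℕ) (hp : 1 ≤ p) (K : ℕ → ℕ)
    (v : (n : ℕ) → Fin n → Fin p → Fin (K n) → ℝ)
    (A : (n : ℕ) → (Fin (K n) → ℝ) → Matrix (Fin p) (Fin p) ℝ)
    (hA : ∀ n x, A n x = Matrix.of fun a b =>
      ∑ i : Fin n, (∑ k, v n i a k * x k) * (∑ k, v n i b k * x k))
    (Sig : Matrix (Fin p) (Fin p) ℝ) (hSig : IsUnit Sig.det)
    (hprob : ∀ (a b : Fin p), ∀ ε > (0:ℝ),
      Tendsto (fun n => gaussPi (Fin (K n)) {x | ε ≤ |A n x a b - Sig a b|}) atTop (𝓝 0)) :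
    (∀ q : ℕ, 1 ≤ q → ∃ (N : ℕ) (C : ℝ), 0 < C ∧ ∀ n ≥ N,
      ∫⁻ x, (ENNReal.ofReal ((A n x).det) ^ q)⁻¹ ∂gaussPi (Fin (K n))
        ≤ ENNReal.ofReal C) ∧
    (∀ q : ℕ, 1 ≤ q → ∀ a b : Fin p,
      Tendsto
        (fun n => ∫ x, |(A n x)⁻¹ a b - Sig⁻¹ a b| ^ q ∂gaussPi (Fin (K n)))
        atTop (𝓝 0)) := by
  obtain rfl : A = fun n => wishart (linearFormMatrix (v n)) := funext₂ hA
  have hB : TendstoInProb _ (fun n => wishart (linearFormMatrix (v n))) atTop Sig :=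
    tendstoInProb_pi fun a => tendstoInProb_pi fun b => tendstoInProb_of_forall_le_dist (hprob a b)
  obtain ⟨hdet, hinv⟩ := wishart_inverse_control_general hB hSig
  refine ⟨fun q _ => ?_, fun q hq => hinv q (Nat.one_le_iff_ne_zero.mp hq)⟩
  obtain ⟨C, hC, hbound⟩ := hdet q
  obtain ⟨N, hN⟩ := eventually_atTop.mp hbound
  exact ⟨N, C, hC, hN⟩
end

section
/- Let m, q, k ∈ ℕ with 1 ≤ k ≤ m. There exist q' ∈ ℕ and C > 0 such that the following holds for every K ∈ ℕ and every polynomial P of total degree at most m in K variables with ∫ P² dγ_K = 1. Let N ~ γ_K and let (G_{j,i})_{1≤j≤k, 1≤i≤K} be independent standard Gaussians, independent of N; set F := P(N) and ♯^k[F] := Σ_{i_1,…,i_k=1}^K ∂_{i_1}⋯∂_{i_k} P(N) · G_{1,i_1} ⋯ G_{k,i_k}, a polynomial random variable in the K + kK Gaussian coordinates (N, G). Then E[ Γ[F,F]^{−q} ] ≤ C · E[ Γ[♯^kF, ♯^kF]^{−q'} ], where Γ[F,F] := Σ_{i=1}^K (∂_i P(N))² and Γ[♯^kF, ♯^kF]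 is the sum of the squared partial derivatives of ♯^k[F] with respect to all K + kK Gaussian coordinates. -/
open MeasureTheory ProbabilityTheory MvPolynomial Filter Topology
open scoped ENNReal NNReal

/-- Iterated partial derivative of a multivariate polynomial along a tuple of directions. -/
noncomputable def pderivMulti {K k : ℕ} (i : Fin k → Fin K) (P : MvPolynomial (Fin K) ℝ) :
    MvPolynomial (Fin K) ℝ :=
  (List.ofFn i).foldr (fun idx Q => pderiv idx Q) P

/-- The `k`-times iterated sharp operator `♯^k[F]`, viewed as a polynomial in the original Gaussian
coordinates (`Sum.inl`) and the fresh independent Gaussian coordinates `G_{j,i}` (`Sum.inr`):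
`♯^k[F] = ∑_{i₁,…,i_k} ∂_{i₁}⋯∂_{i_k} P · G_{1,i₁} ⋯ G_{k,i_k}`. -/
noncomputable def sharpPoly {K : ℕ} (k : ℕ) (P : MvPolynomial (Fin K) ℝ) :
    MvPolynomial (Fin K ⊕ Fin k × Fin K) ℝ :=
  ∑ i : Fin k → Fin K,
    rename Sum.inl (pderivMulti i P) * ∏ j, MvPolynomial.X (Sum.inr (j, i j))

/-!
Conditionally on `N`, the variable `♯[F] = ∑ᵢ ∂ᵢP(N) Gᵢ` is a centred Gaussian of variance
`Γ[F, F]`, so the Laplace transform of `Γ[F, F]` is a characteristic function: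
`E[exp(-ξ² Γ[F, F] / 2)] = E[cos(ξ ♯[F])]`. For a polynomial `H`, integrating
`E[cos(ξ H) p Rʲ]` by parts with the Ornstein–Uhlenbeck generator against the regularised inverse
`R = ε / (Γ[H, H] + ε)` gains a power of `R` at each step. At `ξ = ε⁻²` no power of `ε⁻¹` is lost,
because every constant is bounded uniformly in the number of variables (on polynomials of bounded
degree all Gaussian norms are equivalent), and hence
`|E[cos(ε⁻² H)]| ≤ c E[R²ˢ]^{1/2} ≤ c εˢ E[Γ[H, H]⁻²ˢ]^{1/2}`. With `H = ♯[F]`, summing over the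
scales `ε = 2⁻ⁿ` bounds `E[Γ[F, F]^{-q}]` by negative moments of `Γ[♯F, ♯F]`, and the theorem
follows by applying this `k` times.
-/

/-! ### Partial derivatives of polynomials -/

section PDeriv

variable {σ τ R : Type*}

lemma pderiv_pderiv_comm [CommSemiring R] (i j : σ) (P : MvPolynomial σ R) :
    pderiv i (pderiv j P) = pderiv j (pderiv i P) := by
  have hX (k l n : σ) : pderiv k (pderiv l (X n : MvPolynomial σ R)) = 0 := by
    obtain rfl | h := eq_or_ne n l
    · simp
    · simp [pderiv_X_of_ne h]
  induction P using MvPolynomial.induction_on with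
  | C a => simp
  | add p q hp hq => simp [hp, hq]
  | mul_X p n hp => simp only [pderiv_mul, map_add, hp, hX]; ring

lemma totalDegree_pderiv_le [CommSemiring R] (i : σ) (P : MvPolynomial σ R) :
    (pderiv i P).totalDegree ≤ P.totalDegree - 1 := by
  refine Finset.sup_le fun u hu => ?_
  rw [mem_support_iff, coeff_pderiv] at hu
  have hdeg := le_totalDegree (mem_support_iff.mpr (left_ne_zero_of_mul hu))
  rw [Finsupp.sum_add_index' (fun _ => rfl) (fun _ _ _ => rfl),
    Finsupp.sum_single_index rfl] at hdeg
  exact Nat.le_sub_one_of_lt hdeg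

lemma pderiv_eq_zero_of_totalDegree_eq_zero [CommSemiring R] (i : σ) {P : MvPolynomial σ R}
    (hP : P.totalDegree = 0) : pderiv i P = 0 := by
  rw [totalDegree_eq_zero_iff_eq_C.mp hP, pderiv_C]

lemma pderiv_rename_of_notMem_range [CommSemiring R] {f : σ → τ} {t : τ} (ht : t ∉ Set.range f)
    (P : MvPolynomial σ R) : pderiv t (rename f P) = 0 := by
  classical
  refine pderiv_eq_zero_of_notMem_vars fun h => ht ?_
  obtain ⟨s, -, hs⟩ := Finset.mem_image.mp (vars_rename f P h)
  exact ⟨s, hs⟩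

lemma hasDerivAt_eval_update {𝕜 : Type*} [NontriviallyNormedField 𝕜] [DecidableEq σ]
    (P : MvPolynomial σ 𝕜) (x : σ → 𝕜) (i : σ) (t : 𝕜) :
    HasDerivAt (fun t => eval (Function.update x i t) P)
      (eval (Function.update x i t) (pderiv i P)) t := by
  induction P using MvPolynomial.induction_on with
  | C a => simpa using hasDerivAt_const t a
  | add p q hp hq => simp only [map_add]; exact hp.fun_add hq
  | mul_X p j hp =>
    have hX : HasDerivAt (fun t => eval (Function.update x i t) (X j : MvPolynomial σ 𝕜))
        (eval (Function.update x i t) (pderiv i (X j))) t := by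
      obtain rfl | hji := eq_or_ne j i
      · simpa using hasDerivAt_id' t
      · simpa [pderiv_X_of_ne hji, hji] using hasDerivAt_const t (x j)
    simpa only [pderiv_mul, map_add, map_mul] using hp.fun_mul hX

end PDeriv

/-! ### Gaussian integration by parts -/

section IntegrationByParts

lemma measurePreserving_update {ι : Type*} [Fintype ι] [DecidableEq ι] {α : ι → Type*}
    [∀ i, MeasurableSpace (α i)] (μ : ∀ i, Measure (α i)) [∀ i, IsProbabilityMeasure (μ i)]
    (i : ι) :
    MeasurePreserving (fun z : (∀ j, α j) × α i => Function.update z.1 i z.2)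
      ((Measure.pi μ).prod (μ i)) (Measure.pi μ) := by
  have hm : Measurable fun z : (∀ j, α j) × α i => Function.update z.1 i z.2 :=
    measurable_update'
  refine ⟨hm, (Measure.pi_eq fun s hs => ?_).symm⟩
  have hpre : (fun z : (∀ j, α j) × α i => Function.update z.1 i z.2) ⁻¹' Set.univ.pi s
      = Set.univ.pi (Function.update s i Set.univ) ×ˢ s i := by
    ext z
    simp only [Set.mem_preimage, Set.mem_univ_pi, Set.mem_prod,
      Function.forall_update_iff s fun j (t : Set (α j)) => z.1 j ∈ t,
      Function.forall_update_iff z.1 fun j y => y ∈ s j, Set.mem_univ, true_and, and_comm]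
  rw [Measure.map_apply hm (MeasurableSet.univ_pi hs), hpre, Measure.prod_prod, Measure.pi_pi,
    ← Finset.mul_prod_erase _ _ (Finset.mem_univ i),
    ← Finset.mul_prod_erase _ (fun j => μ j (s j)) (Finset.mem_univ i), Function.update_self,
    measure_univ, one_mul, mul_comm]
  congr 1
  exact Finset.prod_congr rfl fun j hj => by
    rw [Function.update_of_ne (Finset.ne_of_mem_erase hj)]

lemma hasDerivAt_gaussianPDFReal (m : ℝ) (v : ℝ≥0) (t : ℝ) :
    HasDerivAt (gaussianPDFReal m v) (-((t - m) / v) * gaussianPDFReal m v t) t := by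
  have hexp : HasDerivAt (fun x : ℝ => -(x - m) ^ 2 / (2 * v)) (-((t - m) / v)) t :=
    ((((hasDerivAt_id' t).sub_const m).fun_pow 2).fun_neg.div_const _).congr_deriv (by
      rw [neg_div, mul_one, pow_one, Nat.cast_ofNat, mul_div_mul_left _ _ two_ne_zero])
  exact (hexp.exp.const_mul (√(2 * Real.pi * v))⁻¹).congr_deriv (by
    rw [gaussianPDFReal]; ring)

lemma integrable_gaussianReal_iff {E : Type*} [NormedAddCommGroup E] [NormedSpace ℝ E]
    {m : ℝ} {v : ℝ≥0} (hv : v ≠ 0) (f : ℝ → E) :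
    Integrable f (gaussianReal m v) ↔ Integrable fun t => gaussianPDFReal m v t • f t := by
  rw [gaussianReal_of_var_ne_zero _ hv, integrable_withDensity_iff_integrable_smul₀'
    (by fun_prop) (Eventually.of_forall fun _ => gaussianPDF_lt_top)]
  simp only [toReal_gaussianPDF]

lemma integral_deriv_gaussianReal {m : ℝ} {v : ℝ≥0} {f f' : ℝ → ℝ}
    (hd : ∀ t, HasDerivAt f (f' t) t) (hf : Integrable f (gaussianReal m v))
    (hf' : Integrable f' (gaussianReal m v))
    (hxf : Integrable (fun t => (t - m) * f t) (gaussianReal m v)) :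
    v * ∫ t, f' t ∂gaussianReal m v = ∫ t, (t - m) * f t ∂gaussianReal m v := by
  rcases eq_or_ne v 0 with rfl | hv
  · simp
  rw [integral_gaussianReal_eq_integral_smul hv, integral_gaussianReal_eq_integral_smul hv,
    ← integral_const_mul]
  rw [integrable_gaussianReal_iff hv] at hf hf' hxf
  have hv' : (v : ℝ) ≠ 0 := mod_cast hv
  have h := integral_eq_zero_of_hasDerivAt_of_integrable
    (fun t => (((hasDerivAt_gaussianPDFReal m v t).fun_mul (hd t)).const_mul (v : ℝ)).congr_deriv
      (show _ = v * (gaussianPDFReal m v t • f' t) - gaussianPDFReal m v t • ((t - m) * f t) by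
        simp only [smul_eq_mul]; field_simp; ring))
    ((hf'.const_mul _).sub hxf) (hf.const_mul _)
  rwa [integral_sub (hf'.const_mul _) hxf, sub_eq_zero] at h

variable {ι : Type} [Fintype ι]

instance : IsProbabilityMeasure (gaussPi ι) := by
  unfold gaussPi; infer_instance

lemma integral_deriv_gaussPi [DecidableEq ι] (i : ι) {f f' : (ι → ℝ) → ℝ}
    (hd : ∀ x t, HasDerivAt (fun t => f (Function.update x i t)) (f' (Function.update x i t)) t)
    (hf : Integrable f (gaussPi ι)) (hf' : Integrable f' (gaussPi ι))
    (hxf : Integrable (fun x => x i * f x) (gaussPi ι)) :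
    ∫ x, f' x ∂gaussPi ι = ∫ x, x i * f x ∂gaussPi ι := by
  have hmp : MeasurePreserving (fun z : (ι → ℝ) × ℝ => Function.update z.1 i z.2)
      ((gaussPi ι).prod (gaussianReal 0 1)) (gaussPi ι) :=
    measurePreserving_update (fun _ => gaussianReal 0 1) i
  have hint {g : (ι → ℝ) → ℝ} (hg : Integrable g (gaussPi ι)) :
      Integrable (fun z : (ι → ℝ) × ℝ => g (Function.update z.1 i z.2))
        ((gaussPi ι).prod (gaussianReal 0 1)) := hmp.integrable_comp_of_integrable hg
  have hfubini {g : (ι → ℝ) → ℝ} (hg : Integrable g (gaussPi ι)) :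
      ∫ x, g x ∂gaussPi ι
        = ∫ x, ∫ t, g (Function.update x i t) ∂gaussianReal 0 1 ∂gaussPi ι := by
    rw [← integral_prod _ (hint hg)]
    conv_lhs => rw [← hmp.map_eq]
    exact integral_map hmp.aemeasurable (by rw [hmp.map_eq]; exact hg.1)
  rw [hfubini hf', hfubini hxf]
  refine integral_congr_ae ?_
  filter_upwards [(hint hf).prod_right_ae, (hint hf').prod_right_ae,
    (hint hxf).prod_right_ae] with x h h' hx
  simpa using integral_deriv_gaussianReal (hd x) h h' (by simpa using hx)

lemma integrable_eval_gaussPi (P : MvPolynomial ι ℝ) :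
    Integrable (fun x => eval x P) (gaussPi ι) := by
  have hpow (n : ℕ) : Integrable (fun t : ℝ => t ^ n) (gaussianReal 0 1) := by
    rw [← integrable_norm_iff (by fun_prop)]
    simpa using (memLp_id_gaussianReal' (μ := 0) (v := 1) (n : ℝ≥0) (by simp)).integrable_norm_pow'
  induction P using MvPolynomial.induction_on' with
  | monomial u a =>
    simp only [eval_monomial, Finsupp.prod_fintype, pow_zero, implies_true]
    exact (Integrable.fintype_prod fun i => hpow (u i)).const_mul a
  | add p q hp hq => simp only [map_add]; exact hp.add hq

end IntegrationByParts

/-! ### The Ornstein–Uhlenbeck operator on polynomials -/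

section OrnsteinUhlenbeck

variable {ι : Type} [Fintype ι]

/-- The expectation of a polynomial in independent standard Gaussian variables, as a linear
form. -/
noncomputable def gaussExp : MvPolynomial ι ℝ →ₗ[ℝ] ℝ where
  toFun P := ∫ x, eval x P ∂gaussPi ι
  map_add' P Q := by
    simp only [map_add]
    exact integral_add (integrable_eval_gaussPi P) (integrable_eval_gaussPi Q)
  map_smul' c P := by simp [integral_const_mul]

/-- The carré du champ `Γ(P, Q) = ∑ᵢ ∂ᵢP ∂ᵢQ`, as a bilinear map; on the diagonal it is the
square field `sqField` (see `sqField_eq_eval_carreDuChamp`). -/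
noncomputable def carreDuChamp :
    MvPolynomial ι ℝ →ₗ[ℝ] MvPolynomial ι ℝ →ₗ[ℝ] MvPolynomial ι ℝ :=
  ∑ i, (LinearMap.mul ℝ (MvPolynomial ι ℝ)).compl₁₂
    (pderiv i : Derivation ℝ _ (MvPolynomial ι ℝ)) (pderiv i : Derivation ℝ _ (MvPolynomial ι ℝ))

/-- The Ornstein–Uhlenbeck operator `LP = ΔP - x · ∇P`, whose invariant measure is `gaussPi`. -/
noncomputable def ouGenerator : MvPolynomial ι ℝ →ₗ[ℝ] MvPolynomial ι ℝ where
  toFun P := ∑ i, (pderiv i (pderiv i P) - X i * pderiv i P)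
  map_add' P Q := by
    simp only [map_add, ← Finset.sum_add_distrib]
    exact Finset.sum_congr rfl fun i _ => by ring
  map_smul' c P := by simp [Finset.smul_sum, smul_sub]

lemma gaussExp_apply (P : MvPolynomial ι ℝ) : gaussExp P = ∫ x, eval x P ∂gaussPi ι := rfl

lemma gaussExp_C (c : ℝ) : gaussExp (C c : MvPolynomial ι ℝ) = c := by
  simp [gaussExp_apply]

lemma gaussExp_mono {P Q : MvPolynomial ι ℝ} (h : ∀ x, eval x P ≤ eval x Q) :
    gaussExp P ≤ gaussExp Q :=
  integral_mono (integrable_eval_gaussPi P) (integrable_eval_gaussPi Q) h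

lemma gaussExp_nonneg {P : MvPolynomial ι ℝ} (h : ∀ x, 0 ≤ eval x P) : 0 ≤ gaussExp P :=
  integral_nonneg h

lemma gaussExp_sq_nonneg (P : MvPolynomial ι ℝ) : 0 ≤ gaussExp (P ^ 2) :=
  gaussExp_nonneg fun x => by simpa using sq_nonneg _

lemma gaussExp_mul_sq_le (P Q : MvPolynomial ι ℝ) :
    gaussExp (P * Q) ^ 2 ≤ gaussExp (P ^ 2) * gaussExp (Q ^ 2) := by
  simpa [sq] using LinearMap.BilinForm.apply_sq_le_of_symm
    ((LinearMap.mul ℝ (MvPolynomial ι ℝ)).compr₂ gaussExp)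
    (fun P => by simpa [sq] using gaussExp_sq_nonneg P) ⟨fun P Q => by simp [mul_comm]⟩ P Q

lemma carreDuChamp_apply (P Q : MvPolynomial ι ℝ) :
    carreDuChamp P Q = ∑ i, pderiv i P * pderiv i Q := by
  simp [carreDuChamp, LinearMap.sum_apply]

lemma carreDuChamp_comm (P Q : MvPolynomial ι ℝ) : carreDuChamp P Q = carreDuChamp Q P := by
  simp [carreDuChamp_apply, mul_comm]

lemma carreDuChamp_self (P : MvPolynomial ι ℝ) : carreDuChamp P P = ∑ i, pderiv i P ^ 2 := by
  simp [carreDuChamp_apply, sq]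

lemma sqField_eq_eval_carreDuChamp (P : MvPolynomial ι ℝ) (x : ι → ℝ) :
    sqField P x = eval x (carreDuChamp P P) := by
  simp [sqField, carreDuChamp_self]

lemma sqField_nonneg (P : MvPolynomial ι ℝ) (x : ι → ℝ) : 0 ≤ sqField P x :=
  Finset.sum_nonneg fun _ _ => sq_nonneg _

lemma eval_carreDuChamp_self_nonneg (P : MvPolynomial ι ℝ) (x : ι → ℝ) :
    0 ≤ eval x (carreDuChamp P P) :=
  sqField_eq_eval_carreDuChamp P x ▸ sqField_nonneg P x

lemma gaussExp_carreDuChamp_self_nonneg (P : MvPolynomial ι ℝ) :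
    0 ≤ gaussExp (carreDuChamp P P) :=
  gaussExp_nonneg (eval_carreDuChamp_self_nonneg P)

lemma eval_carreDuChamp_sq_le (P Q : MvPolynomial ι ℝ) (x : ι → ℝ) :
    eval x (carreDuChamp P Q) ^ 2 ≤ eval x (carreDuChamp P P) * eval x (carreDuChamp Q Q) := by
  simp only [carreDuChamp_self, carreDuChamp_apply P Q, map_sum, map_mul, map_pow]
  exact Finset.sum_mul_sq_le_sq_mul_sq _ _ _

lemma ouGenerator_apply (P : MvPolynomial ι ℝ) :
    ouGenerator P = ∑ i, (pderiv i (pderiv i P) - X i * pderiv i P) := rfl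

lemma gaussExp_pderiv (i : ι) (P : MvPolynomial ι ℝ) :
    gaussExp (pderiv i P) = gaussExp (X i * P) := by
  classical
  simp only [gaussExp_apply, map_mul, eval_X]
  exact integral_deriv_gaussPi i (fun x t => hasDerivAt_eval_update P x i t)
    (integrable_eval_gaussPi P) (integrable_eval_gaussPi _)
    ((integrable_eval_gaussPi (X i * P)).congr (.of_forall fun x => by simp))

lemma gaussExp_mul_ouGenerator (P Q : MvPolynomial ι ℝ) :
    gaussExp (P * ouGenerator Q) = -gaussExp (carreDuChamp P Q) := by
  simp only [ouGenerator_apply, carreDuChamp_apply, Finset.mul_sum, map_sum,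
    ← Finset.sum_neg_distrib]
  refine Finset.sum_congr rfl fun i _ => ?_
  have h := gaussExp_pderiv i (P * pderiv i Q)
  rw [pderiv_mul, map_add] at h
  rw [mul_sub, map_sub, mul_left_comm]
  linarith

lemma gaussExp_ouGenerator (P : MvPolynomial ι ℝ) : gaussExp (ouGenerator P) = 0 := by
  simpa [carreDuChamp_apply] using gaussExp_mul_ouGenerator 1 P

lemma pderiv_ouGenerator (i : ι) (P : MvPolynomial ι ℝ) :
    pderiv i (ouGenerator P) = ouGenerator (pderiv i P) - pderiv i P := by
  classical
  have h (j : ι) : pderiv i (X j * pderiv j P)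
      = X j * pderiv j (pderiv i P) + if j = i then pderiv i P else 0 := by
    obtain rfl | hji := eq_or_ne j i
    · simp [add_comm]
    · simp [pderiv_X_of_ne hji, hji, pderiv_pderiv_comm i j]
  simp only [ouGenerator_apply, map_sum, map_sub, h, Finset.sum_sub_distrib,
    Finset.sum_add_distrib, Finset.sum_ite_eq', Finset.mem_univ, if_true, sub_sub,
    pderiv_pderiv_comm i]

lemma gaussExp_ouGenerator_sq (P : MvPolynomial ι ℝ) :
    gaussExp (ouGenerator P ^ 2)
      = ∑ i, gaussExp (carreDuChamp (pderiv i P) (pderiv i P)) + gaussExp (carreDuChamp P P) := by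
  have h (i : ι) : gaussExp (carreDuChamp (pderiv i P) (pderiv i P))
      = -gaussExp (pderiv i P * pderiv i (ouGenerator P)) - gaussExp (pderiv i P ^ 2) := by
    have hi := gaussExp_mul_ouGenerator (pderiv i P) (pderiv i P)
    rw [pderiv_ouGenerator, mul_sub, map_sub, sq]
    linarith
  simp only [h, Finset.sum_sub_distrib, Finset.sum_neg_distrib, ← map_sum, ← carreDuChamp_self,
    ← carreDuChamp_apply]
  rw [sq, gaussExp_mul_ouGenerator, carreDuChamp_comm]
  ring

lemma gaussExp_carreDuChamp_le_gaussExp_ouGenerator_sq (P : MvPolynomial ι ℝ) :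
    gaussExp (carreDuChamp P P) ≤ gaussExp (ouGenerator P ^ 2) := by
  rw [gaussExp_ouGenerator_sq]
  exact le_add_of_nonneg_left (Finset.sum_nonneg fun i _ => gaussExp_carreDuChamp_self_nonneg _)

lemma gaussExp_carreDuChamp_le_of_gaussExp_ouGenerator_sq_le {a : ℝ} {P : MvPolynomial ι ℝ}
    (h : gaussExp (ouGenerator P ^ 2) ≤ a * gaussExp (carreDuChamp P P)) (ha : 0 ≤ a) :
    gaussExp (carreDuChamp P P) ≤ a * gaussExp (P ^ 2) := by
  have hP := gaussExp_sq_nonneg P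
  have hcs : gaussExp (carreDuChamp P P) ^ 2
      ≤ gaussExp (P ^ 2) * (a * gaussExp (carreDuChamp P P)) := by
    calc gaussExp (carreDuChamp P P) ^ 2 = gaussExp (P * ouGenerator P) ^ 2 := by
          rw [gaussExp_mul_ouGenerator, neg_sq]
      _ ≤ gaussExp (P ^ 2) * gaussExp (ouGenerator P ^ 2) := gaussExp_mul_sq_le _ _
      _ ≤ _ := by gcongr
  rcases (gaussExp_carreDuChamp_self_nonneg P).eq_or_lt with h0 | h0
  · rw [← h0]; positivity
  · exact le_of_mul_le_mul_right (by linarith) h0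

-- The spectrum of `-L` on polynomials of degree at most `d` lies in `[0, d]`.
lemma gaussExp_ouGenerator_sq_le_mul_carreDuChamp {d : ℕ} {P : MvPolynomial ι ℝ}
    (hP : P.totalDegree ≤ d) :
    gaussExp (ouGenerator P ^ 2) ≤ d * gaussExp (carreDuChamp P P) := by
  induction d generalizing P with
  | zero =>
    have h (i : ι) := pderiv_eq_zero_of_totalDegree_eq_zero i (Nat.le_zero.mp hP)
    simp [ouGenerator_apply, h]
  | succ d ih =>
    have hgrad : ∑ i, gaussExp (carreDuChamp (pderiv i P) (pderiv i P))
        ≤ ∑ i, d * gaussExp (pderiv i P ^ 2) :=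
      Finset.sum_le_sum fun i _ => gaussExp_carreDuChamp_le_of_gaussExp_ouGenerator_sq_le
        (ih ((totalDegree_pderiv_le i P).trans (by lia))) d.cast_nonneg
    rw [← Finset.mul_sum, ← map_sum gaussExp fun i => pderiv i P ^ 2, ← carreDuChamp_self] at hgrad
    rw [gaussExp_ouGenerator_sq]
    push_cast
    linarith

lemma gaussExp_carreDuChamp_le {d : ℕ} {P : MvPolynomial ι ℝ} (hP : P.totalDegree ≤ d) :
    gaussExp (carreDuChamp P P) ≤ d * gaussExp (P ^ 2) :=
  gaussExp_carreDuChamp_le_of_gaussExp_ouGenerator_sq_le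
    (gaussExp_ouGenerator_sq_le_mul_carreDuChamp hP) d.cast_nonneg

lemma gaussExp_ouGenerator_sq_le {d : ℕ} {P : MvPolynomial ι ℝ} (hP : P.totalDegree ≤ d) :
    gaussExp (ouGenerator P ^ 2) ≤ d ^ 2 * gaussExp (P ^ 2) :=
  calc gaussExp (ouGenerator P ^ 2) ≤ d * gaussExp (carreDuChamp P P) :=
        gaussExp_ouGenerator_sq_le_mul_carreDuChamp hP
    _ ≤ d * (d * gaussExp (P ^ 2)) := by gcongr; exact gaussExp_carreDuChamp_le hP
    _ = d ^ 2 * gaussExp (P ^ 2) := by ring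

-- Euler's identity gives `LP = ΔP - n P`, and `ΔP` has degree `n - 2`.
lemma exists_eq_C_add_ouGenerator_of_isHomogeneous {n : ℕ} {P : MvPolynomial ι ℝ}
    (hP : P.IsHomogeneous n) : ∃ (c : ℝ) (Q : MvPolynomial ι ℝ), P = C c + ouGenerator Q := by
  induction n using Nat.strong_induction_on generalizing P with
  | h n ih =>
    rcases n.eq_zero_or_pos with rfl | hn
    · refine ⟨coeff 0 P, 0, ?_⟩
      simpa using totalDegree_eq_zero_iff_eq_C.mp (Nat.le_zero.mp hP.totalDegree_le)
    have hlaplace : (∑ i, pderiv i (pderiv i P)).IsHomogeneous (n - 1 - 1) :=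
      IsHomogeneous.sum _ _ _ fun i _ => hP.pderiv.pderiv
    obtain ⟨c, Q, hQ⟩ := ih _ (by lia) hlaplace
    have hn' : (n : ℝ) ≠ 0 := by positivity
    refine ⟨(n : ℝ)⁻¹ * c, (n : ℝ)⁻¹ • (Q - P), ?_⟩
    have hL : ouGenerator (Q - P) = (n : ℝ) • P - C c := by
      rw [map_sub, ouGenerator_apply P, Finset.sum_sub_distrib, hP.sum_X_mul_pderiv, hQ,
        Nat.cast_smul_eq_nsmul]
      abel
    rw [map_smul, hL, smul_sub, inv_smul_smul₀ hn', map_mul, C_mul', add_sub_cancel]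

lemma exists_eq_C_add_ouGenerator (P : MvPolynomial ι ℝ) :
    ∃ (c : ℝ) (Q : MvPolynomial ι ℝ), P = C c + ouGenerator Q := by
  choose c Q h using fun n =>
    exists_eq_C_add_ouGenerator_of_isHomogeneous (homogeneousComponent_isHomogeneous n P)
  refine ⟨∑ n ∈ Finset.range (P.totalDegree + 1), c n,
    ∑ n ∈ Finset.range (P.totalDegree + 1), Q n, ?_⟩
  rw [map_sum, map_sum, ← Finset.sum_add_distrib]
  simp only [← h, sum_homogeneousComponent]

lemma gaussExp_sq_le_sq_add_carreDuChamp (P : MvPolynomial ι ℝ) :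
    gaussExp (P ^ 2) ≤ gaussExp P ^ 2 + gaussExp (carreDuChamp P P) := by
  obtain ⟨c, Q, rfl⟩ := exists_eq_C_add_ouGenerator P
  have hmean : gaussExp (C c + ouGenerator Q) = c := by
    rw [map_add, gaussExp_C, gaussExp_ouGenerator, add_zero]
  have hsq : gaussExp ((C c + ouGenerator Q) ^ 2) = c ^ 2 + gaussExp (ouGenerator Q ^ 2) := by
    rw [show (C c + ouGenerator Q) ^ 2
        = C (c ^ 2) + (2 * c) • ouGenerator Q + ouGenerator Q ^ 2 by
      simp only [← C_mul', map_mul, map_pow, map_ofNat]; ring]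
    rw [map_add, map_add, map_smul, gaussExp_C, gaussExp_ouGenerator, smul_zero, add_zero]
  have hΓ : carreDuChamp (C c + ouGenerator Q) (C c + ouGenerator Q)
      = carreDuChamp (ouGenerator Q) (ouGenerator Q) := by
    simp [carreDuChamp_apply]
  -- `E (LQ)² = -E Γ(LQ, Q) ≤ (E Γ(LQ, LQ) + E Γ(Q, Q)) / 2` and `E Γ(Q, Q) ≤ E (LQ)²`.
  have hcross := gaussExp_carreDuChamp_self_nonneg (ouGenerator Q + Q)
  have hpoly : gaussExp (ouGenerator Q ^ 2) = -gaussExp (carreDuChamp (ouGenerator Q) Q) := by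
    rw [sq, gaussExp_mul_ouGenerator]
  simp only [map_add, LinearMap.add_apply, carreDuChamp_comm Q] at hcross
  rw [hsq, hmean, hΓ]
  linarith [gaussExp_carreDuChamp_le_gaussExp_ouGenerator_sq Q]

end OrnsteinUhlenbeck

/-! ### Dimension-free norm inequalities -/

section NormInequalities

variable {ι : Type} [Fintype ι]

lemma eval_carreDuChamp_sum_sq_le {κ : Type*} [Fintype κ] (A : κ → MvPolynomial ι ℝ)
    (x : ι → ℝ) :
    eval x (carreDuChamp (∑ a, A a ^ 2) (∑ a, A a ^ 2))
      ≤ 4 * (eval x (∑ a, A a ^ 2) * eval x (∑ a, carreDuChamp (A a) (A a))) := by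
  have hderiv (i : ι) : eval x (pderiv i (∑ a, A a ^ 2))
      = 2 * ∑ a, eval x (A a) * eval x (pderiv i (A a)) := by
    simp [Finset.mul_sum]
  have hswap : eval x (∑ a, carreDuChamp (A a) (A a))
      = ∑ i, ∑ a, eval x (pderiv i (A a)) ^ 2 := by
    simp only [carreDuChamp_self, map_sum, map_pow]
    exact Finset.sum_comm
  rw [carreDuChamp_self, map_sum, hswap, Finset.mul_sum, Finset.mul_sum]
  refine Finset.sum_le_sum fun i _ => ?_
  rw [map_pow, hderiv, mul_pow, map_sum, show (2 : ℝ) ^ 2 = 4 by norm_num]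
  simp only [map_pow]
  gcongr
  exact Finset.sum_mul_sq_le_sq_mul_sq _ _ _

lemma gaussExp_sum_sq_nonneg {κ : Type*} [Fintype κ] (A : κ → MvPolynomial ι ℝ) :
    0 ≤ gaussExp (∑ a, A a ^ 2) := by
  rw [map_sum]
  exact Finset.sum_nonneg fun a _ => gaussExp_sq_nonneg _

lemma gaussExp_sum_sq_sq_of_totalDegree_eq_zero {κ : Type*} [Fintype κ] {A : κ → MvPolynomial ι ℝ}
    (hA : ∀ a, (A a).totalDegree = 0) :
    gaussExp ((∑ a, A a ^ 2) ^ 2) = gaussExp (∑ a, A a ^ 2) ^ 2 := by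
  have hsum : ∑ a, A a ^ 2 = C (∑ a, coeff 0 (A a) ^ 2) := by
    rw [map_sum]
    exact Finset.sum_congr rfl fun a _ => by
      rw [map_pow, ← totalDegree_eq_zero_iff_eq_C.mp (hA a)]
  rw [hsum, ← map_pow, gaussExp_C, gaussExp_C]

-- Apply the Poincaré inequality to `∑ Aₐ²`; the induction hypothesis is used for the family of all
-- partial derivatives `∂ᵢAₐ`, which is why the statement is about vector-valued polynomials.
lemma gaussExp_sum_sq_sq_le {κ : Type*} [Fintype κ] {d : ℕ} {A : κ → MvPolynomial ι ℝ}
    (hA : ∀ a, (A a).totalDegree ≤ d) :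
    gaussExp ((∑ a, A a ^ 2) ^ 2) ≤ (5 ^ d * d.factorial) ^ 2 * gaussExp (∑ a, A a ^ 2) ^ 2 := by
  induction d generalizing κ with
  | zero =>
    simp [gaussExp_sum_sq_sq_of_totalDegree_eq_zero fun a => Nat.le_zero.mp (hA a)]
  | succ d ih =>
    set S := ∑ a, A a ^ 2 with hS
    set T := ∑ a, carreDuChamp (A a) (A a) with hT
    set c : ℝ := (5 ^ d * d.factorial) ^ 2 with hc
    have hc1 : 1 ≤ c := one_le_pow₀ (one_le_mul_of_one_le_of_one_le
      (one_le_pow₀ (by norm_num)) (mod_cast d.factorial_pos))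
    have hT_prod : T = ∑ z : κ × ι, pderiv z.2 (A z.1) ^ 2 := by
      simp only [hT, carreDuChamp_self, Fintype.sum_prod_type]
    have hT_sq : gaussExp (T ^ 2) ≤ c * gaussExp T ^ 2 := hT_prod ▸
      ih fun z => (totalDegree_pderiv_le z.2 (A z.1)).trans (Nat.sub_le_of_le_add (hA z.1))
    have hT_nonneg : 0 ≤ gaussExp T := hT_prod ▸ gaussExp_sum_sq_nonneg _
    have hTS : gaussExp T ≤ (d + 1) * gaussExp S := by
      rw [hT, hS, map_sum, map_sum, Finset.mul_sum]
      exact Finset.sum_le_sum fun a _ => mod_cast gaussExp_carreDuChamp_le (hA a)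
    have henergy :
        gaussExp (carreDuChamp S S) ≤ 1 / 2 * gaussExp (S ^ 2) + 8 * gaussExp (T ^ 2) := by
      rw [← smul_eq_mul, ← smul_eq_mul, ← map_smul, ← map_smul, ← map_add]
      refine gaussExp_mono fun x => (eval_carreDuChamp_sum_sq_le A x).trans ?_
      simp only [map_add, smul_eval, map_pow]
      linarith [sq_nonneg (eval x S - 4 * eval x T)]
    have hS_sq : gaussExp (S ^ 2) ≤ 2 * gaussExp S ^ 2 + 16 * (c * ((d + 1) * gaussExp S) ^ 2) := by
      have hmono : c * gaussExp T ^ 2 ≤ c * ((d + 1) * gaussExp S) ^ 2 := by gcongr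
      linarith [gaussExp_sq_le_sq_add_carreDuChamp S]
    have hc_succ : 2 + 16 * (c * (d + 1) ^ 2) ≤ 25 * (c * (d + 1) ^ 2) := by
      have : 1 ≤ c * (d + 1) ^ 2 :=
        one_le_mul_of_one_le_of_one_le hc1 (one_le_pow₀ (by simp))
      linarith
    calc gaussExp (S ^ 2) ≤ (2 + 16 * (c * (d + 1) ^ 2)) * gaussExp S ^ 2 :=
          hS_sq.trans_eq (by ring)
      _ ≤ 25 * (c * (d + 1) ^ 2) * gaussExp S ^ 2 := by gcongr
      _ = _ := by rw [hc, Nat.factorial_succ]; push_cast; ring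

/-- The `L²` norm of a polynomial in independent standard Gaussian variables. -/
noncomputable def gaussNorm (P : MvPolynomial ι ℝ) : ℝ := √(gaussExp (P ^ 2))

lemma gaussNorm_nonneg (P : MvPolynomial ι ℝ) : 0 ≤ gaussNorm P := Real.sqrt_nonneg _

lemma gaussNorm_sq (P : MvPolynomial ι ℝ) : gaussNorm P ^ 2 = gaussExp (P ^ 2) :=
  Real.sq_sqrt (gaussExp_sq_nonneg P)

lemma gaussNorm_le_of_sq_le {P : MvPolynomial ι ℝ} {b : ℝ} (hb : 0 ≤ b)
    (h : gaussExp (P ^ 2) ≤ b ^ 2) : gaussNorm P ≤ b :=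
  Real.sqrt_le_iff.mpr ⟨hb, h⟩

lemma gaussExp_mul_le_gaussNorm_mul (P Q : MvPolynomial ι ℝ) :
    gaussExp (P * Q) ≤ gaussNorm P * gaussNorm Q := by
  rw [gaussNorm, gaussNorm, ← Real.sqrt_mul (gaussExp_sq_nonneg P)]
  exact Real.le_sqrt_of_sq_le (gaussExp_mul_sq_le P Q)

lemma gaussNorm_add_le (P Q : MvPolynomial ι ℝ) :
    gaussNorm (P + Q) ≤ gaussNorm P + gaussNorm Q := by
  refine gaussNorm_le_of_sq_le (add_nonneg (gaussNorm_nonneg _) (gaussNorm_nonneg _)) ?_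
  rw [show (P + Q) ^ 2 = P ^ 2 + (2 : ℝ) • (P * Q) + Q ^ 2 by
    rw [smul_eq_C_mul, map_ofNat]; ring]
  rw [map_add, map_add, map_smul, smul_eq_mul, ← gaussNorm_sq, ← gaussNorm_sq]
  linarith [gaussExp_mul_le_gaussNorm_mul P Q]

lemma gaussNorm_ouGenerator_le {d : ℕ} {P : MvPolynomial ι ℝ} (hP : P.totalDegree ≤ d) :
    gaussNorm (ouGenerator P) ≤ d * gaussNorm P := by
  refine gaussNorm_le_of_sq_le (mul_nonneg d.cast_nonneg (gaussNorm_nonneg _)) ?_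
  rw [mul_pow, gaussNorm_sq]
  exact gaussExp_ouGenerator_sq_le hP

lemma gaussNorm_sum_sq_le {κ : Type*} [Fintype κ] {d : ℕ} {A : κ → MvPolynomial ι ℝ}
    (hA : ∀ a, (A a).totalDegree ≤ d) :
    gaussNorm (∑ a, A a ^ 2) ≤ 5 ^ d * d.factorial * gaussExp (∑ a, A a ^ 2) :=
  gaussNorm_le_of_sq_le (mul_nonneg (by positivity) (gaussExp_sum_sq_nonneg A))
    ((gaussExp_sum_sq_sq_le hA).trans_eq (mul_pow ..).symm)

lemma gaussExp_sum_sq_mul_sum_sq_le {κ κ' : Type*} [Fintype κ] [Fintype κ'] {d : ℕ}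
    {A : κ → MvPolynomial ι ℝ} {B : κ' → MvPolynomial ι ℝ} (hA : ∀ a, (A a).totalDegree ≤ d)
    (hB : ∀ b, (B b).totalDegree ≤ d) :
    gaussExp ((∑ a, A a ^ 2) * ∑ b, B b ^ 2)
      ≤ (5 ^ d * d.factorial) ^ 2 * (gaussExp (∑ a, A a ^ 2) * gaussExp (∑ b, B b ^ 2)) :=
  calc _ ≤ gaussNorm (∑ a, A a ^ 2) * gaussNorm (∑ b, B b ^ 2) :=
        gaussExp_mul_le_gaussNorm_mul _ _
    _ ≤ (5 ^ d * d.factorial * gaussExp (∑ a, A a ^ 2))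
        * (5 ^ d * d.factorial * gaussExp (∑ b, B b ^ 2)) :=
      mul_le_mul (gaussNorm_sum_sq_le hA) (gaussNorm_sum_sq_le hB) (gaussNorm_nonneg _)
        (mul_nonneg (by positivity) (gaussExp_sum_sq_nonneg A))
    _ = _ := by ring

lemma gaussNorm_mul_le {d : ℕ} {P Q : MvPolynomial ι ℝ} (hP : P.totalDegree ≤ d)
    (hQ : Q.totalDegree ≤ d) :
    gaussNorm (P * Q) ≤ 5 ^ d * d.factorial * (gaussNorm P * gaussNorm Q) := by
  refine gaussNorm_le_of_sq_le
    (mul_nonneg (by positivity) (mul_nonneg (gaussNorm_nonneg _) (gaussNorm_nonneg _))) ?_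
  simpa [mul_pow, gaussNorm_sq] using
    gaussExp_sum_sq_mul_sum_sq_le (A := fun _ : Unit => P) (B := fun _ : Unit => Q)
      (fun _ => hP) fun _ => hQ

lemma gaussNorm_carreDuChamp_le {d : ℕ} {P Q : MvPolynomial ι ℝ} (hP : P.totalDegree ≤ d)
    (hQ : Q.totalDegree ≤ d) :
    gaussNorm (carreDuChamp P Q) ≤ 5 ^ d * d.factorial * d * (gaussNorm P * gaussNorm Q) := by
  refine gaussNorm_le_of_sq_le
    (mul_nonneg (by positivity) (mul_nonneg (gaussNorm_nonneg _) (gaussNorm_nonneg _))) ?_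
  have hgrad {R : MvPolynomial ι ℝ} (hR : R.totalDegree ≤ d) (i : ι) :
      (pderiv i R).totalDegree ≤ d :=
    (totalDegree_pderiv_le i R).trans ((Nat.sub_le _ _).trans hR)
  have henergy {R : MvPolynomial ι ℝ} (hR : R.totalDegree ≤ d) :
      gaussExp (carreDuChamp R R) ≤ d * gaussNorm R ^ 2 :=
    (gaussNorm_sq R).symm ▸ gaussExp_carreDuChamp_le hR
  calc gaussExp (carreDuChamp P Q ^ 2) ≤ gaussExp (carreDuChamp P P * carreDuChamp Q Q) :=
        gaussExp_mono fun x => by simpa using eval_carreDuChamp_sq_le P Q x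
    _ ≤ (5 ^ d * d.factorial) ^ 2
        * (gaussExp (carreDuChamp P P) * gaussExp (carreDuChamp Q Q)) := by
      simpa only [carreDuChamp_self] using gaussExp_sum_sq_mul_sum_sq_le (hgrad hP) (hgrad hQ)
    _ ≤ (5 ^ d * d.factorial) ^ 2 * (d * gaussNorm P ^ 2 * (d * gaussNorm Q ^ 2)) := by
      gcongr
      · exact gaussExp_carreDuChamp_self_nonneg Q
      · exact henergy hP
      · exact henergy hQ
    _ = _ := by ring

lemma totalDegree_carreDuChamp_le (P Q : MvPolynomial ι ℝ) :
    (carreDuChamp P Q).totalDegree ≤ P.totalDegree + Q.totalDegree := by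
  rw [carreDuChamp_apply]
  exact totalDegree_finsetSum_le fun i _ => (totalDegree_mul _ _).trans (add_le_add
    ((totalDegree_pderiv_le i P).trans (Nat.sub_le _ _))
    ((totalDegree_pderiv_le i Q).trans (Nat.sub_le _ _)))

lemma totalDegree_ouGenerator_le (P : MvPolynomial ι ℝ) :
    (ouGenerator P).totalDegree ≤ P.totalDegree := by
  rw [ouGenerator_apply]
  refine totalDegree_finsetSum_le fun i _ => ?_
  rcases P.totalDegree.eq_zero_or_pos with h | h
  · simp [pderiv_eq_zero_of_totalDegree_eq_zero i h]
  have hi := totalDegree_pderiv_le i P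
  refine (totalDegree_sub _ _).trans (max_le ?_ ((totalDegree_mul _ _).trans ?_))
  · have hii := totalDegree_pderiv_le i (pderiv i P)
    lia
  · rw [totalDegree_X]
    lia

end NormInequalities

/-! ### Oscillatory Gaussian integrals -/

section Oscillatory

variable {ι : Type} [Fintype ι] {ε : ℝ}

lemma integral_sum_deriv_mul_pderiv (F : MvPolynomial ι ℝ) [DecidableEq ι] {g : (ι → ℝ) → ℝ}
    {g' : ι → (ι → ℝ) → ℝ}
    (hd : ∀ i x t,
      HasDerivAt (fun t => g (Function.update x i t)) (g' i (Function.update x i t)) t)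
    (hg : ∀ P : MvPolynomial ι ℝ, Integrable (fun x => g x * eval x P) (gaussPi ι))
    (hg' : ∀ i (P : MvPolynomial ι ℝ), Integrable (fun x => g' i x * eval x P) (gaussPi ι)) :
    ∫ x, ∑ i, g' i x * eval x (pderiv i F) ∂gaussPi ι
      = -∫ x, g x * eval x (ouGenerator F) ∂gaussPi ι := by
  have hibp (i : ι) : ∫ x, g' i x * eval x (pderiv i F) ∂gaussPi ι
      = -∫ x, g x * eval x (pderiv i (pderiv i F) - X i * pderiv i F) ∂gaussPi ι := by
    have h := integral_deriv_gaussPi i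
      (f' := fun x => g' i x * eval x (pderiv i F) + g x * eval x (pderiv i (pderiv i F)))
      (fun x t => (hd i x t).fun_mul (hasDerivAt_eval_update (pderiv i F) x i t))
      (hg _) ((hg' i _).add (hg _))
      ((hg (X i * pderiv i F)).congr (.of_forall fun x => by simp; ring))
    rw [integral_add (hg' i _) (hg _)] at h
    have hsplit : ∫ x, g x * eval x (pderiv i (pderiv i F) - X i * pderiv i F) ∂gaussPi ι
        = ∫ x, g x * eval x (pderiv i (pderiv i F)) ∂gaussPi ι
          - ∫ x, x i * (g x * eval x (pderiv i F)) ∂gaussPi ι := by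
      rw [← integral_sub (hg _) ((hg (X i * pderiv i F)).congr (.of_forall fun x => by simp; ring))]
      exact integral_congr_ae (.of_forall fun x => by simp; ring)
    linarith
  simp only [ouGenerator_apply, map_sum, Finset.mul_sum]
  rw [integral_finsetSum _ fun i _ => hg' i _, integral_finsetSum _ fun i _ => hg _,
    ← Finset.sum_neg_distrib]
  exact Finset.sum_congr rfl fun i _ => hibp i

/-- The regularised inverse `ε / (Γ(F, F) + ε)` of the square field, with values in `(0, 1]`. -/
noncomputable def regInv (ε : ℝ) (F : MvPolynomial ι ℝ) (x : ι → ℝ) : ℝ :=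
  ε / (sqField F x + ε)

lemma sqField_add_pos (hε : 0 < ε) (F : MvPolynomial ι ℝ) (x : ι → ℝ) : 0 < sqField F x + ε :=
  add_pos_of_nonneg_of_pos (sqField_nonneg F x) hε

lemma regInv_pos (hε : 0 < ε) (F : MvPolynomial ι ℝ) (x : ι → ℝ) : 0 < regInv ε F x :=
  div_pos hε (sqField_add_pos hε F x)

lemma regInv_le_one (hε : 0 < ε) (F : MvPolynomial ι ℝ) (x : ι → ℝ) : regInv ε F x ≤ 1 := by
  rw [regInv, div_le_one (sqField_add_pos hε F x)]
  exact le_add_of_nonneg_left (sqField_nonneg F x)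

lemma regInv_mul_one_add (hε : 0 < ε) (F : MvPolynomial ι ℝ) (x : ι → ℝ) :
    regInv ε F x * (1 + ε⁻¹ * sqField F x) = 1 := by
  have hd := (sqField_add_pos hε F x).ne'
  rw [regInv]
  field_simp
  ring

lemma continuous_sqField (F : MvPolynomial ι ℝ) : Continuous (sqField F) :=
  continuous_finsetSum _ fun _ _ => (continuous_eval _).pow 2

lemma continuous_regInv (hε : 0 < ε) (F : MvPolynomial ι ℝ) : Continuous (regInv ε F) :=
  continuous_const.div ((continuous_sqField F).add continuous_const)
    fun x => (sqField_add_pos hε F x).ne'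

lemma hasDerivAt_regInv_update [DecidableEq ι] (hε : 0 < ε) (F : MvPolynomial ι ℝ) (x : ι → ℝ)
    (i : ι) (t : ℝ) :
    HasDerivAt (fun t => regInv ε F (Function.update x i t))
      (-(ε⁻¹ * regInv ε F (Function.update x i t) ^ 2
        * eval (Function.update x i t) (pderiv i (carreDuChamp F F)))) t := by
  have hd := (sqField_add_pos hε F (Function.update x i t)).ne'
  simp only [regInv, sqField_eq_eval_carreDuChamp] at hd ⊢
  refine ((hasDerivAt_const t ε).fun_div
    ((hasDerivAt_eval_update (carreDuChamp F F) x i t).add_const ε) hd).congr_deriv ?_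
  field_simp
  ring

/-- The moments `E[(ε / (Γ(F, F) + ε))ⁿ]` of the regularised inverse. -/
noncomputable def regInvMoment (ε : ℝ) (F : MvPolynomial ι ℝ) (n : ℕ) : ℝ :=
  ∫ x, regInv ε F x ^ n ∂gaussPi ι

lemma integrable_regInv_pow (hε : 0 < ε) (F : MvPolynomial ι ℝ) (n : ℕ) :
    Integrable (fun x => regInv ε F x ^ n) (gaussPi ι) := by
  refine (integrable_const (1 : ℝ)).mono ((continuous_regInv hε F).pow n).aestronglyMeasurable
    (.of_forall fun x => ?_)
  rw [Real.norm_of_nonneg (pow_nonneg (regInv_pos hε F x).le _), norm_one]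
  exact pow_le_one₀ (regInv_pos hε F x).le (regInv_le_one hε F x)

lemma regInvMoment_anti (hε : 0 < ε) (F : MvPolynomial ι ℝ) {n n' : ℕ} (h : n ≤ n') :
    regInvMoment ε F n' ≤ regInvMoment ε F n :=
  integral_mono (integrable_regInv_pow hε F _) (integrable_regInv_pow hε F _) fun x =>
    pow_le_pow_of_le_one (regInv_pos hε F x).le (regInv_le_one hε F x) h

/-- The integrand of `oscIntegral`. -/
noncomputable def oscIntegrand (ε ξ θ : ℝ) (F p : MvPolynomial ι ℝ) (j : ℕ) (x : ι → ℝ) : ℝ :=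
  Real.cos (ξ * eval x F + θ) * eval x p * regInv ε F x ^ j

/-- The oscillatory integral `E[cos(ξF + θ) p (ε / (Γ(F, F) + ε))ʲ]`. The phase `θ` plays the role
of the complex argument of `exp(iξF)`: differentiation in `F` shifts it by `π / 2`. -/
noncomputable def oscIntegral (ε ξ θ : ℝ) (F p : MvPolynomial ι ℝ) (j : ℕ) : ℝ :=
  ∫ x, oscIntegrand ε ξ θ F p j x ∂gaussPi ι

lemma continuous_oscIntegrand (hε : 0 < ε) (ξ θ : ℝ) (F p : MvPolynomial ι ℝ) (j : ℕ) :
    Continuous (oscIntegrand ε ξ θ F p j) :=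
  ((Real.continuous_cos.comp (((continuous_eval F).const_mul ξ).add_const θ)).mul
    (continuous_eval p)).mul ((continuous_regInv hε F).pow j)

lemma abs_oscIntegrand_le (hε : 0 < ε) (ξ θ : ℝ) (F p : MvPolynomial ι ℝ) (j : ℕ) (x : ι → ℝ) :
    |oscIntegrand ε ξ θ F p j x| ≤ |eval x p| * regInv ε F x ^ j := by
  have hv := (pow_pos (regInv_pos hε F x) j).le
  rw [oscIntegrand, abs_mul, abs_mul, abs_of_nonneg hv]
  gcongr
  exact mul_le_of_le_one_left (abs_nonneg _) (Real.abs_cos_le_one _)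

lemma integrable_oscIntegrand (hε : 0 < ε) (ξ θ : ℝ) (F p : MvPolynomial ι ℝ) (j : ℕ) :
    Integrable (oscIntegrand ε ξ θ F p j) (gaussPi ι) :=
  (integrable_eval_gaussPi p).mono (continuous_oscIntegrand hε ξ θ F p j).aestronglyMeasurable
    (.of_forall fun x => (abs_oscIntegrand_le hε ξ θ F p j x).trans (mul_le_of_le_one_right
      (abs_nonneg _) (pow_le_one₀ (regInv_pos hε F x).le (regInv_le_one hε F x))))

lemma oscIntegrand_mul (ε ξ θ : ℝ) (F p P : MvPolynomial ι ℝ) (j : ℕ) (x : ι → ℝ) :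
    oscIntegrand ε ξ θ F (p * P) j x = oscIntegrand ε ξ θ F p j x * eval x P := by
  simp only [oscIntegrand, map_mul]
  ring

lemma oscIntegral_add (hε : 0 < ε) (ξ θ : ℝ) (F p p' : MvPolynomial ι ℝ) (j : ℕ) :
    oscIntegral ε ξ θ F (p + p') j = oscIntegral ε ξ θ F p j + oscIntegral ε ξ θ F p' j := by
  rw [oscIntegral, oscIntegral, oscIntegral, ← integral_add (integrable_oscIntegrand hε ..)
    (integrable_oscIntegrand hε ..)]
  refine integral_congr_ae (.of_forall fun x => ?_)
  simp only [oscIntegrand, map_add]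
  ring

lemma abs_oscIntegral_le (hε : 0 < ε) (ξ θ : ℝ) (F p : MvPolynomial ι ℝ) (j : ℕ) :
    |oscIntegral ε ξ θ F p j| ≤ gaussNorm p * √(regInvMoment ε F (2 * j)) := by
  have hp : MemLp (fun x => eval x p) (ENNReal.ofReal 2) (gaussPi ι) := by
    rw [ENNReal.ofReal_ofNat, memLp_two_iff_integrable_sq (continuous_eval p).aestronglyMeasurable]
    exact (integrable_eval_gaussPi (p ^ 2)).congr (.of_forall fun x => by simp)
  have hv : MemLp (fun x => regInv ε F x ^ j) (ENNReal.ofReal 2) (gaussPi ι) := by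
    rw [ENNReal.ofReal_ofNat]
    refine (memLp_two_iff_integrable_sq
      ((continuous_regInv hε F).pow j).aestronglyMeasurable).mpr ?_
    exact (integrable_regInv_pow hε F (2 * j)).congr (.of_forall fun x => pow_mul' ..)
  have hpv : Integrable (fun x => |eval x p| * |regInv ε F x ^ j|) (gaussPi ι) := by
    rw [ENNReal.ofReal_ofNat] at hp hv
    exact (hp.integrable_mul hv).abs.congr (.of_forall fun x => abs_mul _ _)
  have hholder := integral_mul_norm_le_Lp_mul_Lq .two_two hp hv
  simp only [Real.rpow_two, ← Real.sqrt_eq_rpow, Real.norm_eq_abs, sq_abs, ← pow_mul'] at hholder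
  calc |oscIntegral ε ξ θ F p j| ≤ ∫ x, |oscIntegrand ε ξ θ F p j x| ∂gaussPi ι :=
        abs_integral_le_integral_abs
    _ ≤ ∫ x, |eval x p| * |regInv ε F x ^ j| ∂gaussPi ι :=
        integral_mono (integrable_oscIntegrand hε ..).abs hpv fun x =>
          (abs_oscIntegrand_le hε ξ θ F p j x).trans (by gcongr; exact le_abs_self _)
    _ ≤ gaussNorm p * √(regInvMoment ε F (2 * j)) := by
        simpa only [gaussNorm, gaussExp_apply, map_pow, regInvMoment] using hholder

lemma oscIntegral_eq_add (hε : 0 < ε) (ξ θ : ℝ) (F p : MvPolynomial ι ℝ) (j : ℕ) :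
    oscIntegral ε ξ θ F p j = oscIntegral ε ξ θ F p (j + 1)
      + ε⁻¹ * oscIntegral ε ξ θ F (carreDuChamp F F * p) (j + 1) := by
  simp only [oscIntegral]
  rw [← integral_const_mul, ← integral_add (integrable_oscIntegrand hε ..)
    ((integrable_oscIntegrand hε ..).const_mul _)]
  refine integral_congr_ae (.of_forall fun x => ?_)
  simp only [oscIntegrand, map_mul, ← sqField_eq_eval_carreDuChamp]
  calc _ = Real.cos (ξ * eval x F + θ) * eval x p * regInv ε F x ^ j
        * (regInv ε F x * (1 + ε⁻¹ * sqField F x)) := by rw [regInv_mul_one_add hε, mul_one]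
    _ = _ := by ring

lemma hasDerivAt_oscIntegrand_update [DecidableEq ι] (hε : 0 < ε) (ξ θ : ℝ)
    (F p : MvPolynomial ι ℝ) (j : ℕ) (i : ι) (x : ι → ℝ) (t : ℝ) :
    HasDerivAt (fun t => oscIntegrand ε ξ (θ - Real.pi / 2) F p (j + 1) (Function.update x i t))
      ((fun y => ξ * oscIntegrand ε ξ θ F (pderiv i F * p) (j + 1) y
        + oscIntegrand ε ξ (θ - Real.pi / 2) F (pderiv i p) (j + 1) y
        - (j + 1) * ε⁻¹ * oscIntegrand ε ξ (θ - Real.pi / 2) F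
          (pderiv i (carreDuChamp F F) * p) (j + 2) y) (Function.update x i t)) t := by
  have hcos :=
    (((hasDerivAt_eval_update F x i t).const_mul ξ).add_const (θ - Real.pi / 2)).cos
  have hsin (y : ℝ) : Real.sin (y + (θ - Real.pi / 2)) = -Real.cos (y + θ) := by
    rw [← add_sub_assoc, Real.sin_sub_pi_div_two]
  refine ((hcos.fun_mul (hasDerivAt_eval_update p x i t)).fun_mul
    ((hasDerivAt_regInv_update hε F x i t).fun_pow (j + 1))).congr_deriv ?_
  simp only [oscIntegrand, map_mul, hsin, Nat.add_sub_cancel, Nat.cast_add, Nat.cast_one]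
  ring

lemma mul_oscIntegral_carreDuChamp_mul (hε : 0 < ε) (ξ θ : ℝ) (F p : MvPolynomial ι ℝ) (j : ℕ) :
    ξ * oscIntegral ε ξ θ F (carreDuChamp F F * p) (j + 1)
      = -oscIntegral ε ξ (θ - Real.pi / 2) F (ouGenerator F * p + carreDuChamp F p) (j + 1)
        + (j + 1) * ε⁻¹ * oscIntegral ε ξ (θ - Real.pi / 2) F
          (carreDuChamp F (carreDuChamp F F) * p) (j + 2) := by
  classical
  have hint (θ : ℝ) (p : MvPolynomial ι ℝ) (j : ℕ) := integrable_oscIntegrand hε ξ θ F p j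
  have hibp := integral_sum_deriv_mul_pderiv F
    (g := oscIntegrand ε ξ (θ - Real.pi / 2) F p (j + 1))
    (g' := fun i x => ξ * oscIntegrand ε ξ θ F (pderiv i F * p) (j + 1) x
        + oscIntegrand ε ξ (θ - Real.pi / 2) F (pderiv i p) (j + 1) x
        - (j + 1) * ε⁻¹ * oscIntegrand ε ξ (θ - Real.pi / 2) F
          (pderiv i (carreDuChamp F F) * p) (j + 2) x)
    (hasDerivAt_oscIntegrand_update hε ξ θ F p j)
    (fun P => by simpa only [← oscIntegrand_mul] using hint _ (p * P) _)
    (fun i P => by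
      simp only [sub_mul, add_mul _ _ (eval _ P), mul_assoc _ _ (eval _ P), ← oscIntegrand_mul]
      exact (((hint ..).const_mul _).fun_add (hint ..)).sub ((hint ..).const_mul _))
  have hpt (Q : MvPolynomial ι ℝ) (x : ι → ℝ) :
      ∑ i, (ξ * oscIntegrand ε ξ θ F (pderiv i F * p) (j + 1) x
        + oscIntegrand ε ξ (θ - Real.pi / 2) F (pderiv i p) (j + 1) x
        - (j + 1) * ε⁻¹ * oscIntegrand ε ξ (θ - Real.pi / 2) F
          (pderiv i Q * p) (j + 2) x) * eval x (pderiv i F)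
      = ξ * oscIntegrand ε ξ θ F (carreDuChamp F F * p) (j + 1) x
        + oscIntegrand ε ξ (θ - Real.pi / 2) F (carreDuChamp F p) (j + 1) x
        - (j + 1) * ε⁻¹ * oscIntegrand ε ξ (θ - Real.pi / 2) F
          (carreDuChamp F Q * p) (j + 2) x := by
    simp only [oscIntegrand, carreDuChamp_apply F, map_mul, map_sum, Finset.mul_sum,
      Finset.sum_mul, ← Finset.sum_add_distrib, ← Finset.sum_sub_distrib]
    exact Finset.sum_congr rfl fun i _ => by ring
  simp only [hpt, ← oscIntegrand_mul] at hibp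
  rw [integral_sub (((hint ..).const_mul _).fun_add (hint ..)) ((hint ..).const_mul _),
    integral_add ((hint ..).const_mul _) (hint ..), integral_const_mul, integral_const_mul] at hibp
  rw [oscIntegral_add hε, mul_comm (ouGenerator F)]
  simp only [oscIntegral]
  linarith

-- At the frequency `ξ = ε⁻²` each integration by parts gains a power of the regularised inverse
-- without losing a power of `ε`.
lemma oscIntegral_inv_sq_eq (hε : 0 < ε) (θ : ℝ) (F p : MvPolynomial ι ℝ) (j : ℕ) :
    oscIntegral ε (ε⁻¹ ^ 2) θ F p j = oscIntegral ε (ε⁻¹ ^ 2) θ F p (j + 1)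
      - ε * oscIntegral ε (ε⁻¹ ^ 2) (θ - Real.pi / 2) F
          (ouGenerator F * p + carreDuChamp F p) (j + 1)
      + (j + 1) * oscIntegral ε (ε⁻¹ ^ 2) (θ - Real.pi / 2) F
          (carreDuChamp F (carreDuChamp F F) * p) (j + 2) := by
  have hε' := hε.ne'
  rw [oscIntegral_eq_add hε,
    show ε⁻¹ * oscIntegral ε (ε⁻¹ ^ 2) θ F (carreDuChamp F F * p) (j + 1)
      = ε * (ε⁻¹ ^ 2 * oscIntegral ε (ε⁻¹ ^ 2) θ F (carreDuChamp F F * p) (j + 1)) by field_simp,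
    mul_oscIntegral_carreDuChamp_mul hε]
  field_simp
  ring

lemma totalDegree_ouGenerator_mul_add_carreDuChamp_le (F p : MvPolynomial ι ℝ) :
    (ouGenerator F * p + carreDuChamp F p).totalDegree ≤ F.totalDegree + p.totalDegree :=
  (totalDegree_add _ _).trans (max_le
    ((totalDegree_mul _ _).trans (add_le_add_left (totalDegree_ouGenerator_le F) _))
    ((totalDegree_carreDuChamp_le F p).trans (by lia)))

lemma gaussNorm_ouGenerator_mul_add_carreDuChamp_le {d : ℕ} {F p : MvPolynomial ι ℝ}
    (hF : F.totalDegree ≤ d) (hp : p.totalDegree ≤ d) :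
    gaussNorm (ouGenerator F * p + carreDuChamp F p)
      ≤ 2 * (5 ^ d * d.factorial * d) * (gaussNorm F * gaussNorm p) := by
  have hpn := gaussNorm_nonneg p
  have hmul : gaussNorm (ouGenerator F * p)
      ≤ 5 ^ d * d.factorial * (d * gaussNorm F * gaussNorm p) :=
    (gaussNorm_mul_le ((totalDegree_ouGenerator_le F).trans hF) hp).trans
      (by gcongr; exact gaussNorm_ouGenerator_le hF)
  linarith [gaussNorm_add_le (ouGenerator F * p) (carreDuChamp F p),
    gaussNorm_carreDuChamp_le hF hp]

lemma gaussNorm_carreDuChamp_carreDuChamp_mul_le {d : ℕ} {F p : MvPolynomial ι ℝ}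
    (hF : F.totalDegree ≤ d) (hp : p.totalDegree ≤ d) :
    gaussNorm (carreDuChamp F (carreDuChamp F F) * p)
      ≤ (5 ^ (3 * d) * (3 * d).factorial) ^ 3 * (3 * d) ^ 2
        * (gaussNorm F ^ 3 * gaussNorm p) := by
  have hFn := gaussNorm_nonneg F
  have hpn := gaussNorm_nonneg p
  have hΓ := totalDegree_carreDuChamp_le F F
  have hΓΓ := totalDegree_carreDuChamp_le F (carreDuChamp F F)
  set c : ℝ := 5 ^ (3 * d) * (3 * d).factorial
  have hΓ_norm : gaussNorm (carreDuChamp F F)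
      ≤ c * (3 * d : ℕ) * (gaussNorm F * gaussNorm F) :=
    gaussNorm_carreDuChamp_le (by lia) (by lia)
  have hΓΓ_norm : gaussNorm (carreDuChamp F (carreDuChamp F F))
      ≤ c * (3 * d : ℕ) * (gaussNorm F * (c * (3 * d : ℕ) * (gaussNorm F * gaussNorm F))) :=
    (gaussNorm_carreDuChamp_le (d := 3 * d) (by lia) (by lia)).trans (by gcongr)
  calc _ ≤ c * (gaussNorm (carreDuChamp F (carreDuChamp F F)) * gaussNorm p) :=
        gaussNorm_mul_le (d := 3 * d) (by lia) (by lia)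
    _ ≤ c * (c * (3 * d : ℕ) * (gaussNorm F * (c * (3 * d : ℕ)
        * (gaussNorm F * gaussNorm F))) * gaussNorm p) := by gcongr
    _ = _ := by push_cast; ring

lemma abs_oscIntegral_inv_sq_le (hε : 0 < ε) (hε1 : ε ≤ 1) (θ : ℝ) (F p : MvPolynomial ι ℝ)
    (j : ℕ) :
    |oscIntegral ε (ε⁻¹ ^ 2) θ F p j| ≤ |oscIntegral ε (ε⁻¹ ^ 2) θ F p (j + 1)|
      + |oscIntegral ε (ε⁻¹ ^ 2) (θ - Real.pi / 2) F
          (ouGenerator F * p + carreDuChamp F p) (j + 1)|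
      + (j + 1) * |oscIntegral ε (ε⁻¹ ^ 2) (θ - Real.pi / 2) F
          (carreDuChamp F (carreDuChamp F F) * p) (j + 2)| := by
  rw [oscIntegral_inv_sq_eq hε]
  refine (abs_add_le _ _).trans (add_le_add ((abs_sub _ _).trans ?_) ?_)
  · rw [abs_mul, abs_of_pos hε]
    gcongr
    exact mul_le_of_le_one_left (abs_nonneg _) hε1
  · rw [abs_mul, abs_of_pos (by positivity : (0 : ℝ) < j + 1)]

end Oscillatory

lemma exists_abs_oscIntegral_le_mul_regInvMoment (B : ℝ≥0) (s d j : ℕ) :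
    ∃ c : ℝ≥0, ∀ (ι : Type) [Fintype ι] (F p : MvPolynomial ι ℝ), F.totalDegree ≤ d →
      gaussNorm F ≤ B → p.totalDegree ≤ d → ∀ ε θ : ℝ, 0 < ε → ε ≤ 1 →
        |oscIntegral ε (ε⁻¹ ^ 2) θ F p j|
          ≤ c * gaussNorm p * √(regInvMoment ε F (2 * (j + s))) := by
  induction s generalizing d j with
  | zero =>
    refine ⟨1, fun ι _ F p _ _ _ ε θ hε _ => ?_⟩
    simpa using abs_oscIntegral_le hε _ θ F p j
  | succ s ih =>
    obtain ⟨c₁, h₁⟩ := ih (4 * d) (j + 1)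
    obtain ⟨c₂, h₂⟩ := ih (4 * d) (j + 2)
    set a₁ : ℝ≥0 := 2 * (5 ^ d * d.factorial * d) * B with ha₁
    set a₂ : ℝ≥0 := (5 ^ (3 * d) * (3 * d).factorial) ^ 3 * (3 * d) ^ 2 * B ^ 3 with ha₂
    refine ⟨c₁ + c₁ * a₁ + (j + 1) * (c₂ * a₂), fun ι _ F p hF hFB hp ε θ hε hε1 => ?_⟩
    have hpn := gaussNorm_nonneg p
    have hFn := gaussNorm_nonneg F
    set W := √(regInvMoment ε F (2 * (j + (s + 1))))
    have hΓ := totalDegree_carreDuChamp_le F F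
    have hΓΓ := totalDegree_carreDuChamp_le F (carreDuChamp F F)
    have hLp : (ouGenerator F * p + carreDuChamp F p).totalDegree ≤ 4 * d :=
      (totalDegree_ouGenerator_mul_add_carreDuChamp_le F p).trans (by lia)
    have hbound₀ : |oscIntegral ε (ε⁻¹ ^ 2) θ F p (j + 1)| ≤ c₁ * gaussNorm p * W := by
      simpa only [add_right_comm j, add_assoc] using h₁ ι F p (by lia) hFB (by lia) ε θ hε hε1
    have hbound₁ : |oscIntegral ε (ε⁻¹ ^ 2) (θ - Real.pi / 2) F
        (ouGenerator F * p + carreDuChamp F p) (j + 1)| ≤ c₁ * (a₁ * gaussNorm p) * W := by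
      have h := h₁ ι F _ (by lia) hFB hLp ε (θ - Real.pi / 2) hε hε1
      rw [show j + 1 + s = j + (s + 1) by ring] at h
      refine h.trans ?_
      gcongr
      refine (gaussNorm_ouGenerator_mul_add_carreDuChamp_le hF hp).trans ?_
      rw [ha₁, ← mul_assoc]
      push_cast
      gcongr
    have hbound₂ : |oscIntegral ε (ε⁻¹ ^ 2) (θ - Real.pi / 2) F
        (carreDuChamp F (carreDuChamp F F) * p) (j + 2)| ≤ c₂ * (a₂ * gaussNorm p) * W := by
      refine (h₂ ι F _ (by lia) hFB ((totalDegree_mul _ _).trans (by lia)) ε (θ - Real.pi / 2)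
        hε hε1).trans ?_
      gcongr ?_ * ?_
      · gcongr
        refine (gaussNorm_carreDuChamp_carreDuChamp_mul_le hF hp).trans ?_
        rw [ha₂, ← mul_assoc]
        push_cast
        gcongr
      · exact Real.sqrt_le_sqrt (regInvMoment_anti hε F (by lia))
    calc _ ≤ c₁ * gaussNorm p * W + c₁ * (a₁ * gaussNorm p) * W
          + (j + 1) * (c₂ * (a₂ * gaussNorm p) * W) := by
          grw [abs_oscIntegral_inv_sq_le hε hε1, hbound₀, hbound₁, hbound₂]
      _ = _ := by push_cast; ring

/-! ### Negative moments from Laplace transforms -/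

section Laplace

lemma inv_ofReal_pow_le_tsum_exp {b Y : ℝ} (hb : 1 < b) (hY : 0 ≤ Y) (q : ℕ) :
    (ENNReal.ofReal Y ^ q)⁻¹
      ≤ 1 + ∑' n : ℕ, ENNReal.ofReal (b ^ ((n + 1) * q) * Real.exp (1 - b ^ n * Y)) := by
  have hb0 : 0 < b := one_pos.trans hb
  have hexp {n : ℕ} (hn : b ^ n * Y ≤ 1) : 1 ≤ Real.exp (1 - b ^ n * Y) :=
    Real.one_le_exp (sub_nonneg.mpr hn)
  rcases hY.eq_or_lt with rfl | hY0
  · suffices h : ∑' n : ℕ, ENNReal.ofReal (b ^ ((n + 1) * q) * Real.exp (1 - b ^ n * 0)) = ⊤ by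
      simp only [h, add_top, le_top]
    rw [← top_le_iff, ← ENNReal.tsum_const_eq_top_of_ne_zero (α := ℕ) (c := 1) one_ne_zero]
    exact ENNReal.tsum_le_tsum fun n => ENNReal.one_le_ofReal.mpr
      (one_le_mul_of_one_le_of_one_le (one_le_pow₀ hb.le) (hexp (by simp)))
  rcases le_or_gt 1 Y with hY1 | hY1
  · refine le_add_right (ENNReal.inv_le_one.mpr (one_le_pow₀ ?_))
    rwa [ENNReal.one_le_ofReal]
  obtain ⟨n, hlt, hle⟩ := exists_nat_pow_near_of_lt_one hY0 hY1.le (inv_pos.mpr hb0)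
    (inv_lt_one_of_one_lt₀ hb)
  rw [inv_pow] at hlt hle
  have hn : b ^ n * Y ≤ 1 := by
    rw [← le_inv_mul_iff₀ (by positivity), mul_one]
    exact hle
  refine (le_add_left (ENNReal.le_tsum n)).trans' ?_
  rw [← ENNReal.ofReal_pow hY, ← ENNReal.ofReal_inv_of_pos (by positivity)]
  refine ENNReal.ofReal_le_ofReal ((le_mul_of_one_le_right (by positivity) (hexp hn)).trans' ?_)
  rw [pow_mul, ← inv_pow]
  gcongr
  exact inv_le_of_inv_le₀ (by positivity) hlt.le

variable {Ω : Type*} [MeasurableSpace Ω] {μ : Measure Ω} [IsProbabilityMeasure μ]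

lemma lintegral_inv_ofReal_pow_le {Y : Ω → ℝ} (hYm : Measurable Y) (hY : ∀ ω, 0 ≤ Y ω)
    {a b : ℝ} (hb : 1 < b) {q : ℕ}
    (hexp : ∀ n : ℕ, ∫ ω, Real.exp (-(b ^ n * Y ω)) ∂μ ≤ a * ((2 * b ^ q) ^ n)⁻¹) :
    ∫⁻ ω, (ENNReal.ofReal (Y ω) ^ q)⁻¹ ∂μ
      ≤ 1 + ENNReal.ofReal (2 * Real.exp 1 * b ^ q * a) := by
  have : 0 < b := one_pos.trans hb
  have hint (n : ℕ) : Integrable (fun ω => Real.exp (-(b ^ n * Y ω))) μ := by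
    refine Integrable.of_bound (C := 1) (by fun_prop) (.of_forall fun ω => ?_)
    rw [Real.norm_of_nonneg (Real.exp_pos _).le, Real.exp_le_one_iff, neg_nonpos]
    exact mul_nonneg (by positivity) (hY ω)
  have hterm (n : ℕ) :
      ∫⁻ ω, ENNReal.ofReal (b ^ ((n + 1) * q) * Real.exp (1 - b ^ n * Y ω)) ∂μ
        ≤ ENNReal.ofReal (Real.exp 1 * b ^ q * a) * 2⁻¹ ^ n := by
    have h2 : (2⁻¹ : ℝ≥0∞) ^ n = ENNReal.ofReal ((2 : ℝ)⁻¹ ^ n) := by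
      rw [ENNReal.ofReal_pow (by norm_num), ENNReal.ofReal_inv_of_pos two_pos,
        ENNReal.ofReal_ofNat]
    simp only [sub_eq_add_neg (1 : ℝ), Real.exp_add]
    rw [← ofReal_integral_eq_lintegral_ofReal (((hint n).const_mul _).const_mul _)
      (.of_forall fun ω => by positivity), integral_const_mul, integral_const_mul, h2,
      ← ENNReal.ofReal_mul' (by positivity)]
    refine ENNReal.ofReal_le_ofReal ?_
    calc _ ≤ b ^ ((n + 1) * q) * (Real.exp 1 * (a * ((2 * b ^ q) ^ n)⁻¹)) := by
          gcongr; exact hexp n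
      _ = _ := by
          rw [mul_pow, ← pow_mul b, add_one_mul, pow_add, mul_comm n q, inv_pow]
          field_simp
  calc _ ≤ ∫⁻ ω, (1 + ∑' n : ℕ,
        ENNReal.ofReal (b ^ ((n + 1) * q) * Real.exp (1 - b ^ n * Y ω))) ∂μ :=
        lintegral_mono fun ω => inv_ofReal_pow_le_tsum_exp hb (hY ω) q
    _ = 1 + ∑' n : ℕ,
        ∫⁻ ω, ENNReal.ofReal (b ^ ((n + 1) * q) * Real.exp (1 - b ^ n * Y ω)) ∂μ := by
        rw [lintegral_add_left measurable_const, lintegral_tsum fun n => by fun_prop]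
        simp
    _ ≤ 1 + ∑' n : ℕ, ENNReal.ofReal (Real.exp 1 * b ^ q * a) * 2⁻¹ ^ n := by
        gcongr with n; exact hterm n
    _ = _ := by
        rw [ENNReal.tsum_mul_left, ENNReal.tsum_geometric, ENNReal.one_sub_inv_two, inv_inv,
          mul_assoc 2, mul_assoc 2, ENNReal.ofReal_mul zero_le_two, ENNReal.ofReal_ofNat,
          mul_comm 2]

lemma one_add_le_inv_pow_add_mul (n : ℕ) (t : ℝ≥0∞) : 1 + (n : ℝ≥0∞) ≤ (t ^ n)⁻¹ + n * t := by
  rcases n.eq_zero_or_pos with rfl | hn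
  · simp
  rcases eq_or_ne t 0 with rfl | ht0
  · simp [hn.ne']
  rcases eq_or_ne t ⊤ with rfl | htop
  · simp [hn.ne', ENNReal.mul_top]
  lift t to ℝ≥0 using htop
  have ht0' : t ≠ 0 := mod_cast ht0
  have ht : 0 < (t : ℝ) := by positivity
  have hbernoulli := one_add_mul_le_pow (show (-2 : ℝ) ≤ (t : ℝ)⁻¹ - 1 by
    linarith [inv_pos.mpr ht]) n
  have hamgm : 1 - (t : ℝ) ≤ (t : ℝ)⁻¹ - 1 := by
    have := mul_inv_cancel₀ ht.ne'
    nlinarith [sq_nonneg ((t : ℝ) - 1), inv_pos.mpr ht]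
  have hreal : 1 + (n : ℝ) ≤ ((t : ℝ) ^ n)⁻¹ + n * t := by
    rw [add_sub_cancel, inv_pow] at hbernoulli
    nlinarith [mul_le_mul_of_nonneg_left hamgm n.cast_nonneg]
  rw [← ENNReal.coe_pow, ← ENNReal.coe_inv (by positivity)]
  exact_mod_cast hreal

-- Jensen's inequality for `t ↦ t⁻ⁿ`, through the tangent at the mean.
lemma inv_lintegral_pow_le_lintegral_inv_pow {g : Ω → ℝ≥0∞} (hg : Measurable g) (n : ℕ) :
    ((∫⁻ ω, g ω ∂μ) ^ n)⁻¹ ≤ ∫⁻ ω, (g ω ^ n)⁻¹ ∂μ := by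
  rcases n.eq_zero_or_pos with rfl | hn
  · simp
  set m := ∫⁻ ω, g ω ∂μ with hm
  rcases eq_or_ne m 0 with h0 | h0
  · have hg0 : g =ᵐ[μ] 0 := (lintegral_eq_zero_iff hg).mp h0
    rw [lintegral_congr_ae (hg0.mono fun ω h => by rw [h])]
    simp [h0]
  rcases eq_or_ne m ⊤ with htop | htop
  · simp [htop, hn.ne']
  have htangent : 1 + (n : ℝ≥0∞) ≤ (∫⁻ ω, ((m⁻¹ * g ω) ^ n)⁻¹ ∂μ) + n := by
    calc 1 + (n : ℝ≥0∞) = ∫⁻ _, (1 + (n : ℝ≥0∞)) ∂μ := by simp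
      _ ≤ ∫⁻ ω, (((m⁻¹ * g ω) ^ n)⁻¹ + n * (m⁻¹ * g ω)) ∂μ :=
          lintegral_mono fun ω => one_add_le_inv_pow_add_mul n _
      _ = _ := by
          rw [lintegral_add_left (by fun_prop), lintegral_const_mul _ (by fun_prop),
            lintegral_const_mul _ hg, ← hm, ENNReal.inv_mul_cancel h0 htop, mul_one]
  have hone := (ENNReal.add_le_add_iff_right (ENNReal.natCast_ne_top n)).mp htangent
  have hmn0 : m ^ n ≠ 0 := pow_ne_zero n h0
  have hmntop : m ^ n ≠ ⊤ := ENNReal.pow_ne_top htop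
  have hpt (ω : Ω) : ((m⁻¹ * g ω) ^ n)⁻¹ = m ^ n * (g ω ^ n)⁻¹ := by
    rw [mul_pow, ENNReal.mul_inv, ← ENNReal.inv_pow, inv_inv]
    · exact .inl (by simp [htop])
    · exact .inl (by simp [h0])
  simp only [hpt] at hone
  rw [lintegral_const_mul _ (by fun_prop)] at hone
  exact (ENNReal.inv_le_iff_le_mul (fun _ => hmn0) fun h => (hmntop h).elim).mpr hone

end Laplace

/-! ### The sharp operator -/

section NegMoment

variable {ι : Type} [Fintype ι]

/-- The negative moment `E[Γ(P, P)^(-q)]`; it is infinite if `q ≠ 0` and `P` is constant. -/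
noncomputable def negMoment (q : ℕ) (P : MvPolynomial ι ℝ) : ℝ≥0∞ :=
  ∫⁻ x, (ENNReal.ofReal (sqField P x) ^ q)⁻¹ ∂gaussPi ι

lemma one_le_ofReal_pow_mul_negMoment {A : ℝ} (hA : 0 < A) {P : MvPolynomial ι ℝ}
    (hP : gaussExp (carreDuChamp P P) ≤ A) (n : ℕ) :
    1 ≤ ENNReal.ofReal A ^ n * negMoment n P := by
  have hmean : ∫⁻ x, ENNReal.ofReal (sqField P x) ∂gaussPi ι ≤ ENNReal.ofReal A := by
    simp only [sqField_eq_eval_carreDuChamp]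
    rw [← ofReal_integral_eq_lintegral_ofReal (integrable_eval_gaussPi _)
      (.of_forall fun x => eval_carreDuChamp_self_nonneg P x)]
    exact ENNReal.ofReal_le_ofReal hP
  have hjensen := inv_lintegral_pow_le_lintegral_inv_pow (μ := gaussPi ι)
    (continuous_sqField P).measurable.ennreal_ofReal n
  rw [← ENNReal.inv_le_iff_le_mul
    (fun _ => pow_ne_zero n (ENNReal.ofReal_pos.mpr hA).ne')
    fun h => (ENNReal.pow_ne_top ENNReal.ofReal_ne_top h).elim]
  exact (ENNReal.inv_le_inv.mpr (by gcongr)).trans hjensen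

lemma ofReal_regInvMoment_le {ε : ℝ} (hε : 0 < ε) (P : MvPolynomial ι ℝ) (n : ℕ) :
    ENNReal.ofReal (regInvMoment ε P n) ≤ ENNReal.ofReal (ε ^ n) * negMoment n P := by
  rw [regInvMoment, ofReal_integral_eq_lintegral_ofReal (integrable_regInv_pow hε P n)
    (.of_forall fun x => pow_nonneg (regInv_pos hε P x).le _), negMoment,
    ← lintegral_const_mul' _ _ ENNReal.ofReal_ne_top]
  refine lintegral_mono fun x => ?_
  rw [ENNReal.ofReal_pow (regInv_pos hε P x).le, ENNReal.ofReal_pow hε.le, ENNReal.inv_pow,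
    ← mul_pow, regInv, ENNReal.ofReal_div_of_pos (sqField_add_pos hε P x), ENNReal.div_eq_inv_mul,
    mul_comm]
  gcongr
  exact le_add_of_nonneg_right hε.le

end NegMoment

section SharpAlong

variable {ι κ : Type}

lemma pderiv_inr_rename_inl (a : κ) (P : MvPolynomial ι ℝ) :
    pderiv (Sum.inr a) (rename Sum.inl P : MvPolynomial (ι ⊕ κ) ℝ) = 0 :=
  pderiv_rename_of_notMem_range (by simp) P

variable [Fintype κ]

/-- The sharp operator restricted to the directions `f a`: the derivative of `Q` at `N` in the
random direction `∑ₐ Gₐ e_{f a}`, where `G` is a fresh Gaussian vector (`Sum.inr`). -/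
noncomputable def sharpAlong (f : κ → ι) (Q : MvPolynomial ι ℝ) : MvPolynomial (ι ⊕ κ) ℝ :=
  ∑ a, rename Sum.inl (pderiv (f a) Q) * X (Sum.inr a)

/-- The conditional variance `∑ₐ (∂_{f a} Q(x))²` of `sharpAlong f Q` given `N = x`. -/
noncomputable def sharpVar (f : κ → ι) (Q : MvPolynomial ι ℝ) (x : ι → ℝ) : ℝ :=
  ∑ a, eval x (pderiv (f a) Q) ^ 2

lemma sharpVar_nonneg (f : κ → ι) (Q : MvPolynomial ι ℝ) (x : ι → ℝ) : 0 ≤ sharpVar f Q x :=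
  Finset.sum_nonneg fun _ _ => sq_nonneg _

lemma continuous_sharpVar (f : κ → ι) (Q : MvPolynomial ι ℝ) : Continuous (sharpVar f Q) :=
  continuous_finsetSum _ fun _ _ => (continuous_eval _).pow 2

lemma pderiv_inr_sharpAlong (f : κ → ι) (Q : MvPolynomial ι ℝ) (a : κ) :
    pderiv (Sum.inr a) (sharpAlong f Q) = rename Sum.inl (pderiv (f a) Q) := by
  classical
  simp [sharpAlong, pderiv_inr_rename_inl, pderiv_X, Pi.single_apply]

lemma totalDegree_sharpAlong_le (f : κ → ι) (Q : MvPolynomial ι ℝ) :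
    (sharpAlong f Q).totalDegree ≤ Q.totalDegree + 1 :=
  totalDegree_finsetSum_le fun _ _ => (totalDegree_mul _ _).trans (add_le_add
    ((totalDegree_rename_le _ _).trans ((totalDegree_pderiv_le _ Q).trans (Nat.sub_le _ _)))
    (totalDegree_X _).le)

variable [Fintype ι]

lemma sharpVar_le_sqField {f : κ → ι} (hf : Function.Injective f) (Q : MvPolynomial ι ℝ)
    (x : ι → ℝ) : sharpVar f Q x ≤ sqField Q x := by
  classical
  calc sharpVar f Q x = ∑ i ∈ Finset.univ.image f, eval x (pderiv i Q) ^ 2 :=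
        (Finset.sum_image (f := fun i => eval x (pderiv i Q) ^ 2) hf.injOn).symm
    _ ≤ sqField Q x := Finset.sum_le_univ_sum_of_nonneg fun _ => sq_nonneg _

lemma measurePreserving_comp_inl :
    MeasurePreserving (fun y : ι ⊕ κ → ℝ => y ∘ Sum.inl) (gaussPi (ι ⊕ κ)) (gaussPi ι) :=
  (measurePreserving_fst (μ := gaussPi ι) (ν := gaussPi κ)).comp
    (measurePreserving_sumPiEquivProdPi (fun _ : ι ⊕ κ => gaussianReal 0 1))

lemma gaussExp_rename_inl (P : MvPolynomial ι ℝ) :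
    gaussExp (rename Sum.inl P : MvPolynomial (ι ⊕ κ) ℝ) = gaussExp P := by
  simp only [gaussExp_apply, eval_rename]
  rw [← (measurePreserving_comp_inl (ι := ι) (κ := κ)).map_eq,
    integral_map measurePreserving_comp_inl.measurable.aemeasurable
      (continuous_eval P).aestronglyMeasurable]

lemma gaussExp_sharpAlong_sq (f : κ → ι) (Q : MvPolynomial ι ℝ) :
    gaussExp (sharpAlong f Q ^ 2) = gaussExp (∑ a, pderiv (f a) Q ^ 2) := by
  have hterm (a : κ) :
      gaussExp (X (Sum.inr a) * (rename Sum.inl (pderiv (f a) Q) * sharpAlong f Q))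
        = gaussExp (pderiv (f a) Q ^ 2) := by
    rw [← gaussExp_pderiv, pderiv_mul, pderiv_inr_rename_inl, zero_mul, zero_add,
      pderiv_inr_sharpAlong, ← map_mul, gaussExp_rename_inl, sq]
  rw [map_sum, ← Finset.sum_congr rfl fun a _ => hterm a, ← map_sum]
  congr 1
  nth_rw 1 [sq, sharpAlong]
  rw [Finset.sum_mul]
  exact Finset.sum_congr rfl fun a _ => by ring

lemma gaussNorm_sharpAlong_le {f : κ → ι} (hf : Function.Injective f) {d : ℕ}
    {Q : MvPolynomial ι ℝ} (hQ : Q.totalDegree ≤ d) :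
    gaussNorm (sharpAlong f Q) ≤ √d * gaussNorm Q := by
  refine gaussNorm_le_of_sq_le (mul_nonneg (Real.sqrt_nonneg _) (gaussNorm_nonneg Q)) ?_
  rw [mul_pow, Real.sq_sqrt d.cast_nonneg, gaussNorm_sq, gaussExp_sharpAlong_sq]
  refine (gaussExp_mono fun x => ?_).trans (gaussExp_carreDuChamp_le hQ)
  rw [← sqField_eq_eval_carreDuChamp]
  simpa [sharpVar] using sharpVar_le_sqField hf Q x

lemma integral_cos_sum_mul_gaussPi (c : κ → ℝ) :
    ∫ z, Real.cos (∑ a, c a * z a) ∂gaussPi κ = Real.exp (-(∑ a, c a ^ 2) / 2) := by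
  have hprod (z : κ → ℝ) : Complex.exp ((∑ a, c a * z a : ℝ) * Complex.I)
      = ∏ a, Complex.exp (c a * z a * Complex.I) := by
    rw [← Complex.exp_sum, ← Finset.sum_mul]
    push_cast
    rfl
  have hchar (a : κ) : ∫ t : ℝ, Complex.exp (c a * t * Complex.I) ∂gaussianReal 0 1
      = Complex.exp (-(c a) ^ 2 / 2) := by
    rw [← charFun_apply_real, charFun_gaussianReal]
    congr 1
    push_cast
    ring
  have hcexp : ∫ z, Complex.exp ((∑ a, c a * z a : ℝ) * Complex.I) ∂gaussPi κ
      = (Real.exp (-(∑ a, c a ^ 2) / 2) : ℝ) := by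
    simp only [hprod]
    rw [gaussPi, integral_fintype_prod_eq_prod
      (f := fun a (t : ℝ) => Complex.exp (c a * t * Complex.I))]
    simp only [hchar]
    rw [← Complex.exp_sum, ← Finset.sum_div, Finset.sum_neg_distrib]
    push_cast
    rfl
  have hint : Integrable (fun z => Complex.exp ((∑ a, c a * z a : ℝ) * Complex.I))
      (gaussPi κ) :=
    .of_bound (C := 1) (Continuous.aestronglyMeasurable (by fun_prop))
      (.of_forall fun z => (Complex.norm_exp_ofReal_mul_I _).le)
  have hre := integral_re hint
  rw [hcexp] at hre
  simpa only [RCLike.re_eq_complex_re, Complex.exp_ofReal_mul_I_re, Complex.ofReal_re] using hre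

lemma integral_cos_sharpAlong (f : κ → ι) (Q : MvPolynomial ι ℝ) (ξ : ℝ) :
    ∫ y, Real.cos (ξ * eval y (sharpAlong f Q)) ∂gaussPi (ι ⊕ κ)
      = ∫ x, Real.exp (-(ξ ^ 2 * sharpVar f Q x) / 2) ∂gaussPi ι := by
  have hcont : Continuous fun y : ι ⊕ κ → ℝ => Real.cos (ξ * eval y (sharpAlong f Q)) :=
    Real.continuous_cos.comp ((continuous_eval _).const_mul ξ)
  have hmp : MeasurePreserving (MeasurableEquiv.sumPiEquivProdPi fun _ : ι ⊕ κ => ℝ).symm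
      ((gaussPi ι).prod (gaussPi κ)) (gaussPi (ι ⊕ κ)) :=
    measurePreserving_sumPiEquivProdPi_symm fun _ : ι ⊕ κ => gaussianReal 0 1
  have hint : Integrable (fun y => Real.cos (ξ * eval y (sharpAlong f Q))) (gaussPi (ι ⊕ κ)) :=
    .of_bound hcont.aestronglyMeasurable 1 (.of_forall fun y => Real.abs_cos_le_one _)
  rw [← hmp.integral_comp', integral_prod]
  swap
  · exact hmp.integrable_comp_of_integrable hint
  refine integral_congr_ae (.of_forall fun x => ?_)
  have hlin := integral_cos_sum_mul_gaussPi fun a => ξ * eval x (pderiv (f a) Q)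
  simp only [mul_pow, ← Finset.mul_sum] at hlin
  refine Eq.trans (integral_congr_ae (.of_forall fun z => ?_)) hlin
  simp only [sharpAlong, map_sum, map_mul, eval_X, eval_rename, Finset.mul_sum, mul_assoc]
  rfl

lemma exists_integral_exp_neg_sharpVar_le (B : ℝ≥0) (s d : ℕ) :
    ∃ c : ℝ≥0, ∀ (ι κ : Type) [Fintype ι] [Fintype κ] (f : κ → ι) (Q : MvPolynomial ι ℝ),
      f.Injective → Q.totalDegree ≤ d → gaussNorm Q ≤ B →
      ∀ r : ℝ, 0 ≤ r → negMoment (2 * s) (sharpAlong f Q) ≤ ENNReal.ofReal r →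
      ∀ ε : ℝ, 0 < ε → ε ≤ 1 →
        ∫ x, Real.exp (-((ε⁻¹ ^ 2) ^ 2 * sharpVar f Q x) / 2) ∂gaussPi ι ≤ c * √r * ε ^ s := by
  obtain ⟨c, hc⟩ := exists_abs_oscIntegral_le_mul_regInvMoment (NNReal.sqrt d * B) s (d + 1) 0
  refine ⟨c, fun ι κ _ _ f Q hf hQ hB r hr hM ε hε hε1 => ?_⟩
  have hnorm : gaussNorm (sharpAlong f Q) ≤ (NNReal.sqrt d * B : ℝ≥0) := by
    refine (gaussNorm_sharpAlong_le hf hQ).trans ?_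
    rw [NNReal.coe_mul, Real.coe_sqrt, NNReal.coe_natCast]
    gcongr
  have hosc := hc (ι ⊕ κ) (sharpAlong f Q) 1
    ((totalDegree_sharpAlong_le f Q).trans (by gcongr)) hnorm (by simp) ε 0 hε hε1
  have hmoment : regInvMoment ε (sharpAlong f Q) (2 * s) ≤ ε ^ (2 * s) * r := by
    rw [← ENNReal.ofReal_le_ofReal_iff (by positivity), ENNReal.ofReal_mul (by positivity)]
    exact (ofReal_regInvMoment_le hε _ _).trans (by gcongr)
  have hone : gaussNorm (1 : MvPolynomial (ι ⊕ κ) ℝ) = 1 := by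
    rw [gaussNorm, one_pow, ← C_1, gaussExp_C, Real.sqrt_one]
  rw [← integral_cos_sharpAlong]
  calc ∫ y, Real.cos (ε⁻¹ ^ 2 * eval y (sharpAlong f Q)) ∂gaussPi (ι ⊕ κ)
      = oscIntegral ε (ε⁻¹ ^ 2) 0 (sharpAlong f Q) 1 0 := by simp [oscIntegral, oscIntegrand]
    _ ≤ c * √(regInvMoment ε (sharpAlong f Q) (2 * s)) := by
      simpa only [hone, mul_one, zero_add] using (le_abs_self _).trans hosc
    _ ≤ c * √(ε ^ (2 * s) * r) := by gcongr
    _ = c * √r * ε ^ s := by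
      rw [Real.sqrt_mul (by positivity), pow_mul', Real.sqrt_sq (by positivity)]
      ring

lemma exists_negMoment_le_one_add_sqrt (B : ℝ≥0) (q d : ℕ) :
    ∃ c : ℝ≥0, ∀ (ι κ : Type) [Fintype ι] [Fintype κ] (f : κ → ι) (Q : MvPolynomial ι ℝ),
      f.Injective → Q.totalDegree ≤ d → gaussNorm Q ≤ B →
      ∀ r : ℝ, 0 ≤ r → negMoment (2 * (4 * q + 1)) (sharpAlong f Q) ≤ ENNReal.ofReal r →
        negMoment q Q ≤ 1 + ENNReal.ofReal (c * √r) := by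
  obtain ⟨c, hc⟩ := exists_integral_exp_neg_sharpVar_le B (4 * q + 1) d
  refine ⟨2 * ⟨Real.exp 1, (Real.exp_pos 1).le⟩ * 16 ^ q * c,
    fun ι κ _ _ f Q hf hQ hB r hr hM => ?_⟩
  have hscale (n : ℕ) : ∫ x, Real.exp (-(16 ^ n * (sharpVar f Q x / 2))) ∂gaussPi ι
      ≤ c * √r * ((2 * 16 ^ q) ^ n)⁻¹ := by
    have hε : (((2 : ℝ)⁻¹ ^ n)⁻¹ ^ 2) ^ 2 = 16 ^ n := by
      rw [inv_pow (2 : ℝ), inv_inv, ← pow_mul, ← pow_mul, pow_mul']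
      norm_num
    have hεs : ((2 : ℝ)⁻¹ ^ n) ^ (4 * q + 1) = ((2 * 16 ^ q) ^ n)⁻¹ := by
      rw [← pow_mul, pow_mul', inv_pow, inv_pow, pow_succ', pow_mul]
      norm_num
    have h := hc ι κ f Q hf hQ hB r hr hM (2⁻¹ ^ n) (by positivity)
      (pow_le_one₀ (by norm_num) (by norm_num))
    rw [hε, hεs] at h
    simpa only [neg_div, mul_div_assoc] using h
  have hhalf (x : ι → ℝ) : sharpVar f Q x / 2 ≤ sqField Q x :=
    (half_le_self (sharpVar_nonneg f Q x)).trans (sharpVar_le_sqField hf Q x)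
  calc negMoment q Q ≤ ∫⁻ x, (ENNReal.ofReal (sharpVar f Q x / 2) ^ q)⁻¹ ∂gaussPi ι := by
        refine lintegral_mono fun x => ?_
        gcongr
        exact hhalf x
    _ ≤ 1 + ENNReal.ofReal (2 * Real.exp 1 * 16 ^ q * (c * √r)) :=
        lintegral_inv_ofReal_pow_le ((continuous_sharpVar f Q).measurable.div_const 2)
          (fun x => div_nonneg (sharpVar_nonneg f Q x) zero_le_two) (by norm_num) hscale
    _ = _ := by
        congr 2
        push_cast
        exact (mul_assoc _ _ _).symm

lemma one_le_mul_negMoment_sharpAlong {f : κ → ι} (hf : f.Injective) {d : ℕ} {B : ℝ≥0}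
    {Q : MvPolynomial ι ℝ} (hQ : Q.totalDegree ≤ d) (hB : gaussNorm Q ≤ B) (n : ℕ) :
    1 ≤ ((((d + 1) * (d * B ^ 2) + 1) ^ n : ℝ≥0) : ℝ≥0∞) * negMoment n (sharpAlong f Q) := by
  have hΓ : gaussExp (carreDuChamp (sharpAlong f Q) (sharpAlong f Q))
      ≤ (((d + 1) * (d * B ^ 2) + 1 : ℝ≥0) : ℝ) := by
    calc _ ≤ ((d + 1 : ℕ) : ℝ) * gaussNorm (sharpAlong f Q) ^ 2 := by
          rw [gaussNorm_sq]
          exact gaussExp_carreDuChamp_le ((totalDegree_sharpAlong_le f Q).trans (by gcongr))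
      _ ≤ (d + 1 : ℕ) * (√d * B) ^ 2 := by
          have := gaussNorm_nonneg (sharpAlong f Q)
          gcongr
          exact (gaussNorm_sharpAlong_le hf hQ).trans (by gcongr)
      _ ≤ _ := by
          rw [mul_pow, Real.sq_sqrt d.cast_nonneg]
          push_cast
          exact le_add_of_nonneg_right zero_le_one
  have h := one_le_ofReal_pow_mul_negMoment (by positivity) hΓ n
  rwa [ENNReal.ofReal_coe_nnreal, ← ENNReal.coe_pow] at h

lemma exists_negMoment_le_mul_negMoment_sharpAlong (B : ℝ≥0) (q d : ℕ) :
    ∃ (q' : ℕ) (C : ℝ≥0), ∀ (ι κ : Type) [Fintype ι] [Fintype κ] (f : κ → ι)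
      (Q : MvPolynomial ι ℝ), f.Injective → Q.totalDegree ≤ d → gaussNorm Q ≤ B →
        negMoment q Q ≤ C * negMoment q' (sharpAlong f Q) := by
  obtain ⟨c, hc⟩ := exists_negMoment_le_one_add_sqrt B q d
  set A : ℝ≥0 := ((d + 1) * (d * B ^ 2) + 1) ^ (2 * (4 * q + 1)) with hA
  refine ⟨2 * (4 * q + 1), (1 + c) * A + c, fun ι κ _ _ f Q hf hQ hB => ?_⟩
  have hone := one_le_mul_negMoment_sharpAlong hf hQ hB (2 * (4 * q + 1))
  rw [← hA] at hone
  rcases eq_or_ne (negMoment (2 * (4 * q + 1)) (sharpAlong f Q)) ⊤ with htop | htop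
  · rw [htop, ENNReal.mul_top (by positivity)]
    exact le_top
  lift negMoment (2 * (4 * q + 1)) (sharpAlong f Q) to ℝ≥0 using htop with M hM
  have hsqrt : √(M : ℝ) ≤ 1 + M := by
    nlinarith [Real.sq_sqrt M.coe_nonneg, sq_nonneg (√(M : ℝ) - 1)]
  calc negMoment q Q ≤ 1 + ENNReal.ofReal (c * √(M : ℝ)) :=
        hc ι κ f Q hf hQ hB M M.coe_nonneg (by rw [← hM, ENNReal.ofReal_coe_nnreal])
    _ ≤ 1 + ENNReal.ofReal (c * (1 + M) : ℝ≥0) := by gcongr; push_cast; gcongr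
    _ = (1 + c) * 1 + c * M := by rw [ENNReal.ofReal_coe_nnreal]; push_cast; ring
    _ ≤ (1 + c) * (A * M) + c * M := by gcongr
    _ = _ := by push_cast; ring

end SharpAlong

/-! ### Iteration -/

section Reindexing

variable {ι κ : Type} [Fintype ι] [Fintype κ]

lemma measurePreserving_comp_equiv (e : ι ≃ κ) :
    MeasurePreserving (fun y : κ → ℝ => y ∘ e) (gaussPi κ) (gaussPi ι) :=
  (measurePreserving_piCongrLeft (fun _ : κ => gaussianReal 0 1) e).symm

lemma gaussNorm_rename_equiv (e : ι ≃ κ) (P : MvPolynomial ι ℝ) :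
    gaussNorm (rename e P) = gaussNorm P := by
  simp only [gaussNorm, gaussExp_apply, ← map_pow, eval_rename]
  rw [← (measurePreserving_comp_equiv e).map_eq,
    integral_map (measurePreserving_comp_equiv e).measurable.aemeasurable
      (continuous_eval (P ^ 2)).aestronglyMeasurable]

lemma gaussNorm_rename_inl (P : MvPolynomial ι ℝ) :
    gaussNorm (rename Sum.inl P : MvPolynomial (ι ⊕ κ) ℝ) = gaussNorm P := by
  rw [gaussNorm, ← map_pow, gaussExp_rename_inl, gaussNorm]

lemma sqField_rename_equiv (e : ι ≃ κ) (P : MvPolynomial ι ℝ) (y : κ → ℝ) :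
    sqField (rename e P) y = sqField P (y ∘ e) := by
  simp only [sqField, ← Equiv.sum_comp e, pderiv_rename e.injective, eval_rename]

lemma sqField_rename_inl (P : MvPolynomial ι ℝ) (y : ι ⊕ κ → ℝ) :
    sqField (rename Sum.inl P) y = sqField P (y ∘ Sum.inl) := by
  simp [sqField, Fintype.sum_sum_type, pderiv_inr_rename_inl, pderiv_rename Sum.inl_injective,
    eval_rename]

lemma measurable_inv_ofReal_sqField_pow (P : MvPolynomial ι ℝ) (q : ℕ) :
    Measurable fun x => (ENNReal.ofReal (sqField P x) ^ q)⁻¹ :=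
  ((continuous_sqField P).measurable.ennreal_ofReal.pow_const q).inv

lemma negMoment_rename_equiv (e : ι ≃ κ) (q : ℕ) (P : MvPolynomial ι ℝ) :
    negMoment q (rename e P) = negMoment q P := by
  simp only [negMoment, sqField_rename_equiv]
  exact (measurePreserving_comp_equiv e).lintegral_comp (measurable_inv_ofReal_sqField_pow P q)

lemma negMoment_rename_inl (q : ℕ) (P : MvPolynomial ι ℝ) :
    negMoment q (rename Sum.inl P : MvPolynomial (ι ⊕ κ) ℝ) = negMoment q P := by
  simp only [negMoment, sqField_rename_inl]
  exact measurePreserving_comp_inl.lintegral_comp (measurable_inv_ofReal_sqField_pow P q)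

end Reindexing

section SharpPoly

variable {K : ℕ}

lemma sharpPoly_zero (P : MvPolynomial (Fin K) ℝ) : sharpPoly 0 P = rename Sum.inl P := by
  simp [sharpPoly, pderivMulti]

lemma pderivMulti_cons {k : ℕ} (a : Fin K) (i : Fin k → Fin K) (P : MvPolynomial (Fin K) ℝ) :
    pderivMulti (Fin.cons a i : Fin (k + 1) → Fin K) P = pderiv a (pderivMulti i P) := by
  simp [pderivMulti]

/-- The coordinates of `♯^(k+1)`, obtained from those of `♯^k` and one more Gaussian vector. The
latter becomes the *first* one, since `pderivMulti` applies the derivative of index `0` last. -/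
def sharpEquiv (K k : ℕ) : (Fin K ⊕ Fin k × Fin K) ⊕ Fin K ≃ Fin K ⊕ Fin (k + 1) × Fin K where
  toFun := Sum.elim (Sum.elim Sum.inl fun z => Sum.inr (z.1.succ, z.2)) fun a => Sum.inr (0, a)
  invFun := Sum.elim (fun a => Sum.inl (Sum.inl a)) fun z =>
    Fin.cases (motive := fun _ => (Fin K ⊕ Fin k × Fin K) ⊕ Fin K) (Sum.inr z.2)
      (fun j => Sum.inl (Sum.inr (j, z.2))) z.1
  left_inv := by
    rintro ((a | ⟨j, a⟩) | a) <;> simp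
  right_inv := by
    rintro (a | ⟨j, a⟩)
    · simp
    · cases j using Fin.cases <;> simp

lemma pderiv_inl_sharpPoly (k : ℕ) (P : MvPolynomial (Fin K) ℝ) (a : Fin K) :
    pderiv (Sum.inl a) (sharpPoly k P)
      = ∑ i : Fin k → Fin K,
        rename Sum.inl (pderiv a (pderivMulti i P)) * ∏ j, X (Sum.inr (j, i j)) := by
  rw [sharpPoly, map_sum]
  refine Finset.sum_congr rfl fun i _ => ?_
  have hprod : (∏ j, X (Sum.inr (j, i j)) : MvPolynomial (Fin K ⊕ Fin k × Fin K) ℝ)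
      = rename Sum.inr (∏ j, X (j, i j)) := by simp
  rw [hprod, pderiv_mul, pderiv_rename Sum.inl_injective,
    pderiv_rename_of_notMem_range (f := Sum.inr) (by simp), mul_zero, add_zero]

lemma sharpPoly_succ (k : ℕ) (P : MvPolynomial (Fin K) ℝ) :
    sharpPoly (k + 1) P = rename (sharpEquiv K k) (sharpAlong Sum.inl (sharpPoly k P)) := by
  have hinl : (sharpEquiv K k ∘ Sum.inl ∘ Sum.inl : Fin K → Fin K ⊕ Fin (k + 1) × Fin K)
      = Sum.inl := rfl
  have hinlr (j : Fin k) (a : Fin K) :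
      sharpEquiv K k (Sum.inl (Sum.inr (j, a))) = Sum.inr (j.succ, a) := rfl
  have hinr (a : Fin K) : sharpEquiv K k (Sum.inr a) = Sum.inr (0, a) := rfl
  rw [sharpAlong, map_sum, sharpPoly,
    ← Equiv.sum_comp (Fin.consEquiv fun _ : Fin (k + 1) => Fin K), Fintype.sum_prod_type]
  refine Finset.sum_congr rfl fun a _ => ?_
  rw [pderiv_inl_sharpPoly, map_sum, Finset.sum_mul, map_sum]
  refine Finset.sum_congr rfl fun i _ => ?_
  have hcons : Fin.consEquiv (fun _ : Fin (k + 1) => Fin K) (a, i) = Fin.cons a i := rfl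
  rw [hcons, pderivMulti_cons, Fin.prod_univ_succ]
  simp only [map_mul, map_prod, rename_rename, rename_X, Fin.cons_zero, Fin.cons_succ, hinl,
    hinlr, hinr]
  ring

lemma totalDegree_sharpPoly_le (k : ℕ) (P : MvPolynomial (Fin K) ℝ) :
    (sharpPoly k P).totalDegree ≤ P.totalDegree + k := by
  induction k with
  | zero =>
    rw [sharpPoly_zero]
    exact totalDegree_rename_le _ _
  | succ k ih =>
    rw [sharpPoly_succ, ← add_assoc]
    exact (totalDegree_rename_le _ _).trans
      ((totalDegree_sharpAlong_le _ _).trans (add_le_add_left ih 1))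

lemma gaussNorm_sharpPoly_le {m k : ℕ} {P : MvPolynomial (Fin K) ℝ} (hP : P.totalDegree ≤ m) :
    gaussNorm (sharpPoly k P) ≤ √(m + k) ^ k * gaussNorm P := by
  induction k with
  | zero => rw [sharpPoly_zero, gaussNorm_rename_inl, pow_zero, one_mul]
  | succ k ih =>
    have hdeg : (sharpPoly k P).totalDegree ≤ m + (k + 1) :=
      (totalDegree_sharpPoly_le k P).trans (by lia)
    have hnonneg := gaussNorm_nonneg P
    rw [sharpPoly_succ, gaussNorm_rename_equiv]
    calc _ ≤ √(m + (k + 1) : ℕ) * gaussNorm (sharpPoly k P) :=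
          gaussNorm_sharpAlong_le Sum.inl_injective hdeg
      _ ≤ √(m + (k + 1) : ℕ) * (√(m + k) ^ k * gaussNorm P) := by gcongr
      _ ≤ √(m + (k + 1) : ℕ) * (√(m + (k + 1) : ℕ) ^ k * gaussNorm P) := by
          gcongr
          push_cast
          linarith
      _ = _ := by
          push_cast
          ring

lemma exists_negMoment_le_mul_negMoment_sharpPoly (B : ℝ≥0) (m q k : ℕ) :
    ∃ (q' : ℕ) (C : ℝ≥0), ∀ (K : ℕ) (P : MvPolynomial (Fin K) ℝ), P.totalDegree ≤ m →
      gaussNorm P ≤ B → negMoment q P ≤ C * negMoment q' (sharpPoly k P) := by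
  induction k with
  | zero =>
    refine ⟨q, 1, fun K P _ _ => ?_⟩
    rw [sharpPoly_zero, negMoment_rename_inl, ENNReal.coe_one, one_mul]
  | succ k ih =>
    obtain ⟨q₁, C₁, h₁⟩ := ih
    obtain ⟨q₂, C₂, h₂⟩ :=
      exists_negMoment_le_mul_negMoment_sharpAlong (NNReal.sqrt (m + k) ^ k * B) q₁ (m + k)
    refine ⟨q₂, C₁ * C₂, fun K P hP hB => ?_⟩
    have hdeg : (sharpPoly k P).totalDegree ≤ m + k :=
      (totalDegree_sharpPoly_le k P).trans (by gcongr)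
    have hnorm : gaussNorm (sharpPoly k P) ≤ (NNReal.sqrt (m + k) ^ k * B : ℝ≥0) := by
      refine (gaussNorm_sharpPoly_le hP).trans ?_
      push_cast
      gcongr
    calc negMoment q P ≤ C₁ * negMoment q₁ (sharpPoly k P) := h₁ K P hP hB
      _ ≤ C₁ * (C₂ * negMoment q₂ (sharpAlong Sum.inl (sharpPoly k P))) := by
        gcongr
        exact h₂ _ _ Sum.inl _ Sum.inl_injective hdeg hnorm
      _ = _ := by rw [sharpPoly_succ, negMoment_rename_equiv, ENNReal.coe_mul, mul_assoc]

end SharpPoly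

theorem negative_moments_via_sharp_general (B : ℝ≥0) (m q k : ℕ) :
    ∃ (q' : ℕ) (C : ℝ), 0 < C ∧ ∀ (K : ℕ) (P : MvPolynomial (Fin K) ℝ),
      P.totalDegree ≤ m →
      (∫ x, (eval x P) ^ 2 ∂gaussPi (Fin K)) ≤ B →
      ∫⁻ x, (ENNReal.ofReal (sqField P x) ^ q)⁻¹ ∂gaussPi (Fin K)
        ≤ ENNReal.ofReal C *
          ∫⁻ y, (ENNReal.ofReal (sqField (sharpPoly k P) y) ^ q')⁻¹
            ∂gaussPi (Fin K ⊕ Fin k × Fin K) := by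
  obtain ⟨q', C, h⟩ := exists_negMoment_le_mul_negMoment_sharpPoly (NNReal.sqrt B) m q k
  refine ⟨q', C + 1, by positivity, fun K P hP hB => (h K P hP ?_).trans ?_⟩
  · simpa [gaussNorm, gaussExp_apply] using Real.sqrt_le_sqrt hB
  · rw [← ENNReal.ofReal_coe_nnreal]
    exact mul_le_mul_left (ENNReal.ofReal_le_ofReal (by linarith)) _

/-- Negative moments of the carré du champ of `F` are controlled by negative
moments of the carré du champ of the iterated sharp `♯^k[F]`. -/
theorem negative_moments_via_sharp (m q k : ℕ) (hk1 : 1 ≤ k) (hkm : k ≤ m) :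
    ∃ (q' : ℕ) (C : ℝ), 0 < C ∧ ∀ (K : ℕ) (P : MvPolynomial (Fin K) ℝ),
      P.totalDegree ≤ m →
      (∫ x, (eval x P) ^ 2 ∂gaussPi (Fin K)) = 1 →
      ∫⁻ x, (ENNReal.ofReal (sqField P x) ^ q)⁻¹ ∂gaussPi (Fin K)
        ≤ ENNReal.ofReal C *
          ∫⁻ y, (ENNReal.ofReal (sqField (sharpPoly k P) y) ^ q')⁻¹
            ∂gaussPi (Fin K ⊕ Fin k × Fin K) := by
  obtain ⟨q', C, hC, h⟩ := negative_moments_via_sharp_general 1 m q k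
  exact ⟨q', C, hC, fun K P hP h1 => h K P hP h1.le⟩
end
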